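/- Any two injective Lie algebra homomorphisms ε, ε' from the complex simple Lie algebra f₄ to the complex simple Lie algebra e₆ are conjugate by an automorphism of e₆: there exists a Lie algebra automorphism φ of e₆ such that ε' = φ ∘ ε. -/

import Mathlib

/-!
Let `ε : f₄ → e₆` be injective and let `W` be the orthogonal complement of `ε f₄` for the Killing
form `κ` of `e₆`. Cartan's criterion makes `κ` nondegenerate on `ε f₄`, so `e₆ = ε f₄ ⊕ W` and `W`
is an `f₄`-module of dimension at most `78 - 52 = 26`. If `0` is the only weight of `W`, then `W`
centralizes `ε f₄`, which is then a nonzero ideal, and `ε` is onto (`surj_of_trivial`). Otherwise a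
nonzero weight of `W` of minimal length is a short root (`hasWt_col0`); by Weyl symmetry all `24`
short roots are weights, and the zero weight space has dimension two, so that `W` has the weight
structure of the `26`-dimensional irreducible module (`Std`, `std_of_le`).

For two embeddings `ε`, `ε'` with complements `W`, `W'`, the highest weight argument gives an
isomorphism `W ≃ W'` of `f₄`-modules (`Std.iso`), which Schur's lemma allows one to scale to an
isometry for `κ` (`Std.isometry`). The trilinear form `κ(⁅x, y⁆, z)` on `W` is alternating and
invariant, and `W` admits no nonzero such form (`Std.omega`): by irreducibility it is enough to take
one argument in `W₀`; on `W₀ × W₀ × W₀` the form vanishes because `dim W₀ = 2`, and on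
`W₀ × W_α × W_{-α}` because some lift of a Weyl group element fixes `W₀` pointwise and exchanges the
lines `W_α` and `W_{-α}`. Hence `⁅W, W⁆ ⊆ ε f₄`, and the bracket on `W` is determined by `κ` and the
module structure. Thus `ε x + w ↦ ε' x + t w` is an automorphism of `e₆` (`glue`).

The facts about `f₄` and `e₆` that this needs are derived from the Serre presentation. The
inequality `dim e₆ ≤ 78` holds because words in the `e i` whose content is not a root vanish and each
root space is at most a line (`words_main`). The inequality `52 ≤ dim f₄` follows from the Weyl
symmetry of weights, once `f₄ ≠ 0`; if `f₄` were zero there would be nothing to prove. Simplicity of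
both algebras follows from the triangular decomposition (`isSimple`). Simple reflections are lifted
to automorphisms by exponentials of nilpotent derivations (`exists_refl`). In the indexing of the
matrix `F₄` used here, where `⁅h i, e j⁆ = A i j • e j`, the simple roots `α₀`, `α₁` are short and
`α₂`, `α₃` are long.
-/

namespace F4E6
set_option linter.unusedSectionVars false
set_option linter.unusedSimpArgs false
open Module CartanMatrix

/-! ### Chevalley generators of Serre's Lie algebras -/

section Relations
variable {ι g : Type*} [LieRing g] [LieAlgebra ℂ g]

/-- The relations of Chevalley generators with Cartan matrix `A`. The Serre relations on iterated
brackets are not part of the definition. -/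
structure IsChev (A : Matrix ι ι ℤ) (h e f : ι → g) : Prop where
  hh : ∀ i j, ⁅h i, h j⁆ = 0
  he : ∀ i j, ⁅h i, e j⁆ = (A i j : ℂ) • e j
  hf : ∀ i j, ⁅h i, f j⁆ = -((A i j : ℂ) • f j)
  ef : ∀ i, ⁅e i, f i⁆ = h i
  ef' : ∀ i j, i ≠ j → ⁅e i, f j⁆ = 0

/-- The `e i` and `f i` generate the Lie algebra. -/
def Generates (e f : ι → g) : Prop :=
  ∀ K : LieSubalgebra ℂ g, (∀ i, e i ∈ K) → (∀ i, f i ∈ K) → K = ⊤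

end Relations

section Serre
open CartanMatrix
variable {ι : Type*} [DecidableEq ι] (A : Matrix ι ι ℤ)

/-- The quotient map from the free Lie algebra onto the Lie algebra presented by Serre's relations. -/
noncomputable def mk : FreeLieAlgebra ℂ (Generators ι) →ₗ⁅ℂ⁆ A.ToLieAlgebra ℂ :=
  { toLinearMap := (LieSubmodule.Quotient.mk' (Relations.toIdeal ℂ A)).toLinearMap
    map_lie' := fun {x y} => LieSubmodule.Quotient.mk_bracket (I := Relations.toIdeal ℂ A) x y }

/-- The generator `h i` of the Lie algebra presented by Serre's relations. -/
noncomputable def sH (i : ι) : A.ToLieAlgebra ℂ := mk A (FreeLieAlgebra.of ℂ (Generators.H i))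
/-- The generator `e i` of the Lie algebra presented by Serre's relations. -/
noncomputable def sE (i : ι) : A.ToLieAlgebra ℂ := mk A (FreeLieAlgebra.of ℂ (Generators.E i))
/-- The generator `f i` of the Lie algebra presented by Serre's relations. -/
noncomputable def sF (i : ι) : A.ToLieAlgebra ℂ := mk A (FreeLieAlgebra.of ℂ (Generators.F i))

lemma mk_surj : Function.Surjective (mk A) :=
  LieSubmodule.Quotient.surjective_mk' (Relations.toIdeal ℂ A)

lemma mk_rel {x} (hx : x ∈ Relations.toSet ℂ A) : mk A x = 0 := by
  have : x ∈ Relations.toIdeal ℂ A := LieSubmodule.subset_lieSpan hx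
  exact (LieSubmodule.Quotient.mk_eq_zero' (N := Relations.toIdeal ℂ A)).mpr this

lemma serre_isChev : IsChev A (sH A) (sE A) (sF A) where
  hh i j := by
    have := mk_rel A (x := Relations.HH ℂ (i, j)) (by simp [Relations.toSet])
    simpa [Relations.HH, sH] using this
  he i j := by
    have := mk_rel A (x := Relations.HE ℂ A (i, j)) (by simp [Relations.toSet])
    simp only [Relations.HE, Function.uncurry, Function.comp_apply, map_sub, LieHom.map_lie,
      map_zsmul, sub_eq_zero] at this
    rw [sH, sE, this, Int.cast_smul_eq_zsmul]
  hf i j := by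
    have := mk_rel A (x := Relations.HF ℂ A (i, j)) (by simp [Relations.toSet])
    simp only [Relations.HF, Function.uncurry, Function.comp_apply, map_add, LieHom.map_lie,
      map_zsmul, add_eq_zero_iff_eq_neg] at this
    rw [sH, sF, this, Int.cast_smul_eq_zsmul]
  ef i := by
    have := mk_rel A (x := Relations.EF ℂ (i, i)) (by simp [Relations.toSet])
    simpa [Relations.EF, sub_eq_zero, sE, sF, sH] using this
  ef' i j hij := by
    have := mk_rel A (x := Relations.EF ℂ (i, j)) (by simp [Relations.toSet])
    simpa [Relations.EF, hij, sE, sF] using this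

lemma serre_adE (i j : ι) :
    ((LieAlgebra.ad ℂ _ (sE A i)) ^ (-A i j).toNat) ⁅sE A i, sE A j⁆ = 0 := by
  have := mk_rel A (x := Relations.adE ℂ A (i, j)) (by simp [Relations.toSet])
  have key : ∀ (n : ℕ) x, mk A (((LieAlgebra.ad ℂ _ (FreeLieAlgebra.of ℂ (Generators.E i))) ^ n) x) =
      ((LieAlgebra.ad ℂ _ (sE A i)) ^ n) (mk A x) := by
    intro n
    induction n with
    | zero => intro x; simp
    | succ n ih => intro x; rw [pow_succ, pow_succ]; simp [ih, sE]
  simp only [Relations.adE, Function.uncurry, Function.comp_apply, key, LieHom.map_lie] at this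
  exact this

lemma serre_adF (i j : ι) :
    ((LieAlgebra.ad ℂ _ (sF A i)) ^ (-A i j).toNat) ⁅sF A i, sF A j⁆ = 0 := by
  have := mk_rel A (x := Relations.adF ℂ A (i, j)) (by simp [Relations.toSet])
  have key : ∀ (n : ℕ) x, mk A (((LieAlgebra.ad ℂ _ (FreeLieAlgebra.of ℂ (Generators.F i))) ^ n) x) =
      ((LieAlgebra.ad ℂ _ (sF A i)) ^ n) (mk A x) := by
    intro n
    induction n with
    | zero => intro x; simp
    | succ n ih => intro x; rw [pow_succ, pow_succ]; simp [ih, sF]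
  simp only [Relations.adF, Function.uncurry, Function.comp_apply, key, LieHom.map_lie] at this
  exact this

lemma serre_generates : Generates (sE A) (sF A) := by
  intro K hE hF
  have hH : ∀ i, sH A i ∈ K := fun i => by
    rw [← (serre_isChev A).ef]; exact K.lie_mem (hE i) (hF i)
  let φ : FreeLieAlgebra ℂ (Generators ι) →ₗ⁅ℂ⁆ K := FreeLieAlgebra.lift ℂ fun
    | .H i => ⟨sH A i, hH i⟩
    | .E i => ⟨sE A i, hE i⟩
    | .F i => ⟨sF A i, hF i⟩
  have hφ : K.incl.comp φ = mk A := by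
    apply FreeLieAlgebra.hom_ext
    intro x
    cases x <;> simp [φ, sH, sE, sF]
  rw [eq_top_iff]
  intro x _
  obtain ⟨y, rfl⟩ := mk_surj A x
  rw [← hφ]
  exact (φ y).2
end Serre

/-! ### Weights of the adjoint action and the lowering and raising operators -/

section Weights
variable {ι g : Type*} [LieRing g] [LieAlgebra ℂ g]

/-- The weight space for the integral weight `l` of the family `h`, for the adjoint action. -/
def wt (h : ι → g) (l : ι → ℤ) : Submodule ℂ g where
  carrier := {x | ∀ i, ⁅h i, x⁆ = (l i : ℂ) • x}
  add_mem' hx hy i := by rw [lie_add, hx i, hy i, smul_add]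
  zero_mem' i := by simp
  smul_mem' c x hx i := by rw [lie_smul, hx i, smul_comm]

lemma mem_wt {h : ι → g} {l : ι → ℤ} {x : g} :
    x ∈ wt h l ↔ ∀ i, ⁅h i, x⁆ = (l i : ℂ) • x := Iff.rfl

lemma lie_mem_wt {h : ι → g} {l m : ι → ℤ} {x y : g} (hx : x ∈ wt h l) (hy : y ∈ wt h m) :
    ⁅x, y⁆ ∈ wt h (l + m) := fun i => by
  rw [leibniz_lie, hx i, hy i, smul_lie, lie_smul, ← add_smul]
  push_cast [Pi.add_apply]; rfl

lemma wt_indep {h : ι → g} (hh : ∀ i j, ⁅h i, h j⁆ = 0) : iSupIndep (wt h) := by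
  have key : iSupIndep fun χ : ι → ℂ ↦ ⨅ i, (LieAlgebra.ad ℂ g (h i)).maxGenEigenspace (χ i) := by
    apply Module.End.independent_iInf_maxGenEigenspace_of_forall_mapsTo
    intro i j φ
    apply Module.End.mapsTo_maxGenEigenspace_of_comm
    ext x
    simp only [Module.End.mul_apply, LieAlgebra.ad_apply]
    rw [leibniz_lie, hh, zero_lie, zero_add]
  have h2 := key.comp (f := fun l : ι → ℤ => fun i => (l i : ℂ)) (by
    intro l m hlm
    ext i
    have := congrFun hlm i
    simpa using this)
  refine h2.mono ?_
  intro l x hx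
  simp only [Function.comp_apply, Submodule.mem_iInf]
  intro i
  rw [Module.End.mem_maxGenEigenspace]
  exact ⟨1, by simpa [sub_eq_zero] using hx i⟩

lemma wt_disjoint {h : ι → g} (hh : ∀ i j, ⁅h i, h j⁆ = 0) {l m : ι → ℤ} {x : g}
    (hx : x ∈ wt h l) (hxm : x ∈ wt h m) (hlm : l ≠ m) : x = 0 := by
  have := (wt_indep hh).pairwiseDisjoint hlm
  exact (Submodule.disjoint_def.mp this) x hx hxm

/-- Weight vectors in the span of a set of weight vectors lie in the span of those of the same
weight. -/
lemma mem_span_wt {h : ι → g} (hh : ∀ i j, ⁅h i, h j⁆ = 0) {S : Set g}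
    (hS : ∀ x ∈ S, ∃ l, x ∈ wt h l) {x : g} {l : ι → ℤ} (hx : x ∈ wt h l)
    (hxS : x ∈ Submodule.span ℂ S) : x ∈ Submodule.span ℂ {y ∈ S | y ∈ wt h l} := by
  have h1 : Submodule.span ℂ S ≤ Submodule.span ℂ {y ∈ S | y ∈ wt h l} ⊔
      ⨆ m, ⨆ (_ : m ≠ l), wt h m := by
    rw [Submodule.span_le]
    intro y hy
    obtain ⟨m, hm⟩ := hS y hy
    by_cases hml : m = l
    · subst hml
      exact Submodule.mem_sup_left (Submodule.subset_span ⟨hy, hm⟩)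
    · refine Submodule.mem_sup_right ?_
      exact Submodule.mem_iSup_of_mem m (Submodule.mem_iSup_of_mem hml hm)
  obtain ⟨a, ha, b, hb, hab⟩ := Submodule.mem_sup.mp (h1 hxS)
  have ha' : a ∈ wt h l := by
    refine (Submodule.span_le (p := wt h l)).mpr ?_ ha
    rintro y ⟨-, hy⟩
    exact hy
  have hb' : b ∈ wt h l := by
    have : b = x - a := by rw [← hab]; abel
    rw [this]; exact sub_mem hx ha'
  have : b = 0 := (Submodule.disjoint_def.mp (wt_indep hh l)) b hb' hb
  rw [← hab, this, add_zero]
  exact ha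

lemma sum_finrank_le [FiniteDimensional ℂ g] {h : ι → g} (hh : ∀ i j, ⁅h i, h j⁆ = 0)
    (U : Submodule ℂ g) (T : Finset (ι → ℤ)) :
    ∑ l ∈ T, finrank ℂ ↥(U ⊓ wt h l) ≤ finrank ℂ U := by
  classical
  have h1 : ∀ T : Finset (ι → ℤ), finrank ℂ ↥(T.sup fun l => U ⊓ wt h l) =
      ∑ l ∈ T, finrank ℂ ↥(U ⊓ wt h l) := by
    intro T
    induction T using Finset.induction_on with
    | empty => simp
    | insert a T ha ih =>
      rw [Finset.sup_insert, Finset.sum_insert ha, ← ih]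
      have hd : Disjoint (U ⊓ wt h a) (T.sup fun l => U ⊓ wt h l) := by
        refine ((wt_indep hh) a).mono inf_le_right ?_
        apply Finset.sup_le
        intro l hl
        refine inf_le_right.trans ?_
        exact le_iSup₂_of_le l (by rintro rfl; exact ha hl) le_rfl
      have := Submodule.finrank_sup_add_finrank_inf_eq (U ⊓ wt h a) (T.sup fun l => U ⊓ wt h l)
      rw [hd.eq_bot] at this
      simpa using this
  rw [← h1]
  apply Submodule.finrank_mono
  exact Finset.sup_le fun l _ => inf_le_left

/-- If the weight spaces of `U` indexed by `T` exhaust the dimension of `U`, they span `U`. -/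
lemma le_sup_of_finrank [FiniteDimensional ℂ g] {h : ι → g} (hh : ∀ i j, ⁅h i, h j⁆ = 0)
    (U : Submodule ℂ g) (T : Finset (ι → ℤ))
    (hT : finrank ℂ U ≤ ∑ l ∈ T, finrank ℂ ↥(U ⊓ wt h l)) :
    U = T.sup fun l => U ⊓ wt h l := by
  have hle : (T.sup fun l => U ⊓ wt h l) ≤ U := Finset.sup_le fun l _ => inf_le_left
  refine (Submodule.eq_of_le_of_finrank_le hle ?_).symm
  refine hT.trans ?_
  refine le_trans (Finset.sum_le_sum fun l hl => ?_) (sum_finrank_le hh _ T)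
  apply Submodule.finrank_mono
  exact le_inf (Finset.le_sup (f := fun l => U ⊓ wt h l) hl) inf_le_right

/-- Commuting operators have a common eigenvector. -/
lemma exists_joint [Finite ι] [FiniteDimensional ℂ g] {h : ι → g} (hh : ∀ i j, ⁅h i, h j⁆ = 0)
    (U : Submodule ℂ g) (hU : U ≠ ⊥) (hst : ∀ i, ∀ x ∈ U, ⁅h i, x⁆ ∈ U) :
    ∃ x ∈ U, x ≠ 0 ∧ ∃ c : ι → ℂ, ∀ i, ⁅h i, x⁆ = c i • x := by
  classical
  have := Fintype.ofFinite ι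
  have key : ∀ s : Finset ι, ∃ V ≤ U, V ≠ ⊥ ∧ (∀ i, ∀ x ∈ V, ⁅h i, x⁆ ∈ V) ∧
      ∀ i ∈ s, ∃ c : ℂ, ∀ x ∈ V, ⁅h i, x⁆ = c • x := by
    intro s
    induction s using Finset.induction_on with
    | empty => exact ⟨U, le_rfl, hU, hst, by simp⟩
    | insert a s ha ih =>
      obtain ⟨V, hVU, hV, hVs, hVc⟩ := ih
      have : Nontrivial V := Submodule.nontrivial_iff_ne_bot.mpr hV
      obtain ⟨c, hc⟩ := Module.End.exists_eigenvalue
        ((LieAlgebra.ad ℂ g (h a)).restrict (p := V) (q := V) (fun x hx => hVs a x hx))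
      obtain ⟨v, hv⟩ := hc.exists_hasEigenvector
      refine ⟨V ⊓ (LieAlgebra.ad ℂ g (h a)).eigenspace c, inf_le_left.trans hVU, ?_, ?_, ?_⟩
      · rw [Submodule.ne_bot_iff]
        refine ⟨v, ⟨v.2, ?_⟩, ?_⟩
        · rw [SetLike.mem_coe, Module.End.mem_eigenspace_iff]
          have := congrArg Subtype.val hv.apply_eq_smul
          exact this
        · have := hv.2
          simpa using this
      · rintro i x ⟨hx, hx'⟩
        refine ⟨hVs i x hx, ?_⟩
        rw [SetLike.mem_coe, Module.End.mem_eigenspace_iff, LieAlgebra.ad_apply] at hx' ⊢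
        rw [leibniz_lie, hh, zero_lie, zero_add, hx', lie_smul]
      · intro i hi
        rcases Finset.mem_insert.mp hi with rfl | hi
        · refine ⟨c, fun x hx => ?_⟩
          have := hx.2
          rwa [SetLike.mem_coe, Module.End.mem_eigenspace_iff] at this
        · obtain ⟨c, hc⟩ := hVc i hi
          exact ⟨c, fun x hx => hc x hx.1⟩
  obtain ⟨V, hVU, hV, -, hVc⟩ := key Finset.univ
  obtain ⟨x, hx, hx0⟩ := (Submodule.ne_bot_iff _).mp hV
  choose c hc using fun i => hVc i (Finset.mem_univ i)
  exact ⟨x, hVU hx, hx0, c, fun i => hc i x hx⟩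

end Weights

section Chev
variable {ι g : Type*} [LieRing g] [LieAlgebra ℂ g]
variable {A : Matrix ι ι ℤ} {h e f : ι → g}

lemma IsChev.e_mem_wt (C : IsChev A h e f) (j : ι) : e j ∈ wt h (A.col j) := fun i => C.he i j
lemma IsChev.f_mem_wt (C : IsChev A h e f) (j : ι) : f j ∈ wt h (-A.col j) := fun i => by
  rw [C.hf i j]; simp [Matrix.col]
lemma IsChev.h_mem_wt (C : IsChev A h e f) (j : ι) : h j ∈ wt h 0 := fun i => by
  rw [C.hh i j]; simp

lemma IsChev.e_wt (C : IsChev A h e f) (j : ι) {l : ι → ℤ} {x : g} (hx : x ∈ wt h l) :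
    ⁅e j, x⁆ ∈ wt h (l + A.col j) := by
  rw [add_comm]; exact lie_mem_wt (C.e_mem_wt j) hx

lemma IsChev.f_wt (C : IsChev A h e f) (j : ι) {l : ι → ℤ} {x : g} (hx : x ∈ wt h l) :
    ⁅f j, x⁆ ∈ wt h (l - A.col j) := by
  rw [sub_eq_add_neg, add_comm]; exact lie_mem_wt (C.f_mem_wt j) hx

/-- The Chevalley involution on generators. -/
lemma IsChev.symm (C : IsChev A h e f) : IsChev A (-h) f e where
  hh i j := by simp [C.hh]
  he i j := by simp [C.hf]
  hf i j := by simp [C.he]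
  ef i := by rw [← lie_skew, C.ef]; rfl
  ef' i j hij := by rw [← lie_skew, C.ef' j i hij.symm, neg_zero]

lemma wt_neg {l : ι → ℤ} : wt (-h) l = wt h (-l) := by
  ext x
  simp only [mem_wt, Pi.neg_apply, neg_lie, Int.cast_neg, neg_smul]
  exact forall_congr' fun i => neg_eq_iff_eq_neg

lemma IsChev.sl2 (C : IsChev A h e f) (hA : ∀ i, A i i = 2) {i : ι} (hi : h i ≠ 0) :
    IsSl2Triple (h i) (e i) (f i) where
  h_ne_zero := hi
  lie_e_f := C.ef i
  lie_h_e_nsmul := by rw [C.he, hA]; simp [two_smul]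
  lie_h_f_nsmul := by rw [C.hf, hA]; simp [two_smul]

/-- Eigenvalues of `h` in an `sl₂`-triple are integers: an eigenvector can be raised to a primitive
vector. -/
lemma sl2_int [FiniteDimensional ℂ g] {h e f : g} (t : IsSl2Triple h e f) {x : g} {c : ℂ}
    (hx0 : x ≠ 0) (hx : ⁅h, x⁆ = c • x) : ∃ n : ℤ, c = n := by
  obtain ⟨n, m, hm⟩ : ∃ (n : ℕ) (m : g), t.HasPrimitiveVectorWith m (c + 2 * n) := by
    have h1 : ∀ n : ℕ, ⁅h, ((LieAlgebra.ad ℂ g e) ^ n) x⁆ =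
        (c + 2 * n) • ((LieAlgebra.ad ℂ g e) ^ n) x := by
      intro n
      induction n with
      | zero => simpa using hx
      | succ n ih =>
        rw [pow_succ', Module.End.mul_apply, LieAlgebra.ad_apply, leibniz_lie, ih,
          t.lie_h_e_smul ℂ, smul_lie, lie_smul, ← add_smul]
        push_cast; congr 1; ring
    have h2 : ∃ n : ℕ, ((LieAlgebra.ad ℂ g e) ^ n) x = 0 := by
      by_contra! hne
      have hs : (Set.range <| fun (n : ℕ) ↦ c + 2 * n).Infinite := by
        rw [Set.infinite_range_iff (fun n m ↦ by simp)]; infer_instance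
      refine hs (Set.Finite.subset
        (Module.End.finite_hasEigenvalue (LieAlgebra.ad ℂ g h)) ?_)
      rintro _ ⟨n, rfl⟩
      exact Module.End.hasEigenvalue_of_hasEigenvector (x := ((LieAlgebra.ad ℂ g e) ^ n) x)
        ⟨by rw [Module.End.mem_eigenspace_iff]; exact h1 n, hne n⟩
    obtain ⟨n, hn₁, hn₂⟩ := Nat.exists_not_and_succ_of_not_zero_of_exists (by simpa using hx0) h2
    refine ⟨n, _, hn₁, h1 n, ?_⟩
    rw [pow_succ', Module.End.mul_apply, LieAlgebra.ad_apply] at hn₂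
    exact hn₂
  obtain ⟨k, hk⟩ := hm.exists_nat
  refine ⟨k - 2 * n, ?_⟩
  push_cast
  rw [← hk]; ring

lemma IsChev.f_ne [FiniteDimensional ℂ g] (C : IsChev A h e f) (hA : ∀ i, A i i = 2) {i : ι}
    (hi : h i ≠ 0) {l : ι → ℤ} {x : g} (hx : x ∈ wt h l) (hx0 : x ≠ 0) (hl : 0 < l i) :
    ⁅f i, x⁆ ≠ 0 := by
  intro h0
  have : (C.sl2 hA hi).symm.HasPrimitiveVectorWith x (-(l i : ℂ)) :=
    ⟨hx0, by rw [neg_lie, hx i, neg_smul], h0⟩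
  obtain ⟨n, hn⟩ := this.exists_nat
  have : -(l i) = (n : ℤ) := by exact_mod_cast hn
  omega

lemma IsChev.e_ne [FiniteDimensional ℂ g] (C : IsChev A h e f) (hA : ∀ i, A i i = 2) {i : ι}
    (hi : h i ≠ 0) {l : ι → ℤ} {x : g} (hx : x ∈ wt h l) (hx0 : x ≠ 0) (hl : l i < 0) :
    ⁅e i, x⁆ ≠ 0 := by
  refine C.symm.f_ne hA (i := i) (by simpa using hi) (l := -l) ?_ hx0 (by simpa using hl)
  rw [wt_neg, neg_neg]; exact hx

lemma IsChev.exists_wt [Finite ι] [FiniteDimensional ℂ g] (C : IsChev A h e f)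
    (hA : ∀ i, A i i = 2)
    (hn : ∀ i, h i ≠ 0) (U : Submodule ℂ g) (hU : U ≠ ⊥) (hst : ∀ i, ∀ x ∈ U, ⁅h i, x⁆ ∈ U) :
    ∃ l, ∃ x ∈ U, x ≠ 0 ∧ x ∈ wt h l := by
  obtain ⟨x, hx, hx0, c, hc⟩ := exists_joint C.hh U hU hst
  choose n hn using fun i => sl2_int (C.sl2 hA (hn i)) hx0 (hc i)
  exact ⟨n, x, hx, hx0, fun i => by rw [hc i, hn i]⟩

end Chev

/-! ### Words in the generators, triangular decomposition and simplicity -/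

section Words
variable {ι g : Type*} [DecidableEq ι] [LieRing g] [LieAlgebra ℂ g]

/-- `W e γ x` says that `x` is a right-normed bracket of the `e i` in which `e i` occurs
`γ i` times. -/
inductive W (e : ι → g) : (ι → ℤ) → g → Prop
  | base (i : ι) : W e (Pi.single i 1) (e i)
  | step (i : ι) {γ : ι → ℤ} {x : g} : W e γ x → W e (γ + Pi.single i 1) ⁅e i, x⁆

lemma W.nonneg {e : ι → g} {γ : ι → ℤ} {x : g} (hw : W e γ x) (i : ι) : 0 ≤ γ i := by
  induction hw with
  | base j => by_cases hij : i = j <;> simp [Pi.single_apply, hij]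
  | step j _ ih =>
    by_cases hij : i = j
    · subst hij; simp; omega
    · simpa [Pi.single_apply, hij] using ih

lemma W.one_le [Fintype ι] {e : ι → g} {γ : ι → ℤ} {x : g} (hw : W e γ x) : 1 ≤ ∑ i, γ i := by
  induction hw with
  | base j => simp
  | step j _ ih => simp [Finset.sum_add_distrib]; omega

lemma W.eq_base [Fintype ι] {e : ι → g} {γ : ι → ℤ} {x : g} (hw : W e γ x)
    (hs : ∑ i, γ i = 1) : ∃ i, γ = Pi.single i 1 := by
  cases hw with
  | base j => exact ⟨j, rfl⟩
  | step j hw => have := hw.one_le; simp [Finset.sum_add_distrib] at hs; omega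

lemma W.single [Fintype ι] {e : ι → g} {i : ι} {γ : ι → ℤ} {x : g} (hw : W e γ x)
    (hγ : γ = Pi.single i 1) :
    x = e i := by
  cases hw with
  | base j =>
    by_cases hij : i = j
    · rw [hij]
    · have := congrFun hγ j
      simp [Pi.single_apply, Ne.symm hij] at this
  | step j hw =>
    have := hw.one_le
    have h2 := congrArg (fun γ : ι → ℤ => ∑ i, γ i) hγ
    simp [Finset.sum_add_distrib] at h2
    omega

variable {A : Matrix ι ι ℤ} {h e f : ι → g}

lemma W.mem_wt [Fintype ι] (C : IsChev A h e f) {γ : ι → ℤ} {x : g} (hw : W e γ x) :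
    x ∈ wt h (A.mulVec γ) := by
  induction hw with
  | base j => rw [Matrix.mulVec_single_one]; exact C.e_mem_wt j
  | step j _ ih =>
    rw [Matrix.mulVec_add, Matrix.mulVec_single_one]
    exact C.e_wt j ih

/-- The words in the `e i`, the words in the `f i`, and the `h i`. -/
def triSet (h e f : ι → g) : Set g := {x | ∃ γ, W e γ x} ∪ {x | ∃ γ, W f γ x} ∪ Set.range h

/-- Lowering a word in the `e i` gives a combination of words in the `e i` and of the `h i`. -/
lemma lie_triSet [Fintype ι] (C : IsChev A h e f) (i : ι) {γ : ι → ℤ} {x : g} (hw : W e γ x) :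
    ⁅f i, x⁆ ∈ Submodule.span ℂ ({x | ∃ γ, W e γ x} ∪ Set.range h) := by
  induction hw with
  | base j =>
    by_cases hij : j = i
    · subst hij
      rw [← lie_skew, C.ef]
      exact neg_mem (Submodule.subset_span (Or.inr ⟨j, rfl⟩))
    · rw [← lie_skew, C.ef' j i hij, neg_zero]; exact zero_mem _
  | @step j γ x hw ih =>
    rw [leibniz_lie]
    refine add_mem ?_ ?_
    · by_cases hij : j = i
      · subst hij
        rw [← lie_skew (f _) (e j), C.ef, neg_lie, (hw.mem_wt C) j]
        exact neg_mem (Submodule.smul_mem _ _ (Submodule.subset_span (Or.inl ⟨_, hw⟩)))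
      · rw [← lie_skew (f _) (e j), C.ef' j i hij, neg_zero, zero_lie]; exact zero_mem _
    · have : Submodule.span ℂ ({x | ∃ γ, W e γ x} ∪ Set.range h) ≤
          (Submodule.span ℂ ({x | ∃ γ, W e γ x} ∪ Set.range h)).comap
            (LieAlgebra.ad ℂ g (e j)) := by
        rw [Submodule.span_le]
        rintro y (⟨γ, hy⟩ | ⟨k, rfl⟩)
        · exact Submodule.subset_span (Or.inl ⟨_, hy.step j⟩)
        · simp only [Submodule.comap_coe, Set.mem_preimage, SetLike.mem_coe]
          rw [LieAlgebra.ad_apply, ← lie_skew, C.he]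
          exact neg_mem (Submodule.smul_mem _ _ (Submodule.subset_span (Or.inl ⟨_, W.base j⟩)))
      exact this ih

lemma tri_stable_f [Fintype ι] (C : IsChev A h e f) (i : ι) {x : g}
    (hx : x ∈ Submodule.span ℂ (triSet h e f)) : ⁅f i, x⁆ ∈ Submodule.span ℂ (triSet h e f) := by
  have : Submodule.span ℂ (triSet h e f) ≤
      (Submodule.span ℂ (triSet h e f)).comap (LieAlgebra.ad ℂ g (f i)) := by
    rw [Submodule.span_le]
    rintro y ((⟨γ, hy⟩ | ⟨γ, hy⟩) | ⟨k, rfl⟩)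
    · refine Submodule.span_mono ?_ (lie_triSet C i hy)
      rintro z (hz | hz)
      · exact Or.inl (Or.inl hz)
      · exact Or.inr hz
    · exact Submodule.subset_span (Or.inl (Or.inr ⟨_, hy.step i⟩))
    · simp only [Submodule.comap_coe, Set.mem_preimage, SetLike.mem_coe]
      rw [LieAlgebra.ad_apply, ← lie_skew, C.hf, neg_neg]
      exact Submodule.smul_mem _ _ (Submodule.subset_span (Or.inl (Or.inr ⟨_, W.base i⟩)))
  exact this hx

lemma triSet_symm : Submodule.span ℂ (triSet (-h) f e) = Submodule.span ℂ (triSet h e f) := by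
  apply le_antisymm
  · rw [Submodule.span_le]
    rintro y ((hy | hy) | ⟨k, rfl⟩)
    · exact Submodule.subset_span (Or.inl (Or.inr hy))
    · exact Submodule.subset_span (Or.inl (Or.inl hy))
    · exact neg_mem (Submodule.subset_span (Or.inr ⟨k, rfl⟩))
  · rw [Submodule.span_le]
    rintro y ((hy | hy) | ⟨k, rfl⟩)
    · exact Submodule.subset_span (Or.inl (Or.inr hy))
    · exact Submodule.subset_span (Or.inl (Or.inl hy))
    · rw [← neg_neg (h k)]
      exact neg_mem (Submodule.subset_span (Or.inr ⟨k, rfl⟩))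

/-- The set of elements whose adjoint action preserves a subspace is a subalgebra. -/
def stab (U : Submodule ℂ g) : LieSubalgebra ℂ g where
  carrier := {x | ∀ y ∈ U, ⁅x, y⁆ ∈ U}
  add_mem' hx hy z hz := by rw [add_lie]; exact add_mem (hx z hz) (hy z hz)
  zero_mem' z _ := by simp
  smul_mem' c x hx z hz := by rw [smul_lie]; exact U.smul_mem _ (hx z hz)
  lie_mem' hx hy z hz := by
    rw [lie_lie]; exact sub_mem (hx _ (hy z hz)) (hy _ (hx z hz))

/-- If `U` is stable under the generators, it is an ideal. -/
lemma Generates.stable (G : Generates e f) {U : Submodule ℂ g}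
    (hE : ∀ i, ∀ y ∈ U, ⁅e i, y⁆ ∈ U) (hF : ∀ i, ∀ y ∈ U, ⁅f i, y⁆ ∈ U) (x y : g) (hy : y ∈ U) :
    ⁅x, y⁆ ∈ U := by
  have := G (stab U) (fun i => hE i) (fun i => hF i)
  have hx : x ∈ stab U := by rw [this]; trivial
  exact hx y hy

/-- The triangular decomposition. -/
lemma tri_top [Fintype ι] (C : IsChev A h e f) (G : Generates e f) :
    Submodule.span ℂ (triSet h e f) = ⊤ := by
  have hst : ∀ x y : g, y ∈ Submodule.span ℂ (triSet h e f) →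
      ⁅x, y⁆ ∈ Submodule.span ℂ (triSet h e f) := by
    apply G.stable
    · intro i y hy
      rw [← triSet_symm] at hy ⊢
      exact tri_stable_f C.symm i hy
    · intro i y hy
      exact tri_stable_f C i hy
  let K : LieSubalgebra ℂ g :=
    { Submodule.span ℂ (triSet h e f) with
      lie_mem' := fun {x y} _ hy => hst x y hy }
  have hK := G K (fun i => Submodule.subset_span (Or.inl (Or.inl ⟨_, W.base i⟩)))
    (fun i => Submodule.subset_span (Or.inl (Or.inr ⟨_, W.base i⟩)))
  rw [eq_top_iff]
  intro x _
  have : x ∈ K := by rw [hK]; trivial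
  exact this

end Words

section Simple
variable {ι g : Type*} [Fintype ι] [DecidableEq ι] [LieRing g] [LieAlgebra ℂ g]

/-- The properties of an indecomposable Cartan matrix of finite type that are used below: `pos` says
that a positive element of the root lattice pairs positively with some simple coroot, and `conn`
that the Dynkin diagram is connected. -/
structure FinType (A : Matrix ι ι ℤ) : Prop where
  two : ∀ i, A i i = 2
  det : A.det ≠ 0
  pos : ∀ γ : ι → ℤ, (∀ i, 0 ≤ γ i) → γ ≠ 0 → ∃ i, 0 < A.mulVec γ i
  conn : ∀ P : ι → Prop, (∃ i, P i) → (∀ i j, P i → A i j ≠ 0 → P j) → ∀ i, P i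

variable {A : Matrix ι ι ℤ} {h e f : ι → g}

lemma FinType.inj (hA : FinType A) {γ δ : ι → ℤ} (hγ : A.mulVec γ = A.mulVec δ) : γ = δ := by
  have := Matrix.eq_zero_of_mulVec_eq_zero hA.det (v := γ - δ)
    (by rw [Matrix.mulVec_sub, hγ, sub_self])
  exact sub_eq_zero.mp this

lemma FinType.left_inj (hA : FinType A) {c : ι → ℂ} (hc : ∀ j, ∑ i, c i * (A i j : ℂ) = 0) :
    c = 0 := by
  apply Matrix.eq_zero_of_vecMul_eq_zero (M := A.map (Int.castRingHom ℂ))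
  · rw [← RingHom.mapMatrix_apply, ← RingHom.map_det]
    simpa using hA.det
  · ext j; exact hc j

/-- If one `h i` vanishes, so do its neighbours in the Dynkin diagram, hence all generators. -/
lemma h_ne_zero (C : IsChev A h e f) (G : Generates e f) (hA : FinType A) [Nontrivial g] (i : ι) :
    h i ≠ 0 := by
  intro hi
  have h1 : ∀ i j, h i = 0 → A i j ≠ 0 → e j = 0 ∧ f j = 0 := by
    intro i j hi hij
    have h1 := C.he i j
    have h2 := C.hf i j
    rw [hi, zero_lie] at h1 h2
    have : (A i j : ℂ) ≠ 0 := by exact_mod_cast hij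
    refine ⟨(smul_eq_zero.mp h1.symm).resolve_left this, ?_⟩
    exact (smul_eq_zero.mp (neg_eq_zero.mp h2.symm)).resolve_left this
  have h2 := hA.conn (fun i => h i = 0) ⟨i, hi⟩ (fun i j hi hij => by
    rw [← C.ef j, (h1 i j hi hij).1, zero_lie])
  have h3 : ∀ j, e j = 0 ∧ f j = 0 := fun j => h1 j j (h2 j) (by rw [hA.two]; norm_num)
  have := G ⊥ (fun i => by simp [(h3 i).1]) (fun i => by simp [(h3 i).2])
  obtain ⟨x, hx⟩ := exists_ne (0 : g)
  apply hx
  have : x ∈ (⊥ : LieSubalgebra ℂ g) := by rw [this]; trivial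
  simpa using this

lemma h_li (C : IsChev A h e f) (hA : FinType A) (hn : ∀ i, h i ≠ 0) : LinearIndependent ℂ h := by
  rw [Fintype.linearIndependent_iff]
  intro c hc
  have : c = 0 := by
    apply hA.left_inj
    intro j
    have := congrArg (fun x => ⁅x, e j⁆) hc
    simp only [sum_lie, smul_lie, C.he, zero_lie, smul_smul] at this
    rw [← Finset.sum_smul] at this
    exact (smul_eq_zero.mp this).resolve_right (C.sl2 hA.two (hn j)).e_ne_zero
  exact fun i => congrFun this i

/-- A nonzero weight vector has weight zero, or a positive, or a negative weight. -/
lemma tri_cases (C : IsChev A h e f) (G : Generates e f) {l : ι → ℤ} {x : g} (hx0 : x ≠ 0)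
    (hx : x ∈ wt h l) : l = 0 ∨ (∃ γ w, W e γ w ∧ l = A.mulVec γ) ∨
      ∃ γ w, W f γ w ∧ l = -A.mulVec γ := by
  have hS : ∀ x ∈ triSet h e f, ∃ l, x ∈ wt h l := by
    rintro x ((⟨γ, hw⟩ | ⟨γ, hw⟩) | ⟨k, rfl⟩)
    · exact ⟨_, hw.mem_wt C⟩
    · have := hw.mem_wt C.symm
      rw [wt_neg] at this
      exact ⟨_, this⟩
    · exact ⟨_, C.h_mem_wt k⟩
  have h1 := mem_span_wt C.hh hS hx (by rw [tri_top C G]; trivial)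
  obtain ⟨y, ⟨hyS, hyl⟩, hy0⟩ : ∃ y ∈ {y ∈ triSet h e f | y ∈ wt h l}, y ≠ 0 := by
    by_contra! hall
    apply hx0
    have := Submodule.span_mono (R := ℂ) (t := {0}) (fun y hy => hall y hy) h1
    simpa using this
  have huniq : ∀ {m}, y ∈ wt h m → l = m := fun hm => by
    by_contra hne
    exact hy0 (wt_disjoint C.hh hyl hm hne)
  rcases hyS with (⟨γ, hw⟩ | ⟨γ, hw⟩) | ⟨k, rfl⟩
  · exact Or.inr (Or.inl ⟨γ, y, hw, huniq (hw.mem_wt C)⟩)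
  · refine Or.inr (Or.inr ⟨γ, y, hw, huniq ?_⟩)
    have := hw.mem_wt C.symm
    rwa [wt_neg] at this
  · exact Or.inl (huniq (C.h_mem_wt k))

/-- A vector of weight `l` lies in every subspace that contains all words of weight `l` and, when
`l = 0`, all the `h i`. -/
lemma tri_span (C : IsChev A h e f) (G : Generates e f) {l : ι → ℤ} {x : g}
    (hx : x ∈ wt h l) (V : Submodule ℂ g) (h1 : ∀ γ w, W e γ w → l = A.mulVec γ → w ∈ V)
    (h2 : ∀ γ w, W f γ w → l = -A.mulVec γ → w ∈ V) (h3 : l = 0 → ∀ i, h i ∈ V) : x ∈ V := by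
  have hS : ∀ x ∈ triSet h e f, ∃ l, x ∈ wt h l := by
    rintro x ((⟨γ, hw⟩ | ⟨γ, hw⟩) | ⟨k, rfl⟩)
    · exact ⟨_, hw.mem_wt C⟩
    · have := hw.mem_wt C.symm
      rw [wt_neg] at this
      exact ⟨_, this⟩
    · exact ⟨_, C.h_mem_wt k⟩
  refine (Submodule.span_le (p := V)).mpr ?_
    (mem_span_wt C.hh hS hx (by rw [tri_top C G]; trivial))
  rintro y ⟨hyS, hyl⟩
  by_cases hy0 : y = 0
  · rw [hy0]; exact zero_mem _
  have huniq : ∀ {m}, y ∈ wt h m → l = m := fun hm => by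
    by_contra hne
    exact hy0 (wt_disjoint C.hh hyl hm hne)
  rcases hyS with (⟨γ, hw⟩ | ⟨γ, hw⟩) | ⟨k, rfl⟩
  · exact h1 γ y hw (huniq (hw.mem_wt C))
  · have := hw.mem_wt C.symm
    rw [wt_neg] at this
    exact h2 γ y hw (huniq this)
  · exact h3 (huniq (C.h_mem_wt k)) k

lemma W.ne_zero {γ : ι → ℤ} {x : g} (hw : W e γ x) : γ ≠ 0 := by
  rintro rfl
  have := hw.one_le
  simp at this

/-- A nonzero vector of positive weight in an ideal can be lowered by suitable `f i` without being
killed, until a simple root is reached; so the ideal contains some `e i`. -/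
lemma descent [FiniteDimensional ℂ g] (C : IsChev A h e f) (G : Generates e f) (hA : FinType A)
    (hn : ∀ i, h i ≠ 0) (J : LieIdeal ℂ g) (n : ℕ) : ∀ (γ : ι → ℤ) (w x : g), W e γ w →
      ∑ i, γ i = n → x ∈ J → x ≠ 0 → x ∈ wt h (A.mulVec γ) → ∃ i, e i ∈ J := by
  induction n with
  | zero =>
    intro γ w x hw hs
    have := hw.one_le
    simp only [Nat.cast_zero] at hs
    omega
  | succ n ih =>
    intro γ w x hw hs hxJ hx0 hx
    obtain ⟨i, hi⟩ := hA.pos γ hw.nonneg hw.ne_zero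
    have hfx := C.f_ne hA.two (hn i) hx hx0 hi
    have hfw := C.f_wt i hx
    have hfJ : ⁅f i, x⁆ ∈ J := J.lie_mem hxJ
    rw [← Matrix.mulVec_single_one, ← Matrix.mulVec_sub] at hfw
    rcases tri_cases C G hfx hfw with h0 | ⟨γ', w', hw', h0⟩ | ⟨γ', w', hw', h0⟩
    · have hγ : γ = Pi.single i 1 := by
        apply hA.inj
        rw [Matrix.mulVec_sub] at h0
        exact sub_eq_zero.mp h0
      refine ⟨i, ?_⟩
      have : x ∈ Submodule.span ℂ {e i} := by
        refine tri_span C G hx _ ?_ ?_ ?_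
        · intro γ' w' hw' h1
          rw [hw'.single ((hA.inj h1).symm.trans hγ)]
          exact Submodule.mem_span_singleton_self _
        · intro γ' w' hw' h1
          rw [← Matrix.mulVec_neg] at h1
          have h2 := congrArg (fun γ : ι → ℤ => ∑ i, γ i) (hA.inj h1)
          simp only [Pi.neg_apply, Finset.sum_neg_distrib] at h2
          have := hw'.one_le
          omega
        · intro h1
          exact absurd (hA.inj (h1.trans (Matrix.mulVec_zero A).symm)) hw.ne_zero
      obtain ⟨c, rfl⟩ := Submodule.mem_span_singleton.mp this
      have hc : c ≠ 0 := by rintro rfl; simp at hx0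
      have := J.smul_mem c⁻¹ hxJ
      rwa [smul_smul, inv_mul_cancel₀ hc, one_smul] at this
    · have h2 := hA.inj h0
      refine ih γ' w' _ hw' ?_ hfJ hfx (by rw [← h2]; exact hfw)
      rw [← h2]
      simp [Finset.sum_sub_distrib, hs]
    · rw [← Matrix.mulVec_neg] at h0
      have h2 := congrArg (fun γ : ι → ℤ => ∑ i, γ i) (hA.inj h0)
      simp [Finset.sum_sub_distrib, hs] at h2
      have := hw'.one_le
      omega

lemma Generates.symm (G : Generates e f) : Generates f e := fun K hE hF => G K hF hE

lemma ideal_top [FiniteDimensional ℂ g] (C : IsChev A h e f) (G : Generates e f) (hA : FinType A)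
    (hn : ∀ i, h i ≠ 0) (J : LieIdeal ℂ g) (hJ : J ≠ ⊥) : J = ⊤ := by
  have hne : ∀ i j, h i ∈ J → A i j ≠ 0 → e j ∈ J ∧ f j ∈ J := by
    intro i j hi hij
    have h1 : ⁅h i, e j⁆ ∈ J := lie_mem_left ℂ g J _ _ hi
    have h2 : ⁅h i, f j⁆ ∈ J := lie_mem_left ℂ g J _ _ hi
    have hc : (A i j : ℂ) ≠ 0 := by exact_mod_cast hij
    rw [C.he] at h1
    rw [C.hf] at h2
    have h3 := J.smul_mem (A i j : ℂ)⁻¹ h1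
    have h4 := J.smul_mem (A i j : ℂ)⁻¹ (neg_mem h2)
    rw [neg_neg] at h4
    rw [smul_smul, inv_mul_cancel₀ hc, one_smul] at h3 h4
    exact ⟨h3, h4⟩
  have hh : ∃ i, h i ∈ J := by
    have hef : (∃ i, e i ∈ J) ∨ ∃ i, f i ∈ J := by
      obtain ⟨l, x, hx, hx0, hxl⟩ := C.exists_wt hA.two hn J.toSubmodule (by simpa using hJ)
        (fun i x hx => J.lie_mem hx)
      rcases tri_cases C G hx0 hxl with h0 | ⟨γ, w, hw, h0⟩ | ⟨γ, w, hw, h0⟩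
      · left
        have hxh : x ∈ Submodule.span ℂ (Set.range h) := by
          refine tri_span C G hxl _ ?_ ?_ ?_
          · intro γ' w' hw' h1
            exact absurd (hA.inj (h1.symm.trans (h0.trans (Matrix.mulVec_zero A).symm))) hw'.ne_zero
          · intro γ' w' hw' h1
            have h2 : A.mulVec γ' = 0 := by rw [h0] at h1; exact neg_eq_zero.mp h1.symm
            exact absurd (hA.inj (h2.trans (Matrix.mulVec_zero A).symm)) hw'.ne_zero
          · exact fun _ i => Submodule.subset_span ⟨i, rfl⟩
        obtain ⟨c, rfl⟩ := (Submodule.mem_span_range_iff_exists_fun ℂ).mp hxh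
        by_contra! hall
        apply hx0
        have : c = 0 := by
          apply hA.left_inj
          intro j
          by_contra hc
          have h1 : ⁅∑ i, c i • h i, e j⁆ ∈ J := lie_mem_left ℂ g J _ _ hx
          simp only [sum_lie, smul_lie, C.he, smul_smul] at h1
          rw [← Finset.sum_smul] at h1
          have h3 := J.smul_mem (∑ i, c i * (A i j : ℂ))⁻¹ h1
          rw [smul_smul, inv_mul_cancel₀ hc, one_smul] at h3
          exact hall j h3
        simp [this]
      · left
        rw [h0] at hxl
        refine descent C G hA hn J (∑ i, γ i).toNat γ w x hw ?_ hx hx0 hxl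
        have := hw.one_le; omega
      · right
        rw [h0, ← wt_neg] at hxl
        refine descent C.symm G.symm hA (by simpa using hn) J (∑ i, γ i).toNat γ w x hw ?_ hx hx0 hxl
        have := hw.one_le; omega
    rcases hef with ⟨i, hi⟩ | ⟨i, hi⟩
    · exact ⟨i, by rw [← C.ef]; exact lie_mem_left ℂ g J _ _ hi⟩
    · exact ⟨i, by rw [← C.ef]; exact J.lie_mem hi⟩
  have hall := hA.conn (fun i => h i ∈ J) hh (fun i j hi hij => by
    rw [← C.ef]; exact lie_mem_left ℂ g J _ _ (hne i j hi hij).1)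
  have h2 : ∀ i, e i ∈ J ∧ f i ∈ J := fun i => hne i i (hall i) (by rw [hA.two]; norm_num)
  have hK := G (LieIdeal.toLieSubalgebra ℂ g J) (fun i => (h2 i).1) (fun i => (h2 i).2)
  rw [eq_top_iff]
  intro x _
  have : x ∈ LieIdeal.toLieSubalgebra ℂ g J := by rw [hK]; trivial
  exact this

/-- A finite-dimensional Lie algebra generated by nonzero Chevalley generators for an indecomposable
Cartan matrix of finite type is simple. -/
lemma isSimple [FiniteDimensional ℂ g] [Nonempty ι] (C : IsChev A h e f) (G : Generates e f)
    (hA : FinType A) (hn : ∀ i, h i ≠ 0) : LieAlgebra.IsSimple ℂ g where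
  eq_bot_or_eq_top J := by
    by_cases hJ : J = ⊥
    · exact Or.inl hJ
    · exact Or.inr (ideal_top C G hA hn J hJ)
  non_abelian := by
    intro hab
    obtain ⟨i⟩ := ‹Nonempty ι›
    apply hn i
    rw [← C.ef]
    exact hab.trivial _ _

end Simple

/-! ### The dimension bound in the simply laced case -/

section SimplyLaced
variable {ι g : Type*} [Fintype ι] [DecidableEq ι] [LieRing g] [LieAlgebra ℂ g]

/-- The quadratic form `γ ↦ γᵀ A γ`. -/
def qN (A : Matrix ι ι ℤ) (γ : ι → ℤ) : ℤ := γ ⬝ᵥ A.mulVec γ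

/-- A simply-laced Cartan matrix of finite type. -/
structure SimplyLaced (A : Matrix ι ι ℤ) : Prop where
  two : ∀ i, A i i = 2
  sym : ∀ i j, A i j = A j i
  off : ∀ i j, i ≠ j → A i j = 0 ∨ A i j = -1
  nonneg : ∀ γ, 0 ≤ qN A γ
  pd : ∀ γ, qN A γ = 0 → γ = 0
  pos : ∀ γ : ι → ℤ, (∀ i, 0 ≤ γ i) → γ ≠ 0 → ∃ i, 0 < A.mulVec γ i

variable {A : Matrix ι ι ℤ} {e : ι → g}

lemma p_add (γ : ι → ℤ) (i j : ι) :
    A.mulVec (γ + Pi.single i 1) j = A.mulVec γ j + A j i := by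
  rw [Matrix.mulVec_add, Matrix.mulVec_single_one]; rfl

lemma p_sub (γ : ι → ℤ) (i j : ι) :
    A.mulVec (γ - Pi.single i 1) j = A.mulVec γ j - A j i := by
  rw [Matrix.mulVec_sub, Matrix.mulVec_single_one]; rfl

lemma SimplyLaced.qN_add (hA : SimplyLaced A) (γ : ι → ℤ) (i : ι) :
    qN A (γ + Pi.single i 1) = qN A γ + 2 * A.mulVec γ i + 2 := by
  have h1 : γ ⬝ᵥ A.col i = A.mulVec γ i := by
    simp only [dotProduct, Matrix.mulVec, Matrix.col]
    refine Finset.sum_congr rfl fun j _ => ?_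
    rw [Matrix.transpose_apply, hA.sym j i, mul_comm]
  rw [qN, qN, Matrix.mulVec_add, Matrix.mulVec_single_one, add_dotProduct, dotProduct_add,
    single_one_dotProduct, h1, Pi.add_apply, Matrix.col_apply, hA.two]
  ring

lemma SimplyLaced.qN_sub (hA : SimplyLaced A) (γ : ι → ℤ) (i : ι) :
    qN A (γ - Pi.single i 1) = qN A γ - 2 * A.mulVec γ i + 2 := by
  have h1 := hA.qN_add (γ - Pi.single i 1) i
  rw [sub_add_cancel, p_sub, hA.two] at h1
  omega

/-- The span of the words of content `γ`. -/
def G (e : ι → g) (γ : ι → ℤ) : Submodule ℂ g := Submodule.span ℂ {x | W e γ x}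

lemma G_step (i : ι) {γ : ι → ℤ} {x : g} (hx : x ∈ G e γ) :
    ⁅e i, x⁆ ∈ G e (γ + Pi.single i 1) := by
  have : G e γ ≤ (G e (γ + Pi.single i 1)).comap (LieAlgebra.ad ℂ g (e i)) := by
    rw [G, Submodule.span_le]
    intro y hy
    exact Submodule.subset_span (W.step i hy)
  exact this hx

lemma G_nonneg {γ : ι → ℤ} {x : g} (hx : x ∈ G e γ) (hx0 : x ≠ 0) : ∀ i, 0 ≤ γ i := by
  by_contra hneg
  apply hx0
  have : {x | W e γ x} = ∅ := by
    rw [Set.eq_empty_iff_forall_notMem]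
    intro y hy
    exact hneg hy.nonneg
  rw [G, this] at hx
  simpa using hx

lemma G_ht {γ : ι → ℤ} {x : g} (hx : x ∈ G e γ) (hx0 : x ≠ 0) : 1 ≤ ∑ i, γ i := by
  by_contra hneg
  apply hx0
  have : {x | W e γ x} = ∅ := by
    rw [Set.eq_empty_iff_forall_notMem]
    intro y hy
    exact hneg hy.one_le
  rw [G, this] at hx
  simpa using hx

lemma G_single {i : ι} {x : g} (hx : x ∈ G e (Pi.single i 1)) : ∃ c : ℂ, x = c • e i := by
  have : G e (Pi.single i 1) ≤ Submodule.span ℂ {e i} := by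
    rw [G, Submodule.span_le]
    intro y hy
    rw [W.single hy rfl]
    exact Submodule.mem_span_singleton_self _
  obtain ⟨c, hc⟩ := Submodule.mem_span_singleton.mp (this hx)
  exact ⟨c, hc.symm⟩

lemma G_one {γ : ι → ℤ} {x : g} (hx : x ∈ G e γ) (hx0 : x ≠ 0) (hs : ∑ i, γ i = 1) :
    ∃ i, γ = Pi.single i 1 := by
  by_contra hne
  apply hx0
  have : {x | W e γ x} = ∅ := by
    rw [Set.eq_empty_iff_forall_notMem]
    intro y hy
    exact hne (hy.eq_base hs)
  rw [G, this] at hx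
  simpa using hx

lemma SimplyLaced.p_single (hA : SimplyLaced A) (i k : ι) : A.mulVec (Pi.single k 1) i ≠ 1 := by
  rw [Matrix.mulVec_single_one, Matrix.col_apply]
  by_cases hik : i = k
  · subst hik; rw [hA.two]; norm_num
  · rcases hA.off i k hik with h | h <;> rw [h] <;> norm_num

lemma SimplyLaced.p_le (hA : SimplyLaced A) {γ : ι → ℤ} (hN : qN A γ = 2) (i : ι) :
    A.mulVec γ i ≤ 1 ∨ γ = Pi.single i 1 := by
  have h1 := hA.qN_sub γ i
  have h2 := hA.nonneg (γ - Pi.single i 1)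
  by_cases h3 : A.mulVec γ i ≤ 1
  · exact Or.inl h3
  · right
    exact sub_eq_zero.mp (hA.pd _ (by omega))

lemma SimplyLaced.exists_j (hA : SimplyLaced A) {γ : ι → ℤ} (hN : qN A γ = 2)
    (h0 : ∀ i, 0 ≤ γ i) (hs : 2 ≤ ∑ i, γ i) : ∃ j, A.mulVec γ j = 1 := by
  obtain ⟨j, hj⟩ := hA.pos γ h0 (by rintro rfl; simp at hs)
  refine ⟨j, ?_⟩
  rcases hA.p_le hN j with h | h
  · omega
  · rw [h] at hs; simp at hs

/-- The Serre relations in the simply-laced case, for one of the families `e` and `f`. -/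
structure SerreRel (A : Matrix ι ι ℤ) (e : ι → g) : Prop where
  s0 : ∀ i j, A i j = 0 → ⁅e i, e j⁆ = 0
  s1 : ∀ i j, A i j = -1 → ⁅e i, ⁅e i, e j⁆⁆ = 0

lemma SerreRel.comm (S : SerreRel A e) {i j : ι} (hij : A i j = 0) (z : g) :
    ⁅e i, ⁅e j, z⁆⁆ = ⁅e j, ⁅e i, z⁆⁆ := by
  rw [leibniz_lie, S.s0 i j hij, zero_lie, zero_add]

lemma SerreRel.adj (S : SerreRel A e) {i j : ι} (hij : A i j = -1) (z : g) :
    ⁅e i, ⁅e i, ⁅e j, z⁆⁆⁆ + ⁅e j, ⁅e i, ⁅e i, z⁆⁆⁆ = (2 : ℂ) • ⁅e i, ⁅e j, ⁅e i, z⁆⁆⁆ := by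
  have h : ⁅⁅e i, ⁅e i, e j⁆⁆, z⁆ = 0 := by rw [S.s1 i j hij, zero_lie]
  simp only [lie_lie, lie_sub, two_smul] at h ⊢
  rw [← sub_eq_zero, ← h]
  abel

/-- Words whose content is not a root vanish, and for a root `γ` with `⟨γ, αᵢ⟩ = 1` every word of
content `γ` may be rewritten to start with `e i`. -/
lemma words_main (hA : SimplyLaced A) (S : SerreRel A e) (n : ℕ) :
    (∀ γ x, ∑ i, γ i = (n : ℤ) → qN A γ ≠ 2 → x ∈ G e γ → x = 0) ∧
    (∀ γ i x, ∑ i, γ i = (n : ℤ) → 2 ≤ n → qN A γ = 2 → A.mulVec γ i = 1 → x ∈ G e γ →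
      ∃ y ∈ G e (γ - Pi.single i 1), x = ⁅e i, y⁆) := by
  induction n using Nat.strong_induction_on with
  | _ n ih =>
  have P1 : ∀ γ x, ∑ i, γ i < (n : ℤ) → qN A γ ≠ 2 → x ∈ G e γ → x = 0 := by
    intro γ x hs hN hx
    by_contra hx0
    have h1 := G_ht hx hx0
    exact hx0 ((ih (∑ i, γ i).toNat (by omega)).1 γ x (by omega) hN hx)
  have P3 : ∀ γ i x, ∑ i, γ i < (n : ℤ) → 2 ≤ ∑ i, γ i → qN A γ = 2 → A.mulVec γ i = 1 →
      x ∈ G e γ → ∃ y ∈ G e (γ - Pi.single i 1), x = ⁅e i, y⁆ := by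
    intro γ i x hs hs2 hN hp hx
    exact (ih (∑ i, γ i).toNat (by omega)).2 γ i x (by omega) (by omega) hN hp hx
  have hts : ∀ (γ : ι → ℤ) i, ∑ j, (γ + Pi.single i 1 : ι → ℤ) j = ∑ j, γ j + 1 := by
    intro γ i; simp [Finset.sum_add_distrib]
  have htd : ∀ (γ : ι → ℤ) i, ∑ j, (γ - Pi.single i 1 : ι → ℤ) j = ∑ j, γ j - 1 := by
    intro γ i; simp [Finset.sum_sub_distrib]
  constructor
  · intro γ x hs hN hx
    rw [← Submodule.mem_bot ℂ]
    refine (Submodule.span_le (p := ⊥)).mpr ?_ hx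
    intro w hw
    change w = 0
    cases hw with
    | base k =>
      exfalso; apply hN
      have := hA.qN_add 0 k
      simpa [qN] using this
    | @step i β x hw =>
      by_contra hne
      have hx0 : x ≠ 0 := by rintro rfl; simp at hne
      have hx : x ∈ G e β := Submodule.subset_span hw
      rw [hts] at hs
      have hNβ : qN A β = 2 := by
        by_contra hN'
        exact hx0 (P1 β x (by omega) hN' hx)
      have hpi : 0 ≤ A.mulVec β i := by
        have h1 := hA.qN_add β i
        have h2 := hA.nonneg (β + Pi.single i 1)
        by_contra hneg
        have h3 : qN A (β + Pi.single i 1) = 0 := by omega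
        have h4 := congrFun (hA.pd _ h3) i
        have h5 := hw.nonneg i
        simp at h4; omega
      apply hne
      clear hne hN
      by_cases hb1 : ∑ j, β j = 1
      · obtain ⟨k, rfl⟩ := G_one hx hx0 hb1
        rw [W.single hw rfl]
        by_cases hik : i = k
        · rw [hik, lie_self]
        · rw [Matrix.mulVec_single_one, Matrix.col_apply] at hpi
          apply S.s0
          rcases hA.off i k hik with h | h
          · exact h
          · omega
      have hb2 : 2 ≤ ∑ j, β j := by have := hw.one_le; omega
      obtain ⟨j, hj⟩ := hA.exists_j hNβ hw.nonneg hb2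
      obtain ⟨y, hy, rfl⟩ := P3 β j x (by omega) hb2 hNβ hj hx
      obtain ⟨β', rfl⟩ : ∃ β', β = β' + Pi.single j 1 := ⟨β - Pi.single j 1, by simp⟩
      rw [add_sub_cancel_right] at hy
      clear hw hx
      rw [hts] at hs hb1 hb2
      have hNb' : qN A β' = 2 := by
        have h1 := hA.qN_add β' j
        rw [p_add, hA.two] at hj
        omega
      rw [p_add] at hj hpi
      rw [hA.two] at hj
      by_cases hy0 : y = 0
      · simp [hy0]
      by_cases hij : i = j
      · subst hij
        by_cases hb1' : ∑ j, β' j = 1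
        · obtain ⟨k, rfl⟩ := G_one hy hy0 hb1'
          obtain ⟨c, rfl⟩ := G_single hy
          have : A i k = -1 := by
            rw [Matrix.mulVec_single_one, Matrix.col_apply] at hj
            omega
          simp [S.s1 i k this]
        obtain ⟨k, hk⟩ := hA.exists_j hNb' (G_nonneg hy hy0) (by omega)
        obtain ⟨z, hz, rfl⟩ := P3 β' k y (by omega) (by omega) hNb' hk hy
        obtain ⟨β'', rfl⟩ : ∃ β'', β' = β'' + Pi.single k 1 := ⟨β' - Pi.single k 1, by simp⟩
        rw [add_sub_cancel_right] at hz
        rw [hts] at hs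
        have hik : i ≠ k := by rintro rfl; omega
        have hNb'' : qN A β'' = 2 := by
          have h1 := hA.qN_add β'' k
          rw [p_add, hA.two] at hk
          omega
        rw [p_add] at hj
        rcases hA.off i k hik with h | h
        · rw [S.comm h, S.comm h, P1 (β'' + Pi.single i 1 + Pi.single i 1) ⁅e i, ⁅e i, z⁆⁆ _ _
            (G_step i (G_step i hz)), lie_zero]
          · rw [hts, hts]; omega
          · rw [hA.qN_add, hA.qN_add, p_add, hA.two]; omega
        · have h0 := P1 (β'' + Pi.single i 1) ⁅e i, z⁆ (by rw [hts]; omega)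
            (by rw [hA.qN_add]; omega) (G_step i hz)
          have := S.adj h z
          rw [h0] at this
          simpa using this
      · rcases hA.off i j hij with h | h
        · rw [S.comm h, P1 (β' + Pi.single i 1) ⁅e i, y⁆ (by rw [hts]; omega)
            (by rw [hA.qN_add]; omega) (G_step i hy), lie_zero]
        · rw [h] at hpi
          rcases hA.p_le hNb' i with hp | rfl
          · have hp1 : A.mulVec β' i = 1 := by omega
            have hb1' : ∑ j, β' j ≠ 1 := by
              intro hb1'
              obtain ⟨k, rfl⟩ := G_one hy hy0 hb1'
              exact hA.p_single i k hp1
            obtain ⟨z, hz, rfl⟩ := P3 β' i y (by omega) (by omega) hNb' hp1 hy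
            have h1 := P1 (β' + Pi.single i 1) ⁅e i, ⁅e i, z⁆⁆ (by rw [hts]; omega)
              (by rw [hA.qN_add]; omega) (G_step i hy)
            have h2 := P1 (β' - Pi.single i 1 + Pi.single j 1) ⁅e j, z⁆
              (by rw [hts, htd]; omega)
              (by
                rw [hA.qN_add, hA.qN_sub, p_sub, hA.sym j i]
                omega) (G_step j hz)
            have := S.adj h z
            rw [h1, h2] at this
            simp only [lie_zero, add_zero] at this
            exact (smul_eq_zero.mp this.symm).resolve_left two_ne_zero
          · obtain ⟨c, rfl⟩ := G_single hy
            rw [lie_smul, lie_smul, ← lie_skew (e j) (e i), lie_neg, S.s1 i j h]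
            simp
  · intro γ i x hs hn hN hp hx
    suffices h : G e γ ≤ (G e (γ - Pi.single i 1)).map (LieAlgebra.ad ℂ g (e i)) by
      obtain ⟨y, hy, hyx⟩ := h hx
      exact ⟨y, hy, hyx.symm⟩
    rw [G, Submodule.span_le]
    clear hx x
    intro w hw
    cases hw with
    | base k => simp at hs; omega
    | @step j β x hw =>
      have hx : x ∈ G e β := Submodule.subset_span hw
      by_cases hx0 : x = 0
      · rw [hx0, lie_zero]; exact zero_mem _
      by_cases hij : i = j
      · subst hij
        rw [add_sub_cancel_right]
        exact ⟨x, hx, rfl⟩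
      rw [hts] at hs
      have hNβ : qN A β = 2 := by
        by_contra hN'
        exact hx0 (P1 β x (by omega) hN' hx)
      have hpj : A.mulVec β j = -1 := by
        rw [hA.qN_add] at hN; omega
      rw [p_add] at hp
      rcases hA.off i j hij with h | h
      · have hp1 : A.mulVec β i = 1 := by omega
        have hb1' : ∑ j, β j ≠ 1 := by
          intro hb1'
          obtain ⟨k, rfl⟩ := G_one hx hx0 hb1'
          exact hA.p_single i k hp1
        obtain ⟨z, hz, rfl⟩ := P3 β i x (by omega) (by omega) hNβ hp1 hx
        refine ⟨⁅e j, z⁆, ?_, ?_⟩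
        · have := G_step j hz
          rwa [show β - Pi.single i 1 + Pi.single j 1 = β + Pi.single j 1 - Pi.single i 1 by abel]
            at this
        · exact S.comm h z
      · have hp2 : A.mulVec β i = 2 := by omega
        have hb : β = Pi.single i 1 := (hA.p_le hNβ i).resolve_left (by omega)
        subst hb
        rw [W.single hw rfl, add_sub_cancel_left]
        refine ⟨-e j, neg_mem (Submodule.subset_span (W.base j)), ?_⟩
        rw [LieAlgebra.ad_apply, lie_neg, lie_skew]

lemma words_vanish (hA : SimplyLaced A) (S : SerreRel A e) {γ : ι → ℤ} {x : g} (hw : W e γ x)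
    (hN : qN A γ ≠ 2) : x = 0 :=
  (words_main hA S (∑ i, γ i).toNat).1 γ x (by have := hw.one_le; omega) hN
    (Submodule.subset_span hw)

/-- The words of given content span at most a line. -/
lemma G_finrank (hA : SimplyLaced A) (S : SerreRel A e) (n : ℕ) : ∀ γ, ∑ i, γ i = (n : ℤ) →
    ∃ v, G e γ ≤ Submodule.span ℂ {v} := by
  induction n with
  | zero =>
    intro γ hs
    refine ⟨0, ?_⟩
    intro x hx
    by_contra hne
    have := G_ht hx (by rintro rfl; exact hne (zero_mem _))
    simp at hs; omega
  | succ n ih =>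
    intro γ hs
    by_cases hbot : G e γ = ⊥
    · exact ⟨0, by rw [hbot]; exact bot_le⟩
    obtain ⟨x, hx, hx0⟩ := (Submodule.ne_bot_iff _).mp hbot
    have hN : qN A γ = 2 := by
      by_contra hN
      exact hx0 ((words_main hA S (n + 1)).1 γ x (by exact_mod_cast hs) hN hx)
    by_cases hn : n = 0
    · subst hn
      obtain ⟨i, rfl⟩ := G_one hx hx0 (by simpa using hs)
      refine ⟨e i, fun y hy => ?_⟩
      obtain ⟨c, rfl⟩ := G_single hy
      exact Submodule.smul_mem _ _ (Submodule.mem_span_singleton_self _)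
    obtain ⟨j, hj⟩ := hA.exists_j hN (G_nonneg hx hx0) (by rw [hs]; push_cast; omega)
    obtain ⟨v, hv⟩ := ih (γ - Pi.single j 1) (by simp [Finset.sum_sub_distrib, hs])
    refine ⟨⁅e j, v⁆, fun y hy => ?_⟩
    obtain ⟨z, hz, rfl⟩ := (words_main hA S (n + 1)).2 γ j y (by exact_mod_cast hs) (by omega) hN hj hy
    obtain ⟨c, rfl⟩ := Submodule.mem_span_singleton.mp (hv hz)
    rw [lie_smul]
    exact Submodule.smul_mem _ _ (Submodule.mem_span_singleton_self _)

/-- If `R` contains the simple roots and is closed under adding a simple root whenever the result is a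
root, then the words span a space of dimension at most the size of `R`. -/
lemma words_finrank (hA : SimplyLaced A) (S : SerreRel A e) (R : Finset (ι → ℤ))
    (h1 : ∀ i, Pi.single i 1 ∈ R)
    (h2 : ∀ γ ∈ R, ∀ i, qN A (γ + Pi.single i 1) = 2 → γ + Pi.single i 1 ∈ R) :
    ∃ T : Finset g, T.card ≤ R.card ∧ ∀ γ w, W e γ w → w ∈ Submodule.span ℂ (T : Set g) := by
  classical
  have h3 : ∀ γ, ∃ v, γ ∈ R → G e γ ≤ Submodule.span ℂ {v} := by
    intro γ
    by_cases hγ : 0 ≤ ∑ i, γ i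
    · obtain ⟨v, hv⟩ := G_finrank hA S (∑ i, γ i).toNat γ (by omega)
      exact ⟨v, fun _ => hv⟩
    · refine ⟨0, fun _ x hx => ?_⟩
      by_contra hne
      have := G_ht hx (by rintro rfl; exact hne (zero_mem _))
      omega
  choose v hv using h3
  refine ⟨R.image v, Finset.card_image_le, ?_⟩
  have key : ∀ γ w, W e γ w → w = 0 ∨ γ ∈ R := by
    intro γ w hw
    induction hw with
    | base i => exact Or.inr (h1 i)
    | @step i γ x hw ih =>
      rcases ih with rfl | ih
      · left; simp
      by_cases hN : qN A (γ + Pi.single i 1) = 2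
      · exact Or.inr (h2 γ ih i hN)
      · exact Or.inl (words_vanish hA S (hw.step i) hN)
  intro γ w hw
  rcases key γ w hw with rfl | hγ
  · exact zero_mem _
  · refine Submodule.span_mono ?_ (hv γ hγ (Submodule.subset_span hw))
    simpa using ⟨γ, hγ, rfl⟩

end SimplyLaced

/-! ### The Cartan matrices `E₆` and `F₄` -/

section Matrices

lemma E6_mulVec (γ : Fin 6 → ℤ) : E₆.mulVec γ =
    ![2 * γ 0 - γ 2, 2 * γ 1 - γ 3, -γ 0 + 2 * γ 2 - γ 3, -γ 1 - γ 2 + 2 * γ 3 - γ 4,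
      -γ 3 + 2 * γ 4 - γ 5, -γ 4 + 2 * γ 5] := by
  ext i
  fin_cases i <;> simp [E₆, Matrix.mulVec, dotProduct, Fin.sum_univ_succ] <;> ring_nf

lemma F4_mulVec (γ : Fin 4 → ℤ) : F₄.mulVec γ =
    ![2 * γ 0 - γ 1, -γ 0 + 2 * γ 1 - 2 * γ 2, -γ 1 + 2 * γ 2 - γ 3, -γ 2 + 2 * γ 3] := by
  ext i
  fin_cases i <;> simp [F₄, Matrix.mulVec, dotProduct, Fin.sum_univ_succ] <;> ring_nf

lemma E6_pos (γ : Fin 6 → ℤ) (h0 : ∀ i, 0 ≤ γ i) (hne : γ ≠ 0) : ∃ i, 0 < E₆.mulVec γ i := by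
  by_contra! hall
  rw [E6_mulVec] at hall
  apply hne
  have a0 := hall 0; have a1 := hall 1; have a2 := hall 2
  have a3 := hall 3; have a4 := hall 4; have a5 := hall 5
  have b0 := h0 0; have b1 := h0 1; have b2 := h0 2
  have b3 := h0 3; have b4 := h0 4; have b5 := h0 5
  simp at a0 a1 a2 a3 a4 a5
  ext i
  fin_cases i <;> simp <;> omega

lemma F4_pos (γ : Fin 4 → ℤ) (h0 : ∀ i, 0 ≤ γ i) (hne : γ ≠ 0) : ∃ i, 0 < F₄.mulVec γ i := by
  by_contra! hall
  rw [F4_mulVec] at hall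
  apply hne
  have a0 := hall 0; have a1 := hall 1; have a2 := hall 2; have a3 := hall 3
  have b0 := h0 0; have b1 := h0 1; have b2 := h0 2; have b3 := h0 3
  simp at a0 a1 a2 a3
  ext i
  fin_cases i <;> simp <;> omega

lemma F4_finType : FinType F₄ where
  two := by decide
  det := by
    intro h
    obtain ⟨v, hv, h0⟩ := Matrix.exists_mulVec_eq_zero_iff.mpr h
    clear h
    apply hv
    rw [F4_mulVec] at h0
    have a0 := congrFun h0 0; have a1 := congrFun h0 1; have a2 := congrFun h0 2
    have a3 := congrFun h0 3
    simp at a0 a1 a2 a3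
    ext i
    fin_cases i <;> simp <;> omega
  pos := F4_pos
  conn := by
    rintro P ⟨i, hi⟩ h
    have e01 : P 0 ↔ P 1 := ⟨fun hp => h 0 1 hp (by decide), fun hp => h 1 0 hp (by decide)⟩
    have e12 : P 1 ↔ P 2 := ⟨fun hp => h 1 2 hp (by decide), fun hp => h 2 1 hp (by decide)⟩
    have e23 : P 2 ↔ P 3 := ⟨fun hp => h 2 3 hp (by decide), fun hp => h 3 2 hp (by decide)⟩
    clear h
    have h0 : P 0 := by fin_cases i <;> simp at hi <;> tauto
    intro j
    fin_cases j <;> simp <;> tauto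

/-- The quadratic form of `E₆` as a sum of squares, which shows that it is positive definite. -/
lemma E6_qN (γ : Fin 6 → ℤ) : 6 * qN E₆ γ = 3 * (2 * γ 0 - γ 2) ^ 2 + (3 * γ 2 - 2 * γ 3) ^ 2 +
    3 * (2 * γ 5 - γ 4) ^ 2 + (3 * γ 4 - 2 * γ 3) ^ 2 + 3 * (2 * γ 1 - γ 3) ^ 2 + γ 3 ^ 2 := by
  rw [qN, E6_mulVec]
  simp [dotProduct, Fin.sum_univ_succ]
  ring_nf

lemma E6_finType : FinType E₆ where
  two := by decide
  det := by
    intro h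
    obtain ⟨v, hv, h0⟩ := Matrix.exists_mulVec_eq_zero_iff.mpr h
    clear h
    apply hv
    rw [E6_mulVec] at h0
    have a0 := congrFun h0 0; have a1 := congrFun h0 1; have a2 := congrFun h0 2
    have a3 := congrFun h0 3; have a4 := congrFun h0 4; have a5 := congrFun h0 5
    simp at a0 a1 a2 a3 a4 a5
    ext i
    fin_cases i <;> simp <;> omega
  pos := E6_pos
  conn := by
    rintro P ⟨i, hi⟩ h
    have e02 : P 0 ↔ P 2 := ⟨fun hp => h 0 2 hp (by decide), fun hp => h 2 0 hp (by decide)⟩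
    have e23 : P 2 ↔ P 3 := ⟨fun hp => h 2 3 hp (by decide), fun hp => h 3 2 hp (by decide)⟩
    have e13 : P 1 ↔ P 3 := ⟨fun hp => h 1 3 hp (by decide), fun hp => h 3 1 hp (by decide)⟩
    have e34 : P 3 ↔ P 4 := ⟨fun hp => h 3 4 hp (by decide), fun hp => h 4 3 hp (by decide)⟩
    have e45 : P 4 ↔ P 5 := ⟨fun hp => h 4 5 hp (by decide), fun hp => h 5 4 hp (by decide)⟩
    clear h
    have h0 : P 0 := by fin_cases i <;> simp at hi <;> tauto
    intro j
    fin_cases j <;> simp <;> tauto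

lemma E6_simplyLaced : SimplyLaced E₆ where
  two := by decide
  sym i j := by fin_cases i <;> fin_cases j <;> rfl
  off i j hij := by fin_cases i <;> fin_cases j <;> first | exact absurd rfl hij | decide
  nonneg γ := by
    have := E6_qN γ
    have : 0 ≤ 6 * qN E₆ γ := by rw [this]; positivity
    omega
  pd γ hN := by
    have h := E6_qN γ
    rw [hN] at h
    have s0 := sq_nonneg (2 * γ 0 - γ 2); have s1 := sq_nonneg (3 * γ 2 - 2 * γ 3)
    have s2 := sq_nonneg (2 * γ 5 - γ 4); have s3 := sq_nonneg (3 * γ 4 - 2 * γ 3)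
    have s4 := sq_nonneg (2 * γ 1 - γ 3); have s5 := sq_nonneg (γ 3)
    have t0 : (2 * γ 0 - γ 2) ^ 2 = 0 := by omega
    have t1 : (3 * γ 2 - 2 * γ 3) ^ 2 = 0 := by omega
    have t2 : (2 * γ 5 - γ 4) ^ 2 = 0 := by omega
    have t3 : (3 * γ 4 - 2 * γ 3) ^ 2 = 0 := by omega
    have t4 : (2 * γ 1 - γ 3) ^ 2 = 0 := by omega
    have t5 : (γ 3) ^ 2 = 0 := by omega
    rw [sq_eq_zero_iff] at t0 t1 t2 t3 t4 t5
    ext i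
    fin_cases i <;> simp <;> omega
  pos := E6_pos

/-- The positive roots of `E₆` in the basis of simple roots. -/
def posList : List (Fin 6 → ℤ) := [
  ![1,0,0,0,0,0], ![0,1,0,0,0,0], ![0,0,1,0,0,0], ![0,0,0,1,0,0], ![0,0,0,0,1,0],
  ![0,0,0,0,0,1], ![1,0,1,0,0,0], ![0,1,0,1,0,0], ![0,0,1,1,0,0], ![0,0,0,1,1,0],
  ![0,0,0,0,1,1], ![1,0,1,1,0,0], ![0,1,1,1,0,0], ![0,1,0,1,1,0], ![0,0,1,1,1,0],
  ![0,0,0,1,1,1], ![1,1,1,1,0,0], ![1,0,1,1,1,0], ![0,1,1,1,1,0], ![0,1,0,1,1,1],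
  ![0,0,1,1,1,1], ![1,1,1,1,1,0], ![1,0,1,1,1,1], ![0,1,1,2,1,0], ![0,1,1,1,1,1],
  ![1,1,1,2,1,0], ![1,1,1,1,1,1], ![0,1,1,2,1,1], ![1,1,2,2,1,0], ![1,1,1,2,1,1],
  ![0,1,1,2,2,1], ![1,1,2,2,1,1], ![1,1,1,2,2,1], ![1,1,2,2,2,1], ![1,1,2,3,2,1],
  ![1,2,2,3,2,1]]

/-- The positive roots of `E₆` as a finite set. -/
def posRoots : Finset (Fin 6 → ℤ) := posList.toFinset

lemma posRoots_simple (i : Fin 6) : Pi.single i 1 ∈ posRoots := by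
  have : ∀ i, Pi.single i 1 ∈ posList := by decide +kernel
  exact List.mem_toFinset.mpr (this i)

lemma E6_qN_half (γ : Fin 6 → ℤ) (hq : qN E₆ γ = 2) :
    γ 0 * (γ 0 - γ 2) + γ 1 * (γ 1 - γ 3) + γ 2 * (γ 2 - γ 3) + γ 3 * (γ 3 - γ 4) +
      γ 4 * (γ 4 - γ 5) + γ 5 * γ 5 = 1 := by
  rw [qN, E6_mulVec] at hq
  simp [dotProduct, Fin.sum_univ_succ] at hq
  linarith

/-- The list `posList` is closed under adding a simple root whenever the result is a root. The form
`qN / 2` is written out so that the statement can be decided by evaluation. -/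
lemma posRoots_step' : ∀ γ ∈ posList, ∀ i, γ + Pi.single i 1 ∉ posList →
    (fun γ : Fin 6 → ℤ => γ 0 * (γ 0 - γ 2) + γ 1 * (γ 1 - γ 3) + γ 2 * (γ 2 - γ 3) +
      γ 3 * (γ 3 - γ 4) + γ 4 * (γ 4 - γ 5) + γ 5 * γ 5) (γ + Pi.single i 1) ≠ 1 := by
  decide +kernel

lemma posRoots_step (γ : Fin 6 → ℤ) (hγ : γ ∈ posRoots) (i : Fin 6)
    (hq : qN E₆ (γ + Pi.single i 1) = 2) : γ + Pi.single i 1 ∈ posRoots := by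
  by_contra hn
  exact posRoots_step' γ (List.mem_toFinset.mp hγ) i
    (fun hm => hn (List.mem_toFinset.mpr hm)) (E6_qN_half _ hq)

lemma posRoots_card : posRoots.card ≤ 36 := List.toFinset_card_le posList

end Matrices

section E6

lemma serreRel_E : SerreRel E₆ (sE E₆) where
  s0 i j hij := by simpa [hij] using serre_adE E₆ i j
  s1 i j hij := by simpa [hij] using serre_adE E₆ i j

lemma serreRel_F : SerreRel E₆ (sF E₆) where
  s0 i j hij := by simpa [hij] using serre_adF E₆ i j
  s1 i j hij := by simpa [hij] using serre_adF E₆ i j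

lemma e6_span : ∃ T : Finset (LieAlgebra.e₆ ℂ), T.card ≤ 78 ∧
    Submodule.span ℂ (T : Set (LieAlgebra.e₆ ℂ)) = ⊤ := by
  classical
  obtain ⟨T, hT, hT'⟩ := words_finrank E6_simplyLaced serreRel_E posRoots posRoots_simple
    posRoots_step
  obtain ⟨T', hU, hU'⟩ := words_finrank E6_simplyLaced serreRel_F posRoots posRoots_simple
    posRoots_step
  have hc := posRoots_card
  refine ⟨T ∪ T' ∪ Finset.univ.image (sH E₆), ?_, ?_⟩
  · have h1 := Finset.card_union_le (T ∪ T') (Finset.univ.image (sH E₆))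
    have h2 := Finset.card_union_le T T'
    have h3 : (Finset.univ.image (sH E₆)).card ≤ 6 := Finset.card_image_le
    omega
  · rw [eq_top_iff, ← tri_top (serre_isChev E₆) (serre_generates E₆), Submodule.span_le]
    rintro x ((⟨γ, hx⟩ | ⟨γ, hx⟩) | ⟨i, rfl⟩)
    · refine Submodule.span_mono ?_ (hT' γ x hx)
      intro y hy; simp at hy ⊢; tauto
    · refine Submodule.span_mono ?_ (hU' γ x hx)
      intro y hy; simp at hy ⊢; tauto
    · refine Submodule.subset_span ?_
      simp

instance e6_finite : FiniteDimensional ℂ (LieAlgebra.e₆ ℂ) := by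
  obtain ⟨T, -, hT⟩ := e6_span
  exact ⟨⟨T, hT⟩⟩

lemma e6_finrank : finrank ℂ (LieAlgebra.e₆ ℂ) ≤ 78 := by
  obtain ⟨T, hT, hT'⟩ := e6_span
  have := finrank_span_finset_le_card (R := ℂ) T
  rw [Set.finrank, hT', finrank_top] at this
  exact this.trans hT

end E6

/-! ### Simple reflections lifted to automorphisms -/

section Reflections
variable {g : Type*} [LieRing g] [LieAlgebra ℂ g] [FiniteDimensional ℂ g]

/-- If `⁅u, y⁆ = c • y` with `c ≠ 0` then `ad y` is nilpotent: its nonzero powers are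
eigenvectors, for distinct eigenvalues, of the commutator with `ad u`. -/
lemma ad_nilpotent {u y : g} {c : ℂ} (hc : c ≠ 0) (hy : ⁅u, y⁆ = c • y) :
    IsNilpotent (LieAlgebra.ad ℂ g y) := by
  set D := LieAlgebra.ad ℂ g y
  set H := LieAlgebra.ad ℂ g u
  have h0 : H * D - D * H = c • D := by
    ext x
    simp only [D, H, LinearMap.sub_apply, Module.End.mul_apply, LieAlgebra.ad_apply,
      LinearMap.smul_apply]
    rw [leibniz_lie, hy, smul_lie]; abel
  have h1 : ∀ n : ℕ, H * D ^ n - D ^ n * H = (n * c) • D ^ n := by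
    intro n
    induction n with
    | zero => simp
    | succ n ih =>
      have : H * D ^ (n + 1) - D ^ (n + 1) * H =
          (H * D ^ n - D ^ n * H) * D + D ^ n * (H * D - D * H) := by
        rw [pow_succ]; noncomm_ring
      rw [this, ih, h0, smul_mul_assoc, mul_smul_comm, ← pow_succ, ← add_smul]
      congr 1; push_cast; ring
  by_contra hne
  have hne' : ∀ n : ℕ, D ^ n ≠ 0 := fun n hn => hne ⟨n, hn⟩
  let Φ : End ℂ (End ℂ g) := LinearMap.mulLeft ℂ H - LinearMap.mulRight ℂ H
  have hs : (Set.range <| fun (n : ℕ) ↦ (n * c : ℂ)).Infinite := by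
    rw [Set.infinite_range_iff (fun n m ↦ by simp [hc])]; infer_instance
  refine hs (Set.Finite.subset (Module.End.finite_hasEigenvalue Φ) ?_)
  rintro _ ⟨n, rfl⟩
  exact Module.End.hasEigenvalue_of_hasEigenvector (x := D ^ n)
    ⟨by rw [Module.End.mem_eigenspace_iff]; exact h1 n, hne' n⟩

lemma symm_stable (X : g ≃ₗ⁅ℂ⁆ g) (U : Submodule ℂ g) (hU : ∀ x ∈ U, X x ∈ U) (x : g)
    (hx : x ∈ U) : X.symm x ∈ U := by
  have h1 : U.map (X : g →ₗ[ℂ] g) = U := by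
    apply Submodule.eq_of_le_of_finrank_le
    · rintro _ ⟨y, hy, rfl⟩; exact hU y hy
    · exact (LinearEquiv.finrank_map_eq X.toLinearEquiv U).ge
  rw [← h1] at hx
  obtain ⟨y, hy, rfl⟩ := hx
  have : X.symm (X y) = y := X.symm_apply_apply y
  rw [show (X : g →ₗ[ℂ] g) y = X y from rfl, this]
  exact hy

/-- The exponential of `ad y`, with its action on vectors killed by a small power of `ad y`. -/
lemma exists_exp {y : g} (hy : IsNilpotent (LieAlgebra.ad ℂ g y)) :
    ∃ X : g ≃ₗ⁅ℂ⁆ g, (∀ x, ⁅y, ⁅y, ⁅y, x⁆⁆⁆ = 0 → X x = x + ⁅y, x⁆ + (2⁻¹ : ℂ) • ⁅y, ⁅y, x⁆⁆) ∧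
      ∀ U : Submodule ℂ g, (∀ x ∈ U, ⁅y, x⁆ ∈ U) → ∀ x ∈ U, X x ∈ U := by
  let _ : Module ℚ g := Module.compHom g (algebraMap ℚ ℂ)
  have hq : ∀ (q : ℚ) (x : g), q • x = (q : ℂ) • x := fun q x => rfl
  let _ : LieAlgebra ℚ g := { lie_smul := fun q x z => by rw [hq, hq, lie_smul] }
  let D : LieDerivation ℂ g g := -LieDerivation.inner ℂ g g y
  have hD : D.toLinearMap = LieAlgebra.ad ℂ g y := by
    ext x
    change -⁅x, y⁆ = ⁅y, x⁆
    rw [lie_skew]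
  have hN : IsNilpotent D.toLinearMap := by rwa [hD]
  have hexp : ∀ x, LieDerivation.exp D hN x = IsNilpotent.exp (LieAlgebra.ad ℂ g y) x := by
    intro x
    rw [LieDerivation.exp_map_apply, hD]
  refine ⟨LieDerivation.exp D hN, ?_, ?_⟩
  · intro x hx
    rw [hexp]
    have := IsNilpotent.exp_smul_eq_sum (a := LieAlgebra.ad ℂ g y) (m := x) (k := 3)
      (by simpa [pow_succ] using hx) hy
    rw [Module.End.smul_def] at this
    rw [this]
    simp [Finset.sum_range_succ, pow_succ, hq]
  · intro U hU x hx
    rw [hexp]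
    obtain ⟨k, hk⟩ := hy
    rw [IsNilpotent.exp_eq_sum hk, LinearMap.sum_apply]
    refine Submodule.sum_mem _ fun i _ => ?_
    have : ∀ i : ℕ, ((LieAlgebra.ad ℂ g y) ^ i) x ∈ U := by
      intro i
      induction i with
      | zero => simpa using hx
      | succ i ih => rw [pow_succ', Module.End.mul_apply]; exact hU _ ih
    rw [LinearMap.smul_apply, hq]
    exact U.smul_mem _ (this i)

variable {ι : Type*} {A : Matrix ι ι ℤ} {h e f : ι → g}

/-- The simple reflection `s_i` on weights. -/
def sr (A : Matrix ι ι ℤ) (i : ι) (l : ι → ℤ) : ι → ℤ := l - l i • A.col i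

lemma sr_apply (i j : ι) (l : ι → ℤ) : sr A i l j = l j - l i * A j i := by
  simp [sr, Matrix.col]

lemma sr_sr (hA : ∀ i, A i i = 2) (i : ι) (l : ι → ℤ) : sr A i (sr A i l) = l := by
  ext j; simp [sr_apply, hA]; ring

/-- A lift of the simple reflection `s_i` to an automorphism of the Lie algebra. -/
structure IsRefl (A : Matrix ι ι ℤ) (h e f : ι → g) (i : ι) (n : g ≃ₗ⁅ℂ⁆ g) : Prop where
  map_h : ∀ j, n (h j) = h j - (A j i : ℂ) • h i
  stable : ∀ U : Submodule ℂ g, (∀ x ∈ U, ⁅e i, x⁆ ∈ U) → (∀ x ∈ U, ⁅f i, x⁆ ∈ U) →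
    ∀ x ∈ U, n x ∈ U
  fix : ∀ x, ⁅e i, x⁆ = 0 → ⁅f i, x⁆ = 0 → n x = x

/-- The automorphism `exp (ad e) ∘ exp (-ad f) ∘ exp (ad e)` lifts the simple reflection. -/
lemma exists_refl (C : IsChev A h e f) (hA : ∀ i, A i i = 2) (i : ι) :
    ∃ n : g ≃ₗ⁅ℂ⁆ g, IsRefl A h e f i n := by
  obtain ⟨X, hX, hXU⟩ := exists_exp (ad_nilpotent (u := h i) (y := e i) two_ne_zero
    (by rw [C.he, hA]; simp))
  obtain ⟨Y, hY, hYU⟩ := exists_exp (y := -f i) (ad_nilpotent (u := h i) (c := -2) (by simp)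
    (by rw [lie_neg, C.hf, hA]; simp))
  have eh : ∀ j, ⁅e i, h j⁆ = -((A j i : ℂ) • e i) := fun j => by rw [← lie_skew, C.he]
  have fh : ∀ j, ⁅f i, h j⁆ = (A j i : ℂ) • f i := fun j => by rw [← lie_skew, C.hf, neg_neg]
  have fe : ⁅f i, e i⁆ = -h i := by rw [← lie_skew, C.ef]
  have Xh : ∀ j, X (h j) = h j - (A j i : ℂ) • e i := fun j => by
    rw [hX _ (by simp [eh])]; simp [eh]; abel
  have Xe : X (e i) = e i := by rw [hX _ (by simp)]; simp
  have Yh : ∀ j, Y (h j) = h j - (A j i : ℂ) • f i := fun j => by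
    rw [hY _ (by simp [fh])]; simp [fh]; abel
  have Ye : Y (e i) = e i + h i - f i := by
    rw [hY _ (by simp [fe, fh])]
    simp [fe, fh, hA]; abel
  refine ⟨(X.trans Y).trans X, ⟨fun j => ?_, fun U hE hF x hx => ?_, fun x hE hF => ?_⟩⟩
  · change X (Y (X (h j))) = _
    rw [Xh, map_sub, map_smul, Yh, Ye, map_sub, map_sub, map_smul, map_smul, map_sub, map_add,
      Xh, Xh, Xe, hA]
    push_cast
    module
  · exact hXU U hE _ (hYU U (fun y hy => by rw [neg_lie]; exact neg_mem (hF y hy)) _ (hXU U hE _ hx))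
  · change X (Y (X x)) = x
    rw [hX x (by simp [hE]), hE]
    simp only [add_zero, lie_zero, smul_zero]
    rw [hY x (by simp [hF]), neg_lie, hF]
    simp only [add_zero, lie_zero, smul_zero, neg_zero]
    rw [hX x (by simp [hE]), hE]
    simp

variable {i : ι} {n : g ≃ₗ⁅ℂ⁆ g}

lemma IsRefl.stable' (R : IsRefl A h e f i n) {U : Submodule ℂ g} (hE : ∀ x ∈ U, ⁅e i, x⁆ ∈ U)
    (hF : ∀ x ∈ U, ⁅f i, x⁆ ∈ U) {x : g} (hx : x ∈ U) : n.symm x ∈ U :=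
  symm_stable n U (R.stable U hE hF) x hx

lemma IsRefl.map_wt (R : IsRefl A h e f i n) (hA : ∀ i, A i i = 2) {l : ι → ℤ} {x : g}
    (hx : x ∈ wt h l) : n x ∈ wt h (sr A i l) := fun j => by
  have h1 : h j = n (h j - (A j i : ℂ) • h i) := by
    rw [map_sub, map_smul, R.map_h, R.map_h, hA]; push_cast; module
  have h2 := LieEquiv.map_lie n (h j - (A j i : ℂ) • h i) x
  rw [← h1] at h2
  rw [← h2, sub_lie, smul_lie, hx j, hx i, map_sub, map_smul, map_smul, map_smul, sr_apply]
  push_cast; module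

lemma IsRefl.symm_wt (R : IsRefl A h e f i n) {l : ι → ℤ} {x : g}
    (hx : x ∈ wt h l) : n.symm x ∈ wt h (sr A i l) := fun j => by
  have h1 : h j = n.symm (n (h j)) := (n.symm_apply_apply _).symm
  have h2 := LieEquiv.map_lie n.symm (n (h j)) x
  rw [← h1] at h2
  rw [← h2, R.map_h, sub_lie, smul_lie, hx j, hx i, map_sub, map_smul, map_smul, map_smul,
    sr_apply]
  push_cast; module

end Reflections

/-! ### Stable subspaces and the root combinatorics of `F₄` -/

section Stable
variable {ι g : Type*} [LieRing g] [LieAlgebra ℂ g]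

/-- A subspace stable under the adjoint action of the Chevalley generators. -/
structure Stable (e f : ι → g) (U : Submodule ℂ g) : Prop where
  e : ∀ i, ∀ x ∈ U, ⁅e i, x⁆ ∈ U
  f : ∀ i, ∀ x ∈ U, ⁅f i, x⁆ ∈ U

/-- `l` is a weight of `U`. -/
def HasWt (h : ι → g) (U : Submodule ℂ g) (l : ι → ℤ) : Prop := ∃ x ∈ U, x ≠ 0 ∧ x ∈ wt h l

variable {A : Matrix ι ι ℤ} {h e f : ι → g} {U : Submodule ℂ g}

lemma IsChev.lie_h (C : IsChev A h e f) (i : ι) (x : g) :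
    ⁅h i, x⁆ = ⁅e i, ⁅f i, x⁆⁆ - ⁅f i, ⁅e i, x⁆⁆ := by
  rw [← C.ef, lie_lie]

lemma Stable.hst (S : Stable e f U) (C : IsChev A h e f) (i : ι) (x : g) (hx : x ∈ U) :
    ⁅h i, x⁆ ∈ U := by
  rw [C.lie_h]
  exact sub_mem (S.e i _ (S.f i _ hx)) (S.f i _ (S.e i _ hx))

lemma Stable.symm (S : Stable e f U) : Stable f e U := ⟨S.f, S.e⟩

variable [FiniteDimensional ℂ g]

lemma HasWt.finrank {l : ι → ℤ} (H : HasWt h U l) : 1 ≤ finrank ℂ ↥(U ⊓ wt h l) := by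
  obtain ⟨x, hx, hx0, hxl⟩ := H
  exact Submodule.one_le_finrank_iff.mpr fun hb => hx0 (by
    have : x ∈ U ⊓ wt h l := ⟨hx, hxl⟩
    rw [hb] at this
    simpa using this)

lemma hasWt_of_finrank {l : ι → ℤ} (H : 1 ≤ finrank ℂ ↥(U ⊓ wt h l)) : HasWt h U l := by
  obtain ⟨x, hx, hx0⟩ := Submodule.ne_bot_iff _ |>.mp (Submodule.one_le_finrank_iff.mp H)
  exact ⟨x, hx.1, hx0, hx.2⟩

lemma Stable.finrank_sr (S : Stable e f U) (C : IsChev A h e f) (hA : ∀ i, A i i = 2) (i : ι)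
    (l : ι → ℤ) : finrank ℂ ↥(U ⊓ wt h (sr A i l)) = finrank ℂ ↥(U ⊓ wt h l) := by
  obtain ⟨n, R⟩ := exists_refl C hA i
  have key : ∀ l, finrank ℂ ↥(U ⊓ wt h l) ≤ finrank ℂ ↥(U ⊓ wt h (sr A i l)) := by
    intro l
    rw [← LinearEquiv.finrank_map_eq n.toLinearEquiv]
    apply Submodule.finrank_mono
    rintro _ ⟨x, hx, rfl⟩
    exact ⟨R.stable U (S.e i) (S.f i) x hx.1, R.map_wt hA hx.2⟩
  refine le_antisymm ?_ (key l)
  have := key (sr A i l)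
  rwa [sr_sr hA] at this

lemma Stable.hasWt_sr (S : Stable e f U) (C : IsChev A h e f) (hA : ∀ i, A i i = 2) (i : ι)
    {l : ι → ℤ} (H : HasWt h U l) : HasWt h U (sr A i l) :=
  hasWt_of_finrank (by rw [S.finrank_sr C hA]; exact H.finrank)

lemma finite_wt (hh : ∀ i j, ⁅h i, h j⁆ = 0) (U : Submodule ℂ g) : {l | HasWt h U l}.Finite := by
  refine (WellFoundedGT.finite_ne_bot_of_iSupIndep (wt_indep hh)).subset ?_
  rintro l ⟨x, -, hx0, hx⟩ hb
  rw [hb] at hx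
  exact hx0 (by simpa using hx)

/-- If `0` is the only weight then the `e i` act trivially. Otherwise the image of `e i` contains a
joint eigenvector `⁅e i, z⁆`, of weight zero, so that `(h i + 2) z` lies in the kernel of `e i`. Since
`-2` is not an eigenvalue of `h i` on `U`, the operator `h i + 2` is injective on `U` and bijective on
that kernel, which therefore contains `z`. -/
lemma trivial_e [Finite ι] (C : IsChev A h e f) (hA : ∀ i, A i i = 2) (hn : ∀ i, h i ≠ 0)
    (S : Stable e f U) (hw : ∀ l, HasWt h U l → l = 0) (i : ι) (x : g) (hx : x ∈ U) :
    ⁅e i, x⁆ = 0 := by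
  by_contra hne
  set E := LieAlgebra.ad ℂ g (e i)
  have hR : U.map E ≠ ⊥ := by
    rw [Submodule.ne_bot_iff]
    exact ⟨⁅e i, x⁆, ⟨x, hx, rfl⟩, hne⟩
  have hjE : ∀ (j : ι) (y : g), ⁅h j, ⁅e i, y⁆⁆ = ⁅e i, ⁅h j, y⁆ + (A j i : ℂ) • y⁆ := by
    intro j y
    rw [leibniz_lie, C.he, smul_lie, lie_add, lie_smul]; abel
  obtain ⟨l, y, ⟨z, hz, rfl⟩, hy0, hyl⟩ := C.exists_wt hA hn (U.map E) hR (by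
    rintro j _ ⟨z, hz, rfl⟩
    exact ⟨_, add_mem (S.hst C j z hz) (U.smul_mem (A j i : ℂ) hz), (hjE j z).symm⟩)
  have hl := hw l ⟨_, S.e i z hz, hy0, hyl⟩
  subst hl
  have inj : ∀ k ∈ U, ⁅h i, k⁆ = (-2 : ℂ) • k → k = 0 := by
    intro k hk hk2
    by_contra hk0
    obtain ⟨l, y, ⟨hy, hy'⟩, hy0, hyl⟩ := C.exists_wt hA hn
      (U ⊓ (LieAlgebra.ad ℂ g (h i)).eigenspace (-2)) (by
        rw [Submodule.ne_bot_iff]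
        exact ⟨k, ⟨hk, by rw [SetLike.mem_coe, Module.End.mem_eigenspace_iff]; exact hk2⟩, hk0⟩) (by
        rintro j y ⟨hy, hy'⟩
        refine ⟨S.hst C j y hy, ?_⟩
        rw [SetLike.mem_coe, Module.End.mem_eigenspace_iff, LieAlgebra.ad_apply] at hy' ⊢
        rw [leibniz_lie, C.hh, zero_lie, zero_add, hy', lie_smul])
    have hl := hw l ⟨y, hy, hy0, hyl⟩
    subst hl
    rw [SetLike.mem_coe, Module.End.mem_eigenspace_iff, LieAlgebra.ad_apply] at hy'
    have h1 := hyl i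
    rw [hy'] at h1
    simp at h1
    exact hy0 h1
  let K := U ⊓ LinearMap.ker E
  have hK : ∀ k ∈ K, ⁅h i, k⁆ + (2 : ℂ) • k ∈ K := by
    rintro k ⟨hk, hk'⟩
    refine ⟨add_mem (S.hst C i k hk) (U.smul_mem _ hk), ?_⟩
    have h1 : ⁅e i, k⁆ = 0 := hk'
    have := hjE i k
    rw [h1, lie_zero] at this
    rw [SetLike.mem_coe, LinearMap.mem_ker, LieAlgebra.ad_apply]
    rw [hA] at this
    exact_mod_cast this.symm
  let B : K →ₗ[ℂ] K := (LieAlgebra.ad ℂ g (h i) + (2 : ℂ) • LinearMap.id).restrict hK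
  have hB : Function.Injective B := by
    rw [← LinearMap.ker_eq_bot, LinearMap.ker_eq_bot']
    intro k hk
    have h1 : ⁅h i, (k : g)⁆ + (2 : ℂ) • (k : g) = 0 := congrArg Subtype.val hk
    ext
    refine inj k k.2.1 ?_
    rw [eq_neg_of_add_eq_zero_left h1, neg_smul]
  have hzK : ⁅h i, z⁆ + (2 : ℂ) • z ∈ K := by
    refine ⟨add_mem (S.hst C i z hz) (U.smul_mem _ hz), ?_⟩
    have h1 : ⁅h i, ⁅e i, z⁆⁆ = 0 := by
      have h2 := hyl i
      rw [Pi.zero_apply, Int.cast_zero, zero_smul] at h2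
      exact h2
    rw [hjE i z, hA] at h1
    rw [SetLike.mem_coe, LinearMap.mem_ker, LieAlgebra.ad_apply]
    exact_mod_cast h1
  obtain ⟨k, hk⟩ := LinearMap.injective_iff_surjective.mp hB ⟨_, hzK⟩
  have hk' : ⁅h i, (k : g)⁆ + (2 : ℂ) • (k : g) = ⁅h i, z⁆ + (2 : ℂ) • z := congrArg Subtype.val hk
  have : z - k = 0 := by
    apply inj _ (sub_mem hz k.2.1)
    rw [lie_sub, eq_sub_of_add_eq hk'.symm]
    module
  rw [sub_eq_zero] at this
  apply hy0
  rw [this]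
  exact k.2.2

lemma trivial_f [Finite ι] (C : IsChev A h e f) (hA : ∀ i, A i i = 2) (hn : ∀ i, h i ≠ 0)
    (S : Stable e f U) (hw : ∀ l, HasWt h U l → l = 0) (i : ι) (x : g) (hx : x ∈ U) :
    ⁅f i, x⁆ = 0 := by
  refine trivial_e C.symm hA (by simpa using hn) S.symm ?_ i x hx
  rintro l ⟨y, hy, hy0, hyl⟩
  rw [wt_neg] at hyl
  simpa using hw _ ⟨y, hy, hy0, hyl⟩

end Stable

section Combinatorics

lemma F4_sr0 (l : Fin 4 → ℤ) : sr F₄ 0 l = ![-l 0, l 1 + l 0, l 2, l 3] := by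
  ext j; fin_cases j <;> simp [sr_apply, F₄]; ring
lemma F4_sr1 (l : Fin 4 → ℤ) : sr F₄ 1 l = ![l 0 + l 1, -l 1, l 2 + l 1, l 3] := by
  ext j; fin_cases j <;> simp [sr_apply, F₄]; ring
lemma F4_sr2 (l : Fin 4 → ℤ) : sr F₄ 2 l = ![l 0, l 1 + 2 * l 2, -l 2, l 3 + l 2] := by
  ext j; fin_cases j <;> simp [sr_apply, F₄] <;> ring
lemma F4_sr3 (l : Fin 4 → ℤ) : sr F₄ 3 l = ![l 0, l 1, l 2 + l 3, -l 3] := by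
  ext j; fin_cases j <;> simp [sr_apply, F₄]; ring

lemma F4_col0 : F₄.col 0 = ![2, -1, 0, 0] := by ext j; fin_cases j <;> rfl
lemma F4_col1 : F₄.col 1 = ![-1, 2, -1, 0] := by ext j; fin_cases j <;> rfl
lemma F4_col2 : F₄.col 2 = ![0, -2, 2, -1] := by ext j; fin_cases j <;> rfl
lemma F4_col3 : F₄.col 3 = ![0, 0, -1, 2] := by ext j; fin_cases j <;> rfl

/-- The Weyl invariant quadratic form on weights of `F₄`, equal to `2` on short roots. -/
def qF (l : Fin 4 → ℤ) : ℤ :=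
  l 0 * (2 * l 0 + 3 * l 1 + 4 * l 2 + 2 * l 3) + l 1 * (3 * l 0 + 6 * l 1 + 8 * l 2 + 4 * l 3) +
  2 * l 2 * (2 * l 0 + 4 * l 1 + 6 * l 2 + 3 * l 3) + 2 * l 3 * (l 0 + 2 * l 1 + 3 * l 2 + 2 * l 3)

lemma qF_sr (i : Fin 4) (l : Fin 4 → ℤ) : qF (sr F₄ i l) = qF l := by
  fin_cases i
  · simp only [Fin.mk_zero, Fin.zero_eta, F4_sr0, qF]; simp; ring
  · simp only [Fin.mk_one, F4_sr1, qF]; simp; ring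
  · simp only [Fin.reduceFinMk, F4_sr2, qF]; simp; ring
  · simp only [Fin.reduceFinMk, F4_sr3, qF]; simp; ring

/-- Every nonzero weight pairs to at least `2` with some coroot of a short root, that is, some Weyl
conjugate of it has `0`-th coordinate at least `2`. -/
lemma exists_two_le (P : (Fin 4 → ℤ) → Prop) (hP : ∀ i l, P l → P (sr F₄ i l)) {l : Fin 4 → ℤ}
    (hl : P l) (hl0 : l ≠ 0) : ∃ m, P m ∧ 2 ≤ m 0 := by
  by_contra! H
  apply hl0
  have s0 : ∀ m, P m → P ![-m 0, m 1 + m 0, m 2, m 3] := fun m hm => F4_sr0 m ▸ hP 0 m hm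
  have s1 : ∀ m, P m → P ![m 0 + m 1, -m 1, m 2 + m 1, m 3] := fun m hm => F4_sr1 m ▸ hP 1 m hm
  have s2 : ∀ m, P m → P ![m 0, m 1 + 2 * m 2, -m 2, m 3 + m 2] :=
    fun m hm => F4_sr2 m ▸ hP 2 m hm
  have s3 : ∀ m, P m → P ![m 0, m 1, m 2 + m 3, -m 3] := fun m hm => F4_sr3 m ▸ hP 3 m hm
  have a1 : ∀ m, P m → -1 ≤ m 0 ∧ m 0 ≤ 1 := fun m hm => by
    have h1 := H _ (s0 m hm); have h2 := H m hm; simp at h1; omega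
  have a2 : ∀ m, P m → -1 ≤ m 0 + m 1 ∧ m 0 + m 1 ≤ 1 := fun m hm => by
    have h1 := a1 _ (s1 m hm); simp at h1; omega
  have a3 : ∀ m, P m → -1 ≤ m 1 ∧ m 1 ≤ 1 := fun m hm => by
    have h1 := a2 _ (s0 m hm); simp at h1; omega
  have a4 : ∀ m, P m → -1 ≤ m 1 + 2 * m 2 ∧ m 1 + 2 * m 2 ≤ 1 := fun m hm => by
    have h1 := a3 _ (s2 m hm); simp at h1; omega
  have a5 : ∀ m, P m → -1 ≤ m 1 + 2 * m 2 + 2 * m 3 ∧ m 1 + 2 * m 2 + 2 * m 3 ≤ 1 :=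
    fun m hm => by have h1 := a4 _ (s3 m hm); simp at h1; omega
  have a6 : ∀ m, P m → -1 ≤ m 0 + m 1 + 2 * m 2 ∧ m 0 + m 1 + 2 * m 2 ≤ 1 := fun m hm => by
    have h1 := a2 _ (s2 m hm); simp at h1; omega
  have a12 : ∀ m, P m → -1 ≤ m 0 + m 1 + 2 * m 2 + 2 * m 3 ∧ m 0 + m 1 + 2 * m 2 + 2 * m 3 ≤ 1 :=
    fun m hm => by have h1 := a6 _ (s3 m hm); simp at h1; omega
  have a7 : ∀ m, P m → -1 ≤ m 0 + 2 * m 1 + 2 * m 2 ∧ m 0 + 2 * m 1 + 2 * m 2 ≤ 1 :=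
    fun m hm => by have h1 := a6 _ (s1 m hm); simp at h1; omega
  have a8 : ∀ m, P m → -1 ≤ m 0 + 2 * m 1 + 2 * m 2 + 2 * m 3 ∧
      m 0 + 2 * m 1 + 2 * m 2 + 2 * m 3 ≤ 1 :=
    fun m hm => by have h1 := a7 _ (s3 m hm); simp at h1; omega
  have a9 : ∀ m, P m → -1 ≤ m 0 + 2 * m 1 + 4 * m 2 + 2 * m 3 ∧
      m 0 + 2 * m 1 + 4 * m 2 + 2 * m 3 ≤ 1 :=
    fun m hm => by have h1 := a8 _ (s2 m hm); simp at h1; omega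
  have a10 : ∀ m, P m → -1 ≤ m 0 + 3 * m 1 + 4 * m 2 + 2 * m 3 ∧
      m 0 + 3 * m 1 + 4 * m 2 + 2 * m 3 ≤ 1 :=
    fun m hm => by have h1 := a9 _ (s1 m hm); simp at h1; omega
  have a11 : ∀ m, P m → -1 ≤ 2 * m 0 + 3 * m 1 + 4 * m 2 + 2 * m 3 ∧
      2 * m 0 + 3 * m 1 + 4 * m 2 + 2 * m 3 ≤ 1 :=
    fun m hm => by have h1 := a10 _ (s0 m hm); simp at h1; omega
  have b1 := a1 l hl; have b2 := a2 l hl; have b3 := a3 l hl; have b4 := a4 l hl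
  have b5 := a5 l hl; have b6 := a6 l hl; have b7 := a7 l hl; have b8 := a8 l hl
  have b9 := a9 l hl; have b10 := a10 l hl; have b11 := a11 l hl; have b12 := a12 l hl
  clear a1 a2 a3 a4 a5 a6 a7 a8 a9 a10 a11 a12 s0 s1 s2 s3 H hP
  have c0 : l 0 = -1 ∨ l 0 = 0 ∨ l 0 = 1 := by omega
  have c1 : l 1 = -1 ∨ l 1 = 0 ∨ l 1 = 1 := by omega
  have c2 : l 2 = -1 ∨ l 2 = 0 ∨ l 2 = 1 := by omega
  have hz : l 0 = 0 ∧ l 1 = 0 ∧ l 2 = 0 ∧ l 3 = 0 := by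
    rcases c0 with c0 | c0 | c0 <;> rcases c1 with c1 | c1 | c1 <;>
      rcases c2 with c2 | c2 | c2 <;> refine ⟨?_, ?_, ?_, ?_⟩ <;> omega
  ext i
  fin_cases i <;> simp [hz]

/-- The short roots of `F₄`, as weights. -/
def shortRoots : List (Fin 4 → ℤ) := [
  ![2,-1,0,0], ![-2,1,0,0], ![1,1,-1,0], ![-1,-1,1,0], ![-1,2,-1,0], ![1,-1,1,-1], ![1,-2,1,0],
  ![-1,1,-1,1], ![-1,0,1,-1], ![0,1,0,-1], ![1,-1,0,1], ![1,0,-1,1], ![0,-1,0,1], ![-1,1,0,-1],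
  ![-1,0,0,1], ![0,1,-1,1], ![1,0,0,-1], ![0,-1,1,-1], ![0,-1,1,0], ![0,1,-1,0], ![-1,1,0,0],
  ![1,-1,0,0], ![1,0,0,0], ![-1,0,0,0]]

/-- The long roots of `F₄`, as weights. -/
def longRoots : List (Fin 4 → ℤ) := [
  ![0,0,-1,2], ![0,-2,1,1], ![0,0,1,-2], ![-2,2,-1,1], ![0,-2,2,-1], ![0,2,-1,-1], ![2,0,-1,1],
  ![-2,0,1,0], ![-2,2,0,-1], ![0,2,-2,1], ![2,-2,1,-1], ![2,-2,1,0], ![2,0,0,-1], ![2,-2,0,1],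
  ![-2,0,1,-1], ![2,0,-1,0], ![0,2,-1,0], ![-2,0,0,1], ![-2,2,-1,0], ![0,0,1,-1], ![0,-2,1,0],
  ![0,0,0,1], ![0,0,-1,1], ![0,0,0,-1]]

lemma orbit_induction (P : (Fin 4 → ℤ) → Prop) (hP : ∀ i l, P l → P (sr F₄ i l)) {l : Fin 4 → ℤ}
    (hl : P l) (ws : List (List (Fin 4))) : ∀ m ∈ ws.map (fun w => w.foldr (sr F₄) l), P m := by
  intro m hm
  obtain ⟨w, -, rfl⟩ := List.mem_map.mp hm
  clear hm
  induction w with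
  | nil => exact hl
  | cons i w ih => exact hP i _ ih

/-- The short roots form a single orbit of the Weyl group. -/
lemma short_induction (P : (Fin 4 → ℤ) → Prop) (hP : ∀ i l, P l → P (sr F₄ i l))
    (hl : P (F₄.col 0)) : ∀ m ∈ shortRoots, P m := by
  have : shortRoots = List.map (fun w : List (Fin 4) => w.foldr (sr F₄) (F₄.col 0)) [
    [], [0], [1], [1,0], [0,1], [2,1], [0,1,0], [2,1,0], [2,0,1], [1,2,1], [3,2,1], [2,0,1,0],
    [1,2,1,0], [3,2,1,0], [3,2,0,1], [3,1,2,1], [3,2,0,1,0], [3,1,2,1,0], [2,3,1,2,1],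
    [2,3,1,2,1,0], [1,2,3,1,2,1], [1,2,3,1,2,1,0], [0,1,2,3,1,2,1], [0,1,2,3,1,2,1,0]] := by
    decide +kernel
  rw [this]
  exact orbit_induction P hP hl _

/-- The long roots form a single orbit of the Weyl group. -/
lemma long_induction (P : (Fin 4 → ℤ) → Prop) (hP : ∀ i l, P l → P (sr F₄ i l))
    (hl : P (F₄.col 3)) : ∀ m ∈ longRoots, P m := by
  have : longRoots = List.map (fun w : List (Fin 4) => w.foldr (sr F₄) (F₄.col 3)) [
    [], [2], [3], [1,2], [3,2], [2,3], [0,1,2], [2,1,2], [3,1,2], [2,3,2], [1,2,3], [2,0,1,2],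
    [3,0,1,2], [1,2,3,2], [0,1,2,3], [2,1,2,3], [1,2,0,1,2], [0,1,2,3,2], [2,0,1,2,3],
    [2,1,2,0,1,2], [1,2,0,1,2,3], [3,2,1,2,0,1,2], [2,1,2,0,1,2,3], [3,2,1,2,0,1,2,3]] := by
    decide +kernel
  rw [this]
  exact orbit_induction P hP hl _

lemma short_sr : ∀ i, ∀ l ∈ shortRoots, sr F₄ i l ∈ shortRoots := by decide +kernel

lemma roots_nodup : (0 :: (shortRoots ++ longRoots)).Nodup := by decide +kernel

end Combinatorics

/-! ### The standard module of `F₄` and the dimension of `f₄` -/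

section Roots

/-- The finite set of short roots of `F₄`. -/
def SF : Finset (Fin 4 → ℤ) := shortRoots.toFinset
/-- The finite set of long roots of `F₄`. -/
def LF : Finset (Fin 4 → ℤ) := longRoots.toFinset

lemma mem_SF {l : Fin 4 → ℤ} : l ∈ SF ↔ l ∈ shortRoots := List.mem_toFinset
lemma mem_LF {l : Fin 4 → ℤ} : l ∈ LF ↔ l ∈ longRoots := List.mem_toFinset

lemma zero_notMem_SF : (0 : Fin 4 → ℤ) ∉ SF := fun h =>
  (List.nodup_cons.mp roots_nodup).1 (List.mem_append_left _ (mem_SF.mp h))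
lemma zero_notMem_LF : (0 : Fin 4 → ℤ) ∉ LF := fun h =>
  (List.nodup_cons.mp roots_nodup).1 (List.mem_append_right _ (mem_LF.mp h))
lemma disj_SF_LF : Disjoint SF LF := by
  rw [Finset.disjoint_left]
  intro l h1 h2
  exact List.disjoint_of_nodup_append (List.nodup_cons.mp roots_nodup).2 (mem_SF.mp h1)
    (mem_LF.mp h2)
lemma SF_card : SF.card = 24 :=
  List.toFinset_card_of_nodup (List.Nodup.of_append_left (List.nodup_cons.mp roots_nodup).2)
lemma LF_card : LF.card = 24 :=
  List.toFinset_card_of_nodup (List.Nodup.of_append_right (List.nodup_cons.mp roots_nodup).2)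

lemma SF_sr (i : Fin 4) {l : Fin 4 → ℤ} (hl : l ∈ SF) : sr F₄ i l ∈ SF :=
  mem_SF.mpr (short_sr i l (mem_SF.mp hl))

end Roots

section Modules
variable {g : Type*} [LieRing g] [LieAlgebra ℂ g] [FiniteDimensional ℂ g]
variable {h e f : Fin 4 → g} {U : Submodule ℂ g}

lemma F4_two : ∀ i, F₄ i i = 2 := F4_finType.two

/-- A module with a nonzero weight has a short root as a weight. A nonzero weight minimising the
invariant form can be moved by the Weyl group so that subtracting `α₀` decreases the form; by
minimality the result is `0`. -/
lemma hasWt_col0 (C : IsChev F₄ h e f) (hn : ∀ i, h i ≠ 0) (S : Stable e f U) {l : Fin 4 → ℤ}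
    (H : HasWt h U l) (hl : l ≠ 0) : HasWt h U (F₄.col 0) := by
  obtain ⟨a, ⟨ha, ha0⟩, hmin⟩ := Set.exists_min_image {l | HasWt h U l ∧ l ≠ 0} qF
    ((finite_wt C.hh U).subset fun l hl => hl.1) ⟨l, H, hl⟩
  obtain ⟨m, ⟨hm, hq⟩, hm2⟩ := exists_two_le (fun m => HasWt h U m ∧ qF m = qF a)
    (fun i m hm => ⟨S.hasWt_sr C F4_two i hm.1, by rw [qF_sr, hm.2]⟩) ⟨ha, rfl⟩ ha0
  obtain ⟨x, hx, hx0, hxm⟩ := id hm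
  by_cases hc : m - F₄.col 0 = 0
  · rwa [sub_eq_zero.mp hc] at hm
  · have h1 := hmin (m - F₄.col 0) ⟨⟨⁅f 0, x⁆, S.f 0 x hx,
      C.f_ne F4_two (hn 0) hxm hx0 (by omega), C.f_wt 0 hxm⟩, hc⟩
    have h2 : qF (m - F₄.col 0) = qF m - 2 * m 0 + 2 := by
      rw [F4_col0]; simp [qF]; ring
    omega

lemma hasWt_short (C : IsChev F₄ h e f) (hn : ∀ i, h i ≠ 0) (S : Stable e f U) {l : Fin 4 → ℤ}
    (H : HasWt h U l) (hl : l ≠ 0) : ∀ m ∈ SF, HasWt h U m := fun m hm =>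
  short_induction (HasWt h U) (fun i _ => S.hasWt_sr C F4_two i) (hasWt_col0 C hn S H hl) m
    (mem_SF.mp hm)

/-- There are `24` short roots, `24` long roots and a Cartan subalgebra of dimension `4`. -/
lemma F4_finrank (C : IsChev F₄ h e f) (hn : ∀ i, h i ≠ 0) : 52 ≤ finrank ℂ g := by
  have he : ∀ i, e i ≠ 0 := fun i hi => hn i (by rw [← C.ef, hi, zero_lie])
  have S : Stable e f (⊤ : Submodule ℂ g) := ⟨fun _ _ _ => trivial, fun _ _ _ => trivial⟩
  have h1 : ∀ m ∈ SF, 1 ≤ finrank ℂ ↥(⊤ ⊓ wt h m) := fun m hm =>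
    (short_induction (HasWt h ⊤) (fun i _ => S.hasWt_sr C F4_two i)
      ⟨e 0, trivial, he 0, C.e_mem_wt 0⟩ m (mem_SF.mp hm)).finrank
  have h2 : ∀ m ∈ LF, 1 ≤ finrank ℂ ↥(⊤ ⊓ wt h m) := fun m hm =>
    (long_induction (HasWt h ⊤) (fun i _ => S.hasWt_sr C F4_two i)
      ⟨e 3, trivial, he 3, C.e_mem_wt 3⟩ m (mem_LF.mp hm)).finrank
  have h3 : 4 ≤ finrank ℂ ↥(⊤ ⊓ wt h 0) := by
    have := finrank_span_eq_card (h_li C F4_finType hn)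
    rw [Fintype.card_fin] at this
    refine this.ge.trans (Submodule.finrank_mono ?_)
    rw [Submodule.span_le]
    rintro _ ⟨i, rfl⟩
    exact ⟨trivial, C.h_mem_wt i⟩
  have h4 := sum_finrank_le C.hh ⊤ (insert 0 (SF ∪ LF))
  rw [Finset.sum_insert (by simp [zero_notMem_SF, zero_notMem_LF]), Finset.sum_union disj_SF_LF,
    finrank_top] at h4
  have h5 := Finset.card_nsmul_le_sum SF _ _ h1
  have h6 := Finset.card_nsmul_le_sum LF _ _ h2
  rw [SF_card] at h5
  rw [LF_card] at h6
  simp only [smul_eq_mul] at h5 h6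
  omega

/-- The weight structure of the `26`-dimensional irreducible module of `F₄`: the weights are the
short roots, of multiplicity one, and `0`, of multiplicity two. The field `nk` says that no nonzero
vector of weight zero is killed by the two short simple root vectors. -/
structure Std (h e f : Fin 4 → g) (U : Submodule ℂ g) : Prop where
  st : Stable e f U
  dim : finrank ℂ U = 26
  zero : finrank ℂ ↥(U ⊓ wt h 0) = 2
  one : ∀ m ∈ SF, finrank ℂ ↥(U ⊓ wt h m) = 1
  wts : ∀ l, HasWt h U l → l = 0 ∨ l ∈ SF
  top : U = (insert 0 SF).sup fun l => U ⊓ wt h l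
  nk : ∀ x ∈ U, x ∈ wt h 0 → ⁅e 0, x⁆ = 0 → ⁅e 1, x⁆ = 0 → x = 0

lemma line {l : Fin 4 → ℤ} (hd : finrank ℂ ↥(U ⊓ wt h l) = 1) {x y : g} (hx : x ∈ U)
    (hxl : x ∈ wt h l) (hx0 : x ≠ 0) (hy : y ∈ U) (hyl : y ∈ wt h l) : ∃ c : ℂ, y = c • x := by
  obtain ⟨c, hc⟩ := (finrank_eq_one_iff_of_nonzero' (⟨x, hx, hxl⟩ : ↥(U ⊓ wt h l))
    (fun hz => hx0 (congrArg Subtype.val hz))).mp hd ⟨y, hy, hyl⟩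
  exact ⟨c, (congrArg Subtype.val hc).symm⟩

/-- A module of dimension at most `26` with a nonzero weight has the structure `Std`. All `24` short
roots are weights. Lowering vectors `v0`, `v1` of weights `α₀`, `α₁` gives two vectors of weight zero,
which are shown to be independent by a computation in the subsystem of type `A₂`; no room is left for
further weights. -/
lemma std_of_le (C : IsChev F₄ h e f) (hn : ∀ i, h i ≠ 0) (S : Stable e f U)
    (hU : finrank ℂ U ≤ 26) {l : Fin 4 → ℤ} (H : HasWt h U l) (hl : l ≠ 0) : Std h e f U := by
  have hS := hasWt_short C hn S H hl
  have h0 : (F₄.col 0) ∈ SF := by rw [F4_col0, mem_SF]; decide +kernel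
  have h1 : (F₄.col 1) ∈ SF := by rw [F4_col1, mem_SF]; decide +kernel
  have h01 : (F₄.col 1 + F₄.col 0) ∈ SF := by rw [F4_col0, F4_col1, mem_SF]; decide +kernel
  have eqd : ∀ m ∈ SF, finrank ℂ ↥(U ⊓ wt h m) = finrank ℂ ↥(U ⊓ wt h (F₄.col 0)) := fun m hm =>
    short_induction (fun m => finrank ℂ ↥(U ⊓ wt h m) = finrank ℂ ↥(U ⊓ wt h (F₄.col 0)))
      (fun i m hm => by rw [S.finrank_sr C F4_two, hm]) rfl m (mem_SF.mp hm)
  have d1 : finrank ℂ ↥(U ⊓ wt h (F₄.col 0)) = 1 := by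
    have h2 := (hS _ h0).finrank
    have h3 := sum_finrank_le C.hh U SF
    rw [Finset.sum_congr rfl eqd, Finset.sum_const, SF_card, smul_eq_mul] at h3
    omega
  have one : ∀ m ∈ SF, finrank ℂ ↥(U ⊓ wt h m) = 1 := fun m hm => by rw [eqd m hm, d1]
  have sumS : ∑ m ∈ SF, finrank ℂ ↥(U ⊓ wt h m) = 24 := by
    rw [Finset.sum_congr rfl one, Finset.sum_const, SF_card]; rfl
  obtain ⟨v0, v0U, v00, v0w⟩ := hS _ h0
  obtain ⟨v1, v1U, v10, v1w⟩ := hS _ h1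
  have z0w : ⁅f 0, v0⁆ ∈ wt h 0 := by simpa using C.f_wt 0 v0w
  have z1w : ⁅f 1, v1⁆ ∈ wt h 0 := by simpa using C.f_wt 1 v1w
  have z0U := S.f 0 _ v0U
  have z1U := S.f 1 _ v1U
  have z00 : ⁅f 0, v0⁆ ≠ 0 := C.f_ne F4_two (hn 0) v0w v00 (by rw [F4_col0]; simp)
  -- a further weight `l` would come with `s_i l ≠ l`, and `1 + 2 + 24` exceeds the dimension
  have wts : ∀ l, HasWt h U l → l = 0 ∨ l ∈ SF := by
    intro l H
    by_contra! hne
    obtain ⟨hl0, hlS⟩ := hne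
    obtain ⟨i, hi⟩ : ∃ i, l i ≠ 0 := by
      by_contra! hall; exact hl0 (funext hall)
    have hsr : sr F₄ i l i = -l i := by rw [sr_apply, F4_two]; ring
    have hsne : l ≠ sr F₄ i l := fun hh => by have := congrFun hh i; omega
    have hs0 : 0 ≠ sr F₄ i l := fun hh => by have := congrFun hh i; simp at this; omega
    have hsS : sr F₄ i l ∉ SF := fun hh => hlS (by
      have := SF_sr i hh
      rwa [sr_sr F4_two] at this)
    have h2 := sum_finrank_le C.hh U (insert 0 (insert l (insert (sr F₄ i l) SF)))
    rw [Finset.sum_insert (by simp [hl0.symm, hs0, zero_notMem_SF]),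
      Finset.sum_insert (by simp [hsne, hlS]), Finset.sum_insert hsS, sumS] at h2
    have h3 := H.finrank
    have h4 := (S.hasWt_sr C F4_two i H).finrank
    have h5 : 1 ≤ finrank ℂ ↥(U ⊓ wt h 0) := HasWt.finrank ⟨_, z0U, z00, z0w⟩
    omega
  have vanish : ∀ (l : Fin 4 → ℤ) (x : g), l ∉ (0 :: shortRoots) → x ∈ U → x ∈ wt h l → x = 0 := by
    intro l x hl hx hxl
    by_contra hx0
    rcases wts l ⟨x, hx, hx0, hxl⟩ with rfl | hm
    · simp at hl
    · exact hl (List.mem_cons_of_mem _ (mem_SF.mp hm))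
  have ev0 : ⁅e 0, v0⁆ = 0 := vanish _ _ (by rw [F4_col0]; decide +kernel) (S.e 0 _ v0U)
    (C.e_wt 0 v0w)
  have ev1 : ⁅e 1, v1⁆ = 0 := vanish _ _ (by rw [F4_col1]; decide +kernel) (S.e 1 _ v1U)
    (C.e_wt 1 v1w)
  have fv1 : ⁅f 0, v1⁆ = 0 := vanish _ _ (by rw [F4_col1, F4_col0]; decide +kernel)
    (S.f 0 _ v1U) (C.f_wt 0 v1w)
  have fv0 : ⁅f 1, v0⁆ = 0 := vanish _ _ (by rw [F4_col1, F4_col0]; decide +kernel)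
    (S.f 1 _ v0U) (C.f_wt 1 v0w)
  have hv00 : ⁅h 0, v0⁆ = (2 : ℂ) • v0 := by rw [v0w 0, F4_col0]; simp
  have hv11 : ⁅h 1, v1⁆ = (2 : ℂ) • v1 := by rw [v1w 1, F4_col1]; simp
  have hv10 : ⁅h 1, v0⁆ = (-1 : ℂ) • v0 := by rw [v0w 1, F4_col0]; simp
  have hv01 : ⁅h 0, v1⁆ = (-1 : ℂ) • v1 := by rw [v1w 0, F4_col1]; simp
  have ez0 : ⁅e 0, ⁅f 0, v0⁆⁆ = (2 : ℂ) • v0 := by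
    rw [← hv00, C.lie_h, ev0, lie_zero, sub_zero]
  have ez1 : ⁅e 1, ⁅f 1, v1⁆⁆ = (2 : ℂ) • v1 := by
    rw [← hv11, C.lie_h, ev1, lie_zero, sub_zero]
  obtain ⟨x, hx⟩ : ∃ x : ℂ, ⁅e 0, ⁅f 1, v1⁆⁆ = x • v0 :=
    line d1 v0U v0w v00 (S.e 0 _ z1U) (by simpa using C.e_wt 0 z1w)
  obtain ⟨y, hy⟩ : ∃ y : ℂ, ⁅e 1, ⁅f 0, v0⁆⁆ = y • v1 :=
    line (one _ h1) v1U v1w v10 (S.e 1 _ z0U) (by simpa using C.e_wt 1 z0w)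
  have fe0 : ⁅f 0, ⁅e 0, v1⁆⁆ = v1 := by
    have := C.lie_h 0 v1
    rw [fv1, lie_zero, zero_sub, hv01] at this
    rw [← neg_eq_iff_eq_neg.mpr this]; simp
  have fe1 : ⁅f 1, ⁅e 1, v0⁆⁆ = v0 := by
    have := C.lie_h 1 v0
    rw [fv0, lie_zero, zero_sub, hv10] at this
    rw [← neg_eq_iff_eq_neg.mpr this]; simp
  have comm : ∀ (i j : Fin 4) (z : g), i ≠ j → ⁅f i, ⁅e j, z⁆⁆ = ⁅e j, ⁅f i, z⁆⁆ := by
    intro i j z hij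
    rw [leibniz_lie, ← lie_skew (f i) (e j), C.ef' j i hij.symm, neg_zero, zero_lie, zero_add]
  have hne : ⁅e 0, v1⁆ ≠ 0 := fun hh => v10 (by rw [← fe0, hh, lie_zero])
  obtain ⟨t, ht⟩ : ∃ t : ℂ, ⁅e 1, v0⁆ = t • ⁅e 0, v1⁆ :=
    line (one _ h01) (S.e 0 _ v1U) (C.e_wt 0 v1w) hne (S.e 1 _ v0U)
      (by rw [add_comm]; exact C.e_wt 1 v0w)
  have hxy : x * y = 1 := by
    have k1 : t * x = 1 := by
      have := congrArg (fun z => ⁅f 1, z⁆) ht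
      simp only [lie_smul, fe1, comm 1 0 _ (by decide), hx, smul_smul] at this
      have h2 : (t * x - 1) • v0 = 0 := by rw [sub_smul, ← this, one_smul, sub_self]
      exact sub_eq_zero.mp ((smul_eq_zero.mp h2).resolve_right v00)
    have k2 : y = t := by
      have := congrArg (fun z => ⁅f 0, z⁆) ht
      simp only [lie_smul, fe0, comm 0 1 _ (by decide), hy] at this
      have h2 : (y - t) • v1 = 0 := by rw [sub_smul, this, sub_self]
      exact sub_eq_zero.mp ((smul_eq_zero.mp h2).resolve_right v10)
    rw [k2, mul_comm, k1]
  -- the matrix of `e 0`, `e 1` on the two vectors of weight zero has determinant `4 - x * y = 3`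
  have kill : ∀ a b : ℂ, ⁅e 0, a • ⁅f 0, v0⁆ + b • ⁅f 1, v1⁆⁆ = 0 →
      ⁅e 1, a • ⁅f 0, v0⁆ + b • ⁅f 1, v1⁆⁆ = 0 → a = 0 ∧ b = 0 := by
    intro a b k1 k2
    rw [lie_add, lie_smul, lie_smul, ez0, hx, smul_smul, smul_smul, ← add_smul] at k1
    rw [lie_add, lie_smul, lie_smul, ez1, hy, smul_smul, smul_smul, ← add_smul] at k2
    have k1' := (smul_eq_zero.mp k1).resolve_right v00
    have k2' := (smul_eq_zero.mp k2).resolve_right v10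
    have hb : b = 0 := by linear_combination (2 * k2' - y * k1' + b * hxy) / 3
    have ha : a = 0 := by rw [hb] at k1'; linear_combination k1' / 2
    exact ⟨ha, hb⟩
  have hli : LinearIndependent ℂ ![⁅f 0, v0⁆, ⁅f 1, v1⁆] := by
    rw [LinearIndependent.pair_iff]
    intro a b hab
    exact kill a b (by rw [hab, lie_zero]) (by rw [hab, lie_zero])
  have hsp : Submodule.span ℂ (Set.range ![⁅f 0, v0⁆, ⁅f 1, v1⁆]) ≤ U ⊓ wt h 0 := by
    rw [Submodule.span_le]
    rintro _ ⟨i, rfl⟩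
    fin_cases i
    · exact ⟨z0U, z0w⟩
    · exact ⟨z1U, z1w⟩
  have hfr := finrank_span_eq_card hli
  rw [Fintype.card_fin] at hfr
  have h2 : 2 ≤ finrank ℂ ↥(U ⊓ wt h 0) := hfr.ge.trans (Submodule.finrank_mono hsp)
  have tot := sum_finrank_le C.hh U (insert 0 SF)
  rw [Finset.sum_insert zero_notMem_SF, sumS] at tot
  have hzero : finrank ℂ ↥(U ⊓ wt h 0) = 2 := by omega
  refine ⟨S, by omega, hzero, one, wts, ?_, ?_⟩
  · apply le_sup_of_finrank C.hh
    rw [Finset.sum_insert zero_notMem_SF, sumS]; omega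
  · intro z hz hzw k0 k1
    have heq := Submodule.eq_of_le_of_finrank_le hsp (by rw [hfr, hzero])
    have hz' : z ∈ U ⊓ wt h 0 := ⟨hz, hzw⟩
    rw [← heq, Matrix.range_cons, Matrix.range_cons, Matrix.range_empty, Set.union_empty,
      Set.singleton_union, Submodule.mem_span_pair] at hz'
    obtain ⟨a, b, rfl⟩ := hz'
    obtain ⟨rfl, rfl⟩ := kill a b k0 k1
    simp

/-- A module with the structure `Std` is irreducible: by `nk` a nonzero submodule has a nonzero weight,
so its dimension is `26` as well. -/
lemma Std.irred (T : Std h e f U) (C : IsChev F₄ h e f) (hn : ∀ i, h i ≠ 0) {V : Submodule ℂ g}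
    (hV : V ≤ U) (S : Stable e f V) (hV0 : V ≠ ⊥) : V = U := by
  obtain ⟨l, x, hx, hx0, hxl⟩ := C.exists_wt F4_two hn V hV0 (S.hst C)
  have key : ∀ l, HasWt h V l → l ≠ 0 → V = U := by
    intro l H hl
    have hle : finrank ℂ V ≤ 26 := T.dim ▸ Submodule.finrank_mono hV
    have := (std_of_le C hn S hle H hl).dim
    exact Submodule.eq_of_le_of_finrank_le hV (by rw [this, T.dim])
  by_cases hl : l = 0
  · subst hl
    by_cases h0 : ⁅e 0, x⁆ = 0
    · by_cases h1 : ⁅e 1, x⁆ = 0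
      · exact absurd (T.nk x (hV hx) hxl h0 h1) hx0
      · refine key _ ⟨_, S.e 1 x hx, h1, C.e_wt 1 hxl⟩ ?_
        rw [F4_col1]; decide
    · refine key _ ⟨_, S.e 0 x hx, h0, C.e_wt 0 hxl⟩ ?_
      rw [F4_col0]; decide
  · exact key l ⟨x, hx, hx0, hxl⟩ hl

end Modules

/-! ### Highest weight vectors and isomorphisms of standard modules -/

section HighestWeight
variable {ι g : Type*} [Fintype ι] [DecidableEq ι] [LieRing g] [LieAlgebra ℂ g]

/-- `FW f v γ x`: the vector `x` arises from `v` by applying each `f i` exactly `γ i` times. -/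
inductive FW (f : ι → g) (v : g) : (ι → ℤ) → g → Prop
  | base : FW f v 0 v
  | step (i : ι) {γ : ι → ℤ} {x : g} : FW f v γ x → FW f v (γ + Pi.single i 1) ⁅f i, x⁆

variable {A : Matrix ι ι ℤ} {h e f : ι → g} {v : g}

lemma FW.sum_nonneg {γ : ι → ℤ} {x : g} (hw : FW f v γ x) : 0 ≤ ∑ i, γ i := by
  induction hw with
  | base => simp
  | step i _ ih => simp [Finset.sum_add_distrib]; omega

lemma FW.eq_base {γ : ι → ℤ} {x : g} (hw : FW f v γ x) (hγ : γ = 0) : x = v := by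
  cases hw with
  | base => rfl
  | step i hw =>
    have h1 := hw.sum_nonneg
    have h2 := congrArg (fun γ : ι → ℤ => ∑ i, γ i) hγ
    simp [Finset.sum_add_distrib] at h2
    omega

lemma FW.mem_wt (C : IsChev A h e f) {θ : ι → ℤ} (hv : v ∈ wt h θ) {γ : ι → ℤ} {x : g}
    (hw : FW f v γ x) : x ∈ wt h (θ - A.mulVec γ) := by
  induction hw with
  | base => simpa using hv
  | step i _ ih =>
    rw [Matrix.mulVec_add, Matrix.mulVec_single_one, ← sub_sub]
    exact C.f_wt i ih

/-- The span of all words in the `f i` applied to `v`. -/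
def fspan (f : ι → g) (v : g) : Submodule ℂ g := Submodule.span ℂ {x | ∃ γ, FW f v γ x}

lemma fspan_f (i : ι) (x : g) (hx : x ∈ fspan f v) : ⁅f i, x⁆ ∈ fspan f v := by
  have : fspan f v ≤ (fspan f v).comap (LieAlgebra.ad ℂ g (f i)) := by
    conv_lhs => rw [fspan]
    rw [Submodule.span_le]
    rintro y ⟨γ, hy⟩
    exact Submodule.subset_span ⟨_, FW.step i hy⟩
  exact this hx

/-- The subspace generated from a highest weight vector by the `f i` is stable under the `e i`. -/
lemma fspan_stable (C : IsChev A h e f) {θ : ι → ℤ} (hv : v ∈ wt h θ)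
    (hev : ∀ i, ⁅e i, v⁆ = 0) : Stable e f (fspan f v) := by
  refine ⟨fun i => ?_, fun i => fspan_f i⟩
  have key : ∀ γ x, FW f v γ x → ⁅e i, x⁆ ∈ fspan f v := by
    intro γ x hw
    induction hw with
    | base => rw [hev]; exact zero_mem _
    | @step j γ x hw ih =>
      rw [leibniz_lie]
      refine add_mem ?_ (fspan_f j _ ih)
      by_cases hij : i = j
      · subst hij
        rw [C.ef, hw.mem_wt C hv i]
        exact Submodule.smul_mem _ _ (Submodule.subset_span ⟨_, hw⟩)
      · rw [C.ef' i j hij, zero_lie]; exact zero_mem _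
  have : fspan f v ≤ (fspan f v).comap (LieAlgebra.ad ℂ g (e i)) := by
    conv_lhs => rw [fspan]
    rw [Submodule.span_le]
    rintro y ⟨γ, hy⟩
    exact key γ y hy
  exact fun x hx => this hx

lemma fspan_wt (C : IsChev A h e f) (hA : FinType A) {θ : ι → ℤ} (hv : v ∈ wt h θ) {x : g}
    (hx : x ∈ fspan f v) (hxθ : x ∈ wt h θ) : ∃ c : ℂ, x = c • v := by
  have h1 := mem_span_wt C.hh (S := {x | ∃ γ, FW f v γ x})
    (by rintro y ⟨γ, hy⟩; exact ⟨_, hy.mem_wt C hv⟩) hxθ hx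
  have h2 : Submodule.span ℂ {y ∈ {x | ∃ γ, FW f v γ x} | y ∈ wt h θ} ≤
      Submodule.span ℂ {v} := by
    rw [Submodule.span_le]
    rintro y ⟨⟨γ, hy⟩, hyθ⟩
    by_cases hγ : γ = 0
    · rw [hy.eq_base hγ]; exact Submodule.mem_span_singleton_self v
    · have : y = 0 := by
        apply wt_disjoint C.hh (hy.mem_wt C hv) hyθ
        intro hh
        apply hγ
        apply hA.inj
        rw [Matrix.mulVec_zero]
        simpa using hh
      rw [this]; exact zero_mem _
  obtain ⟨c, hc⟩ := Submodule.mem_span_singleton.mp (h2 h1)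
  exact ⟨c, hc.symm⟩

end HighestWeight

section Iso
variable {g : Type*} [LieRing g] [LieAlgebra ℂ g] [FiniteDimensional ℂ g]
variable {h e f h' e' f' : Fin 4 → g} {U U' : Submodule ℂ g}

lemma IsChev.prod {ι : Type*} {A : Matrix ι ι ℤ} {h e f h' e' f' : ι → g} (C : IsChev A h e f)
    (C' : IsChev A h' e' f') :
    IsChev A (fun i => (h i, h' i)) (fun i => (e i, e' i)) (fun i => (f i, f' i)) where
  hh i j := Prod.ext (C.hh i j) (C'.hh i j)
  he i j := Prod.ext (C.he i j) (C'.he i j)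
  hf i j := Prod.ext (C.hf i j) (C'.hf i j)
  ef i := Prod.ext (C.ef i) (C'.ef i)
  ef' i j hij := Prod.ext (C.ef' i j hij) (C'.ef' i j hij)

/-- The highest weight of a standard module is the highest short root, which is the first fundamental
weight. -/
lemma Std.exists_highest (T : Std h e f U) (C : IsChev F₄ h e f) :
    ∃ v ∈ U, v ≠ 0 ∧ v ∈ wt h ![1, 0, 0, 0] ∧ ∀ i, ⁅e i, v⁆ = 0 := by
  have hθ : ![1, 0, 0, 0] ∈ SF := by rw [mem_SF]; decide +kernel
  obtain ⟨v, vU, v0, vw⟩ := hasWt_of_finrank (T.one _ hθ).ge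
  refine ⟨v, vU, v0, vw, fun i => ?_⟩
  by_contra hne
  have key : ∀ i : Fin 4, ![1, 0, 0, 0] + F₄.col i ∉ 0 :: shortRoots := by decide +kernel
  apply key i
  rcases T.wts _ ⟨_, T.st.e i v vU, hne, C.e_wt i vw⟩ with h1 | h1
  · rw [h1]; simp
  · exact List.mem_cons_of_mem _ (mem_SF.mp h1)

/-- Two modules with the weight structure of `Std` are isomorphic. The submodule of the product
generated by a pair of highest weight vectors contains no `(0, y)` and no `(x, 0)` besides `0`, so
it is the graph of an isomorphism. -/
lemma Std.iso (T : Std h e f U) (T' : Std h' e' f' U') (C : IsChev F₄ h e f)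
    (C' : IsChev F₄ h' e' f') (hn : ∀ i, h i ≠ 0) (hn' : ∀ i, h' i ≠ 0) :
    ∃ t : U ≃ₗ[ℂ] U', (∀ i (x : U), (t ⟨⁅e i, x⁆, T.st.e i x x.2⟩ : g) = ⁅e' i, (t x : g)⁆) ∧
      ∀ i (x : U), (t ⟨⁅f i, x⁆, T.st.f i x x.2⟩ : g) = ⁅f' i, (t x : g)⁆ := by
  obtain ⟨v, vU, v0, vw, ve⟩ := T.exists_highest C
  obtain ⟨v', vU', v0', vw', ve'⟩ := T'.exists_highest C'
  have CC := C.prod C'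
  let F : Fin 4 → g × g := fun i => (f i, f' i)
  let P : Submodule ℂ (g × g) := fspan F (v, v')
  have vvw : ((v, v') : g × g) ∈ wt (fun i => (h i, h' i)) ![1, 0, 0, 0] := fun i =>
    Prod.ext (vw i) (vw' i)
  have PS : Stable (fun i => (e i, e' i)) F P :=
    fspan_stable CC vvw (fun i => Prod.ext (ve i) (ve' i))
  have hvP : (v, v') ∈ P := Submodule.subset_span ⟨0, FW.base⟩
  have hPU : P ≤ U.prod U' := by
    change Submodule.span ℂ _ ≤ _
    rw [Submodule.span_le]
    rintro x ⟨γ, hx⟩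
    induction hx with
    | base => exact ⟨vU, vU'⟩
    | step i _ ih => exact ⟨T.st.f i _ ih.1, T'.st.f i _ ih.2⟩
  have hwt : ∀ p ∈ P, p ∈ wt (fun i => (h i, h' i)) ![1, 0, 0, 0] → ∃ c : ℂ, p = c • (v, v') :=
    fun p hp hpw => fspan_wt CC F4_finType vvw hp hpw
  have inj1 : ∀ y, ((0, y) : g × g) ∈ P → y = 0 := by
    let V := P.comap (LinearMap.inr ℂ g g)
    have hV : V ≤ U' := fun y hy => (hPU hy).2
    have hVS : Stable e' f' V := by
      constructor
      · intro i y hy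
        have := PS.e i _ hy
        simpa [V] using this
      · intro i y hy
        have := PS.f i _ hy
        simpa [V, F] using this
    have : V = ⊥ := by
      by_contra hV0
      have hVU := T'.irred C' hn' hV hVS hV0
      have : v' ∈ V := by rw [hVU]; exact vU'
      obtain ⟨c, hc⟩ := hwt (0, v') this (fun i => Prod.ext (by simp) (vw' i))
      have c1 : 0 = c • v := congrArg Prod.fst hc
      have c2 : v' = c • v' := congrArg Prod.snd hc
      have c0 : c = 0 := (smul_eq_zero.mp c1.symm).resolve_right v0
      rw [c0, zero_smul] at c2
      exact v0' c2
    intro y hy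
    have hy' : y ∈ V := hy
    rw [this] at hy'
    simpa using hy'
  have inj2 : ∀ y, ((y, 0) : g × g) ∈ P → y = 0 := by
    let V := P.comap (LinearMap.inl ℂ g g)
    have hV : V ≤ U := fun y hy => (hPU hy).1
    have hVS : Stable e f V := by
      constructor
      · intro i y hy
        have := PS.e i _ hy
        simpa [V] using this
      · intro i y hy
        have := PS.f i _ hy
        simpa [V, F] using this
    have : V = ⊥ := by
      by_contra hV0
      have hVU := T.irred C hn hV hVS hV0
      have : v ∈ V := by rw [hVU]; exact vU
      obtain ⟨c, hc⟩ := hwt (v, 0) this (fun i => Prod.ext (vw i) (by simp))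
      have c1 : v = c • v := congrArg Prod.fst hc
      have c2 : 0 = c • v' := congrArg Prod.snd hc
      have c0 : c = 0 := (smul_eq_zero.mp c2.symm).resolve_right v0'
      rw [c0, zero_smul] at c1
      exact v0 c1
    intro y hy
    have hy' : y ∈ V := hy
    rw [this] at hy'
    simpa using hy'
  have sur1 : P.map (LinearMap.fst ℂ g g) = U := by
    refine T.irred C hn ?_ ⟨?_, ?_⟩ ?_
    · rintro _ ⟨p, hp, rfl⟩; exact (hPU hp).1
    · rintro i _ ⟨p, hp, rfl⟩; exact ⟨_, PS.e i p hp, rfl⟩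
    · rintro i _ ⟨p, hp, rfl⟩; exact ⟨_, PS.f i p hp, rfl⟩
    · rw [Submodule.ne_bot_iff]; exact ⟨v, ⟨_, hvP, rfl⟩, v0⟩
  have sur2 : P.map (LinearMap.snd ℂ g g) = U' := by
    refine T'.irred C' hn' ?_ ⟨?_, ?_⟩ ?_
    · rintro _ ⟨p, hp, rfl⟩; exact (hPU hp).2
    · rintro i _ ⟨p, hp, rfl⟩; exact ⟨_, PS.e i p hp, rfl⟩
    · rintro i _ ⟨p, hp, rfl⟩; exact ⟨_, PS.f i p hp, rfl⟩
    · rw [Submodule.ne_bot_iff]; exact ⟨v', ⟨_, hvP, rfl⟩, v0'⟩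
  let π : P →ₗ[ℂ] U := (LinearMap.fst ℂ g g).restrict fun p hp => (hPU hp).1
  let π' : P →ₗ[ℂ] U' := (LinearMap.snd ℂ g g).restrict fun p hp => (hPU hp).2
  have bij : Function.Bijective π := by
    constructor
    · rw [← LinearMap.ker_eq_bot, LinearMap.ker_eq_bot']
      rintro ⟨⟨a, b⟩, hp⟩ h0
      have ha : a = 0 := congrArg Subtype.val h0
      subst ha
      have hb := inj1 b hp
      subst hb
      rfl
    · rintro ⟨x, hx⟩
      rw [← sur1] at hx
      obtain ⟨p, hp, hpx⟩ := hx
      exact ⟨⟨p, hp⟩, Subtype.ext hpx⟩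
  have bij' : Function.Bijective π' := by
    constructor
    · rw [← LinearMap.ker_eq_bot, LinearMap.ker_eq_bot']
      rintro ⟨⟨a, b⟩, hp⟩ h0
      have hb : b = 0 := congrArg Subtype.val h0
      subst hb
      have ha := inj2 a hp
      subst ha
      rfl
    · rintro ⟨x, hx⟩
      rw [← sur2] at hx
      obtain ⟨p, hp, hpx⟩ := hx
      exact ⟨⟨p, hp⟩, Subtype.ext hpx⟩
  let t := (LinearEquiv.ofBijective π bij).symm.trans (LinearEquiv.ofBijective π' bij')
  have ht : ∀ p (hp : p ∈ P) (hp1 : p.1 ∈ U), (t ⟨p.1, hp1⟩ : g) = p.2 := by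
    intro p hp hp1
    have h1 : (LinearEquiv.ofBijective π bij).symm ⟨p.1, hp1⟩ = ⟨p, hp⟩ := by
      rw [LinearEquiv.symm_apply_eq]; rfl
    change ((LinearEquiv.ofBijective π' bij' ((LinearEquiv.ofBijective π bij).symm _) : U') : g) = _
    rw [h1]; rfl
  have hx : ∀ x : U, ((x : g), (t x : g)) ∈ P := by
    intro x
    obtain ⟨p, hp, hpx⟩ := (sur1 ▸ x.2 : (x : g) ∈ P.map (LinearMap.fst ℂ g g))
    have hpx : p.1 = x := hpx
    have h1 := ht p hp (by rw [hpx]; exact x.2)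
    have h2 : (⟨p.1, by rw [hpx]; exact x.2⟩ : U) = x := Subtype.ext hpx
    rw [h2] at h1
    rw [h1, ← hpx]
    exact hp
  exact ⟨t, fun i x => ht _ (PS.e i _ (hx x)) _, fun i x => ht _ (PS.f i _ (hx x)) _⟩

end Iso

/-! ### Vanishing of the invariant trilinear form on a standard module -/

section Omega
variable {g : Type*} [LieRing g] [LieAlgebra ℂ g] [FiniteDimensional ℂ g]

lemma killing_lie (x y z : g) : killingForm ℂ g ⁅x, y⁆ z = killingForm ℂ g x ⁅y, z⁆ :=
  LieModule.traceForm_apply_lie_apply ℂ g g x y z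

lemma killing_comm (x y : g) : killingForm ℂ g x y = killingForm ℂ g y x :=
  LieModule.traceForm_comm ℂ g g x y

lemma killing_equiv (n : g ≃ₗ⁅ℂ⁆ g) (x y : g) :
    killingForm ℂ g (n x) (n y) = killingForm ℂ g x y := by
  rw [killingForm_apply_apply, killingForm_apply_apply,
    ← LinearMap.trace_conj' (LieAlgebra.ad ℂ g x ∘ₗ LieAlgebra.ad ℂ g y) n.toLinearEquiv]
  congr 1
  ext z
  change ⁅n x, ⁅n y, z⁆⁆ = n ⁅x, ⁅y, n.symm z⁆⁆
  rw [LieEquiv.map_lie, LieEquiv.map_lie, LieEquiv.apply_symm_apply]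

/-- The alternating property of `(x, y, z) ↦ κ(⁅x, y⁆, z)` in the last two arguments. -/
lemma killing_swap (x y z : g) : killingForm ℂ g ⁅x, y⁆ z = -killingForm ℂ g ⁅x, z⁆ y := by
  rw [killing_lie, killing_lie, ← lie_skew y z, map_neg]

/-- Weight spaces are orthogonal for the Killing form unless their weights are opposite. -/
lemma killing_wt {ι : Type*} {h : ι → g} {l m : ι → ℤ} {x y : g} (hx : x ∈ wt h l)
    (hy : y ∈ wt h m) (hlm : l + m ≠ 0) : killingForm ℂ g x y = 0 := by
  obtain ⟨i, hi⟩ := Function.ne_iff.mp hlm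
  have h1 := killing_lie x (h i) y
  rw [← lie_skew, hx i, hy i] at h1
  simp only [map_neg, map_smul, LinearMap.neg_apply, LinearMap.smul_apply, smul_eq_mul] at h1
  have h2 : ((l i : ℂ) + m i) * killingForm ℂ g x y = 0 := by linear_combination -h1
  rcases mul_eq_zero.mp h2 with h3 | h3
  · exact absurd (by exact_mod_cast h3) hi
  · exact h3

variable {h e f : Fin 4 → g} {U : Submodule ℂ g}

/-- `PP h U l`: the trilinear form vanishes on `U₀ × U_l × U_{-l}`. -/
def PP (h : Fin 4 → g) (U : Submodule ℂ g) (l : Fin 4 → ℤ) : Prop :=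
  ∀ z ∈ U, z ∈ wt h 0 → ∀ x ∈ U, x ∈ wt h l → ∀ y ∈ U, y ∈ wt h (-l) →
    killingForm ℂ g ⁅z, x⁆ y = 0

lemma sr_zero (i : Fin 4) : sr F₄ i 0 = 0 := by simp [sr]
lemma sr_neg (i : Fin 4) (l : Fin 4 → ℤ) : sr F₄ i (-l) = -sr F₄ i l := by
  simp [sr]; abel

lemma PP_sr (C : IsChev F₄ h e f) (S : Stable e f U) (i : Fin 4) (l : Fin 4 → ℤ)
    (H : PP h U l) : PP h U (sr F₄ i l) := by
  intro z hz hz0 x hx hxl y hy hyl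
  obtain ⟨n, R⟩ := exists_refl C F4_two i
  have hU := R.stable U (S.e i) (S.f i)
  rw [← killing_equiv n, LieEquiv.map_lie]
  refine H _ (hU _ hz) ?_ _ (hU _ hx) ?_ _ (hU _ hy) ?_
  · simpa [sr_zero] using R.map_wt F4_two hz0
  · simpa [sr_sr F4_two] using R.map_wt F4_two hxl
  · simpa [sr_sr F4_two, sr_neg] using R.map_wt F4_two hyl

/-- Let `k` be the lift of the product of the reflections in the orthogonal long roots `α₂` and
`α₂ + 2 α₁`. It fixes `U₀` pointwise, since long roots are not weights of `U`, and it exchanges the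
lines of weights `α₁` and `-α₁`. As `k` preserves both the Killing form and the trilinear form, which
is alternating, the latter equals its own negative. -/
lemma PP_col1 (C : IsChev F₄ h e f) (T : Std h e f U)
    (hB : ∀ x ∈ U, (∀ y ∈ U, killingForm ℂ g x y = 0) → x = 0) : PP h U (F₄.col 1) := by
  intro z hz hz0 x hx hxl y hy hyl
  by_cases hx0 : x = 0
  · simp [hx0]
  by_cases hy0 : y = 0
  · simp [hy0]
  obtain ⟨n, R⟩ := exists_refl C F4_two 1
  obtain ⟨m, Q⟩ := exists_refl C F4_two 2
  have hn := R.stable U (T.st.e 1) (T.st.f 1)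
  have hn' : ∀ x ∈ U, n.symm x ∈ U := fun x hx => R.stable' (T.st.e 1) (T.st.f 1) hx
  have hm := Q.stable U (T.st.e 2) (T.st.f 2)
  -- the long root `α₂` is not a weight of `U`, so the reflection `m` is trivial on `U₀`
  have hfix : ∀ z ∈ U, z ∈ wt h 0 → m z = z := by
    intro z hz hz0
    refine Q.fix z ?_ ?_
    · by_contra h0
      have := T.wts (F₄.col 2) ⟨_, T.st.e 2 z hz, h0, by simpa using C.e_wt 2 hz0⟩
      rw [F4_col2] at this
      revert this; decide +kernel
    · by_contra h0
      have := T.wts (-F₄.col 2) ⟨_, T.st.f 2 z hz, h0, by simpa using C.f_wt 2 hz0⟩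
      rw [F4_col2] at this
      revert this; decide +kernel
  set k : g → g := fun x => m (n (m (n.symm x))) with hk
  have hkU : ∀ x ∈ U, k x ∈ U := fun x hx => hm _ (hn _ (hm _ (hn' _ hx)))
  have hkz : k z = z := by
    have h1 : n.symm z ∈ wt h 0 := by simpa [sr_zero] using R.symm_wt hz0
    simp only [hk]
    rw [hfix _ (hn' _ hz) h1, LieEquiv.apply_symm_apply, hfix z hz hz0]
  have hkw : ∀ l x, x ∈ wt h l → k x ∈ wt h (sr F₄ 2 (sr F₄ 1 (sr F₄ 2 (sr F₄ 1 l)))) :=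
    fun l x hx => Q.map_wt F4_two (R.map_wt F4_two (Q.map_wt F4_two (R.symm_wt hx)))
  have hkl : ∀ x y, k ⁅x, y⁆ = ⁅k x, k y⁆ := fun x y => by
    simp only [hk, LieEquiv.map_lie]
  have hkk : ∀ x y, killingForm ℂ g (k x) (k y) = killingForm ℂ g x y := fun x y => by
    simp only [hk, killing_equiv]
  have hs : sr F₄ 2 (sr F₄ 1 (sr F₄ 2 (sr F₄ 1 (F₄.col 1)))) = -F₄.col 1 := by
    rw [F4_col1]; decide +kernel
  have hs' : sr F₄ 2 (sr F₄ 1 (sr F₄ 2 (sr F₄ 1 (-F₄.col 1)))) = F₄.col 1 := by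
    rw [F4_col1]; decide +kernel
  have d1 : finrank ℂ ↥(U ⊓ wt h (F₄.col 1)) = 1 := T.one _ (by rw [F4_col1]; decide +kernel)
  have d2 : finrank ℂ ↥(U ⊓ wt h (-F₄.col 1)) = 1 := T.one _ (by rw [F4_col1]; decide +kernel)
  have kx := hkw _ x hxl
  have ky := hkw _ y hyl
  rw [hs] at kx
  rw [hs'] at ky
  obtain ⟨c, hc⟩ := line d2 hy hyl hy0 (hkU x hx) kx
  obtain ⟨c', hc'⟩ := line d1 hx hxl hx0 (hkU y hy) ky
  have hne : killingForm ℂ g x y ≠ 0 := by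
    intro h0
    apply hx0
    apply hB x hx
    intro w hw
    have hle : U ≤ LinearMap.ker (killingForm ℂ g x) := by
      conv_lhs => rw [T.top]
      refine Finset.sup_le fun l _ w hw => ?_
      rw [LinearMap.mem_ker]
      by_cases hl : l = -F₄.col 1
      · subst hl
        obtain ⟨c, rfl⟩ := line d2 hy hyl hy0 hw.1 hw.2
        rw [map_smul, h0, smul_zero]
      · exact killing_wt hxl hw.2 fun h' => hl (eq_neg_of_add_eq_zero_right h')
    exact hle hw
  have hcc : c * c' = 1 := by
    have h1 := hkk x y
    rw [hc, hc'] at h1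
    simp only [map_smul, LinearMap.smul_apply, smul_eq_mul] at h1
    rw [killing_comm y x] at h1
    apply mul_right_cancel₀ hne
    linear_combination h1
  have h2 := hkk ⁅z, x⁆ y
  rw [hkl, hkz, hc, hc'] at h2
  simp only [lie_smul, map_smul, LinearMap.smul_apply, smul_eq_mul] at h2
  rw [killing_swap z y x] at h2
  have h3 : (2 : ℂ) * killingForm ℂ g ⁅z, x⁆ y = 0 := by
    linear_combination -h2 - killingForm ℂ g ⁅z, x⁆ y * hcc
  simpa using h3

lemma PP_short (C : IsChev F₄ h e f) (T : Std h e f U)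
    (hB : ∀ x ∈ U, (∀ y ∈ U, killingForm ℂ g x y = 0) → x = 0) :
    ∀ l ∈ SF, PP h U l := by
  have h0 : PP h U (F₄.col 0) := by
    have h1 := PP_sr C T.st 1 _ (PP_sr C T.st 0 _ (PP_col1 C T hB))
    have h2 : sr F₄ 1 (sr F₄ 0 (F₄.col 1)) = F₄.col 0 := by
      rw [F4_col0, F4_col1]; decide +kernel
    rwa [h2] at h1
  intro l hl
  exact short_induction (PP h U) (fun i l H => PP_sr C T.st i l H) h0 l (mem_SF.mp hl)

/-- An alternating trilinear form vanishes on the two-dimensional zero weight space. -/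
lemma PP_zero (T : Std h e f U) : PP h U 0 := by
  intro z hz hz0 x hx hx0 y hy hy0
  rw [neg_zero] at hy0
  have hself : ∀ a b : g, killingForm ℂ g ⁅a, b⁆ b = 0 := fun a b => by
    rw [killing_lie, lie_self, map_zero]
  have hself' : ∀ a b : g, killingForm ℂ g ⁅a, b⁆ a = 0 := fun a b => by
    rw [← lie_skew, map_neg, LinearMap.neg_apply, hself, neg_zero]
  let v : Fin 3 → ↥(U ⊓ wt h 0) := ![⟨z, hz, hz0⟩, ⟨x, hx, hx0⟩, ⟨y, hy, hy0⟩]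
  have hv : ¬LinearIndependent ℂ v := fun hv => by
    have := hv.fintype_card_le_finrank
    rw [T.zero] at this
    simp at this
  obtain ⟨a, ha, i, hi⟩ := Fintype.not_linearIndependent_iff.mp hv
  have ha' : a 0 • z + a 1 • x + a 2 • y = 0 := by
    have := congrArg Subtype.val ha
    simpa [Fin.sum_univ_three, v] using this
  fin_cases i
  · have h1 : killingForm ℂ g ⁅a 0 • z + a 1 • x + a 2 • y, x⁆ y = 0 := by rw [ha']; simp
    exact (by simpa [hself, hself'] using h1 : a 0 = 0 ∨ _).resolve_left hi
  · have h1 : killingForm ℂ g ⁅z, a 0 • z + a 1 • x + a 2 • y⁆ y = 0 := by rw [ha']; simp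
    exact (by simpa [hself, hself'] using h1 : a 1 = 0 ∨ _).resolve_left hi
  · have h1 : killingForm ℂ g ⁅z, x⁆ (a 0 • z + a 1 • x + a 2 • y) = 0 := by rw [ha']; simp
    exact (by simpa [hself, hself'] using h1 : a 2 = 0 ∨ _).resolve_left hi

/-- The invariant alternating trilinear form `κ(⁅x, y⁆, z)` vanishes on `U`. -/
lemma Std.omega (C : IsChev F₄ h e f) (hn : ∀ i, h i ≠ 0) (T : Std h e f U)
    (hB : ∀ x ∈ U, (∀ y ∈ U, killingForm ℂ g x y = 0) → x = 0)
    {z x y : g} (hz : z ∈ U) (hx : x ∈ U) (hy : y ∈ U) : killingForm ℂ g ⁅z, x⁆ y = 0 := by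
  let K : Submodule ℂ g :=
    { carrier := {z | z ∈ U ∧ ∀ x ∈ U, ∀ y ∈ U, killingForm ℂ g ⁅z, x⁆ y = 0}
      add_mem' := fun {a b} ha hb => ⟨add_mem ha.1 hb.1, fun x hx y hy => by
        rw [add_lie, map_add, LinearMap.add_apply, ha.2 x hx y hy, hb.2 x hx y hy, add_zero]⟩
      zero_mem' := ⟨zero_mem _, fun x _ y _ => by simp⟩
      smul_mem' := fun c a ha => ⟨U.smul_mem c ha.1, fun x hx y hy => by
        rw [smul_lie, map_smul, LinearMap.smul_apply, ha.2 x hx y hy, smul_zero]⟩ }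
  have key : ∀ u : g, (∀ x ∈ U, ⁅u, x⁆ ∈ U) → ∀ z ∈ K, ⁅u, z⁆ ∈ K := by
    intro u hu z hz
    refine ⟨hu z hz.1, fun x hx y hy => ?_⟩
    rw [lie_lie, map_sub, LinearMap.sub_apply, hz.2 _ (hu x hx) y hy, sub_zero,
      ← lie_skew, map_neg, LinearMap.neg_apply, killing_lie, hz.2 x hx _ (hu y hy), neg_zero]
  have hK : Stable e f K := ⟨fun i => key _ (T.st.e i), fun i => key _ (T.st.f i)⟩
  have h0 : U ⊓ wt h 0 ≤ K := by
    rintro z ⟨hz, hz0⟩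
    refine ⟨hz, fun x hx y hy => ?_⟩
    have hle : U ≤ LinearMap.ker ((killingForm ℂ g).flip y ∘ₗ LieAlgebra.ad ℂ g z) := by
      conv_lhs => rw [T.top]
      refine Finset.sup_le fun l hl x hx => ?_
      have hle : U ≤ LinearMap.ker (killingForm ℂ g ⁅z, x⁆) := by
        conv_lhs => rw [T.top]
        refine Finset.sup_le fun m _ y hy => ?_
        rw [LinearMap.mem_ker]
        by_cases hm : m = -l
        · subst hm
          rcases Finset.mem_insert.mp hl with rfl | hl
          · exact PP_zero T z hz hz0 x hx.1 hx.2 y hy.1 hy.2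
          · exact PP_short C T hB l hl z hz hz0 x hx.1 hx.2 y hy.1 hy.2
        · refine killing_wt (lie_mem_wt hz0 hx.2) hy.2 fun h' => hm ?_
          rw [zero_add] at h'
          exact eq_neg_of_add_eq_zero_right h'
      exact hle hy
    exact hle hx
  have hKU : K = U := by
    refine T.irred C hn (fun z hz => hz.1) hK fun hb => ?_
    have h1 := T.zero
    rw [show U ⊓ wt h 0 = ⊥ from le_bot_iff.mp (hb ▸ h0)] at h1
    simp at h1
  exact (hKU ▸ hz : z ∈ K).2 x hx y hy

end Omega

/-! ### The orthogonal complement of an embedded algebra -/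

section Conj
variable {L g : Type*} [LieRing L] [LieAlgebra ℂ L] [LieRing g] [LieAlgebra ℂ g]
  [FiniteDimensional ℂ g]

lemma IsChev.map {ι : Type*} {A : Matrix ι ι ℤ} {h e f : ι → L} (C : IsChev A h e f)
    (ε : L →ₗ⁅ℂ⁆ g) : IsChev A (fun i => ε (h i)) (fun i => ε (e i)) (fun i => ε (f i)) where
  hh i j := by rw [← LieHom.map_lie, C.hh, map_zero]
  he i j := by rw [← LieHom.map_lie, C.he, map_smul]
  hf i j := by rw [← LieHom.map_lie, C.hf, map_neg, map_smul]
  ef i := by rw [← LieHom.map_lie, C.ef]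
  ef' i j hij := by rw [← LieHom.map_lie, C.ef' i j hij, map_zero]

/-- The orthogonal complement of the image of `ε` with respect to the Killing form. -/
def perp (ε : L →ₗ⁅ℂ⁆ g) : Submodule ℂ g where
  carrier := {w | ∀ x, killingForm ℂ g (ε x) w = 0}
  add_mem' ha hb x := by rw [map_add, ha x, hb x, add_zero]
  zero_mem' x := by simp
  smul_mem' c a ha x := by rw [map_smul, ha x, smul_zero]

lemma perp_stable (ε : L →ₗ⁅ℂ⁆ g) (x : L) (w : g) (hw : w ∈ perp ε) : ⁅ε x, w⁆ ∈ perp ε :=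
  fun y => by rw [← killing_lie, ← LieHom.map_lie, hw]

/-- By Cartan's criterion the Killing form of `g` is nondegenerate on the image of a simple
Lie algebra. -/
lemma killing_map_nondeg (ε : L →ₗ⁅ℂ⁆ g) [LieAlgebra.IsSimple ℂ L] {h e f : Fin 4 → L}
    (C : IsChev F₄ h e f) (hε : Function.Injective ε) (hn : h 0 ≠ 0) (x : L)
    (hx : ∀ y, killingForm ℂ g (ε x) (ε y) = 0) : x = 0 := by
  let J : LieIdeal ℂ L :=
    { carrier := {x | ∀ y, killingForm ℂ g (ε x) (ε y) = 0}
      add_mem' := fun ha hb x => by rw [map_add, map_add, LinearMap.add_apply, ha x, hb x, add_zero]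
      zero_mem' := fun x => by simp
      smul_mem' := fun c a ha x => by
        rw [map_smul, map_smul, LinearMap.smul_apply, ha x, smul_zero]
      lie_mem := fun {a b} hb y => by
        rw [← lie_skew, map_neg, map_neg, LinearMap.neg_apply, LieHom.map_lie, killing_lie,
          ← LieHom.map_lie, hb, neg_zero] }
  rcases LieAlgebra.IsSimple.eq_bot_or_eq_top (R := ℂ) J with hJ | hJ
  · have : x ∈ J := hx
    rw [hJ] at this
    simpa using this
  · exfalso
    have hJ' : ∀ x y, killingForm ℂ g (ε x) (ε y) = 0 := fun x => by
      have : x ∈ J := by rw [hJ]; trivial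
      exact this
    let _ : LieRingModule L g := LieRingModule.compLieHom g ε
    have _ : LieModule ℂ L g := LieModule.compLieHom g ε
    have h1 : LieModule.traceForm ℂ L g = 0 := by
      ext x y
      exact hJ' x y
    have h2 := LieModule.isNilpotent_derivedSeries_of_traceForm_eq_zero h1
    rw [LieModule.isNilpotent_iff_forall' (R := ℂ)] at h2
    have hm : h 0 ∈ LieAlgebra.derivedSeries ℂ L 1 := by
      rw [← C.ef 0, LieAlgebra.derivedSeries_def, LieAlgebra.derivedSeriesOfIdeal_succ,
        LieAlgebra.derivedSeriesOfIdeal_zero]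
      exact LieSubmodule.lie_mem_lie trivial trivial
    obtain ⟨k, hk⟩ := h2 ⟨h 0, hm⟩
    have h3 : ∀ k : ℕ, ((LieModule.toEnd ℂ (LieAlgebra.derivedSeries ℂ L 1) g ⟨h 0, hm⟩) ^ k)
        (ε (e 0)) = (2 : ℂ) ^ k • ε (e 0) := by
      intro k
      induction k with
      | zero => simp
      | succ k ih =>
        rw [pow_succ', Module.End.mul_apply, ih, map_smul]
        change (2 : ℂ) ^ k • ⁅ε (h 0), ε (e 0)⁆ = _
        rw [← LieHom.map_lie, C.he, F4_two, map_smul, smul_smul, pow_succ]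
        norm_num
    have h4 := h3 k
    rw [hk, LinearMap.zero_apply] at h4
    have h5 : e 0 = 0 := by
      rcases smul_eq_zero.mp h4.symm with h | h
      · simp at h
      · exact hε (by rw [h, map_zero])
    apply hn
    rw [← C.ef, h5, zero_lie]

/-- `g` is the orthogonal sum of the image of `ε` and its complement. -/
lemma perp_bijective (ε : L →ₗ⁅ℂ⁆ g) [FiniteDimensional ℂ L]
    (hκ : ∀ x, (∀ y, killingForm ℂ g (ε x) (ε y) = 0) → x = 0) :
    Function.Bijective ((ε : L →ₗ[ℂ] g).coprod (perp ε).subtype) := by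
  constructor
  · rw [← LinearMap.ker_eq_bot, LinearMap.ker_eq_bot']
    rintro ⟨x, w, hw⟩ h0
    have h1 : ε x + w = 0 := by simpa using h0
    have hx : x = 0 := hκ x fun y => by
      rw [eq_neg_of_add_eq_zero_left h1, map_neg, LinearMap.neg_apply, killing_comm, hw, neg_zero]
    subst hx
    rw [map_zero, zero_add] at h1
    subst h1
    rfl
  · intro v
    let D : L →ₗ[ℂ] Dual ℂ L := ((killingForm ℂ g).compl₁₂ (ε : L →ₗ[ℂ] g) (ε : L →ₗ[ℂ] g))
    have hD : Function.Injective D := by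
      rw [← LinearMap.ker_eq_bot, LinearMap.ker_eq_bot']
      intro x hx
      exact hκ x fun y => LinearMap.congr_fun hx y
    obtain ⟨x, hx⟩ := (LinearMap.injective_iff_surjective_of_finrank_eq_finrank
      (Subspace.dual_finrank_eq (K := ℂ) (V := L)).symm).mp hD
      (killingForm ℂ g v ∘ₗ (ε : L →ₗ[ℂ] g))
    refine ⟨(x, ⟨v - ε x, fun y => ?_⟩), by simp⟩
    have h1 : killingForm ℂ g (ε x) (ε y) = killingForm ℂ g v (ε y) := LinearMap.congr_fun hx y
    rw [map_sub, killing_comm (ε y) v, ← h1, killing_comm (ε y), sub_self]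

lemma perp_nondeg [LieAlgebra.IsKilling ℂ g] (ε : L →ₗ⁅ℂ⁆ g)
    (hb : Function.Bijective ((ε : L →ₗ[ℂ] g).coprod (perp ε).subtype)) (x : g) (hx : x ∈ perp ε)
    (h0 : ∀ y ∈ perp ε, killingForm ℂ g x y = 0) : x = 0 := by
  apply (LieAlgebra.IsKilling.killingForm_nondegenerate ℂ g).1 x
  intro y
  obtain ⟨⟨a, w⟩, rfl⟩ := hb.2 y
  rw [LinearMap.coprod_apply, map_add]
  have h1 := hx a
  rw [killing_comm] at h1
  have h2 := h0 w w.2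
  simpa [h2] using h1

/-- If the complement has only the weight zero then it centralizes the image of `ε`, which is
therefore an ideal. -/
lemma surj_of_trivial [LieAlgebra.IsSimple ℂ g] (ε : L →ₗ⁅ℂ⁆ g) (hε : Function.Injective ε)
    {h e f : Fin 4 → L} (C : IsChev F₄ h e f) (G : Generates e f) (hn : ∀ i, h i ≠ 0)
    (hb : Function.Bijective ((ε : L →ₗ[ℂ] g).coprod (perp ε).subtype))
    (hw : ∀ l, HasWt (fun i => ε (h i)) (perp ε) l → l = 0) : Function.Surjective ε := by
  have hn' : ∀ i, ε (h i) ≠ 0 := fun i h0 => hn i (hε (by rw [h0, map_zero]))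
  have S : Stable (fun i => ε (e i)) (fun i => ε (f i)) (perp ε) :=
    ⟨fun i => perp_stable ε (e i), fun i => perp_stable ε (f i)⟩
  let K : LieSubalgebra ℂ L :=
    { carrier := {x | ∀ w ∈ perp ε, ⁅ε x, w⁆ = 0}
      add_mem' := fun ha hb w hw => by rw [map_add, add_lie, ha w hw, hb w hw, add_zero]
      zero_mem' := fun w _ => by simp
      smul_mem' := fun c a ha w hw => by rw [map_smul, smul_lie, ha w hw, smul_zero]
      lie_mem' := fun {a b} ha hb w hw => by
        rw [LieHom.map_lie, lie_lie, ha w hw, hb w hw, lie_zero, lie_zero, sub_zero] }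
  have hK := G K (fun i w hx => trivial_e (C.map ε) F4_two hn' S hw i w hx)
    (fun i w hx => trivial_f (C.map ε) F4_two hn' S hw i w hx)
  let J : LieIdeal ℂ g :=
    { __ := (ε.range : Submodule ℂ g)
      lie_mem := fun {a b} hb' => by
        obtain ⟨⟨x, w⟩, rfl⟩ := hb.2 a
        obtain ⟨y, rfl⟩ := hb'
        refine ⟨⁅x, y⁆, ?_⟩
        have hy : y ∈ K := by rw [hK]; trivial
        have h1 : ⁅(w : g), ε y⁆ = 0 := by rw [← lie_skew, hy w w.2, neg_zero]
        simpa [add_lie] using h1 }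
  have hJ : J = ⊤ := by
    refine (LieAlgebra.IsSimple.eq_bot_or_eq_top (R := ℂ) J).resolve_left fun hJ => hn' 0 ?_
    have : ε (h 0) ∈ J := ⟨h 0, rfl⟩
    rw [hJ] at this
    simpa using this
  intro v
  have : v ∈ J := by rw [hJ]; trivial
  exact this

variable {h e f h' e' f' : Fin 4 → g} {U U' : Submodule ℂ g}

/-- The isomorphism of modules can be normalized, by Schur's lemma, to be an isometry for the
Killing form. -/
lemma Std.isometry (T : Std h e f U) (T' : Std h' e' f' U') (C : IsChev F₄ h e f)
    (C' : IsChev F₄ h' e' f') (hn : ∀ i, h i ≠ 0) (hn' : ∀ i, h' i ≠ 0)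
    (hB : ∀ x ∈ U, (∀ y ∈ U, killingForm ℂ g x y = 0) → x = 0)
    (hB' : ∀ x ∈ U', (∀ y ∈ U', killingForm ℂ g x y = 0) → x = 0) :
    ∃ t : U ≃ₗ[ℂ] U', (∀ i (x : U), (t ⟨⁅e i, x⁆, T.st.e i x x.2⟩ : g) = ⁅e' i, (t x : g)⁆) ∧
      (∀ i (x : U), (t ⟨⁅f i, x⁆, T.st.f i x x.2⟩ : g) = ⁅f' i, (t x : g)⁆) ∧
      ∀ x y : U, killingForm ℂ g (t x) (t y) = killingForm ℂ g x y := by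
  obtain ⟨t, hE, hF⟩ := T.iso T' C C' hn hn'
  let B : U →ₗ[ℂ] Dual ℂ U := (killingForm ℂ g).compl₁₂ U.subtype U.subtype
  let B' : U →ₗ[ℂ] Dual ℂ U := (killingForm ℂ g).compl₁₂ (U'.subtype ∘ₗ t) (U'.subtype ∘ₗ t)
  have hBi : Function.Injective B := by
    rw [← LinearMap.ker_eq_bot, LinearMap.ker_eq_bot']
    intro x hx
    exact Subtype.ext (hB x x.2 fun y hy => LinearMap.congr_fun hx ⟨y, hy⟩)
  let D := LinearEquiv.ofBijective B ⟨hBi, (LinearMap.injective_iff_surjective_of_finrank_eq_finrank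
      (Subspace.dual_finrank_eq (K := ℂ) (V := U)).symm).mp hBi⟩
  have : Nontrivial U := nontrivial_of_finrank_pos (R := ℂ) (by rw [T.dim]; norm_num)
  obtain ⟨c, hc⟩ := Module.End.exists_eigenvalue (K := ℂ) (D.symm.toLinearMap ∘ₗ B')
  obtain ⟨v, hv⟩ := hc.exists_hasEigenvector
  have hv1 : B' v = c • B v := by
    have h1 : D.symm (B' v) = c • v := hv.apply_eq_smul
    have h2 := congrArg D h1
    rw [LinearEquiv.apply_symm_apply, map_smul] at h2
    exact h2
  let K : Submodule ℂ U := LinearMap.ker (B' - c • B)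
  have hinv : ∀ (u u' : g) (hu : ∀ x ∈ U, ⁅u, x⁆ ∈ U),
      (∀ x : U, (t ⟨⁅u, x⁆, hu x x.2⟩ : g) = ⁅u', (t x : g)⁆) →
      ∀ x ∈ K.map U.subtype, ⁅u, x⁆ ∈ K.map U.subtype := by
    rintro u u' hu ht _ ⟨x, hx, rfl⟩
    refine ⟨⟨⁅u, x⁆, hu x x.2⟩, ?_, rfl⟩
    change (B' - c • B) _ = 0
    ext y
    have hxy : killingForm ℂ g (t x) (t ⟨⁅u, y⁆, hu y y.2⟩) - c * killingForm ℂ g x ⁅u, (y : g)⁆ = 0 :=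
      LinearMap.congr_fun (show (B' - c • B) x = 0 from hx) ⟨⁅u, y⁆, hu y y.2⟩
    change killingForm ℂ g (t ⟨⁅u, x⁆, hu x x.2⟩) (t y) - c * killingForm ℂ g ⁅u, (x : g)⁆ y = 0
    rw [ht] at hxy
    rw [ht, ← lie_skew, ← lie_skew u (x : g)]
    simp only [map_neg, LinearMap.neg_apply, killing_lie]
    linear_combination -hxy
  have hKS : Stable e f (K.map U.subtype) :=
    ⟨fun i => hinv _ _ (T.st.e i) (hE i), fun i => hinv _ _ (T.st.f i) (hF i)⟩
  have hvK : (v : g) ∈ K.map U.subtype := ⟨v, by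
    change (B' - c • B) v = 0
    rw [LinearMap.sub_apply, hv1, LinearMap.smul_apply, sub_self], rfl⟩
  have hKU : K.map U.subtype = U := by
    refine T.irred C hn (Submodule.map_subtype_le _ _) hKS fun hb => ?_
    rw [hb] at hvK
    exact hv.2 (Subtype.ext (by simpa using hvK))
  have hall : ∀ x y : U, killingForm ℂ g (t x) (t y) = c * killingForm ℂ g x y := by
    intro x y
    have hx : (x : g) ∈ K.map U.subtype := by rw [hKU]; exact x.2
    obtain ⟨x', hx', h1⟩ := hx
    obtain rfl : x' = x := Subtype.ext h1
    exact sub_eq_zero.mp (LinearMap.congr_fun (show (B' - c • B) x' = 0 from hx') y)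
  have hc0 : c ≠ 0 := by
    rintro rfl
    apply hv.2
    apply t.injective
    rw [map_zero]
    refine Subtype.ext (hB' _ (t v).2 fun y hy => ?_)
    have := hall v (t.symm ⟨y, hy⟩)
    rwa [zero_mul, LinearEquiv.apply_symm_apply] at this
  obtain ⟨s, hs⟩ := IsAlgClosed.exists_pow_nat_eq c⁻¹ (n := 2) (by norm_num)
  have hs0 : s ≠ 0 := by
    rintro rfl
    exact inv_ne_zero hc0 (by rw [← hs]; simp)
  refine ⟨t.trans (LinearEquiv.smulOfNeZero ℂ U' s hs0), fun i x => ?_, fun i x => ?_,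
    fun x y => ?_⟩
  · change s • (t _ : g) = ⁅_, s • (t x : g)⁆
    rw [hE, lie_smul]
  · change s • (t _ : g) = ⁅_, s • (t x : g)⁆
    rw [hF, lie_smul]
  · change killingForm ℂ g (s • (t x : g)) (s • (t y : g)) = _
    rw [map_smul, map_smul, LinearMap.smul_apply, hall, smul_eq_mul, smul_eq_mul]
    have : s * s * c = 1 := by rw [← pow_two, hs, inv_mul_cancel₀ hc0]
    linear_combination killingForm ℂ g x y * this

end Conj

/-! ### Gluing and conjugacy -/

section Main
variable {L g : Type*} [LieRing L] [LieAlgebra ℂ L] [LieRing g] [LieAlgebra ℂ g]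
  [FiniteDimensional ℂ g] [FiniteDimensional ℂ L]

/-- A module isomorphism of the complements, isometric for the Killing form, glues with the
identity of `L` to an automorphism of `g`, provided the bracket of two elements of a complement
lies in the image of `L`. -/
lemma glue (ε ε' : L →ₗ⁅ℂ⁆ g)
    (hb : Function.Bijective ((ε : L →ₗ[ℂ] g).coprod (perp ε).subtype))
    (hb' : Function.Bijective ((ε' : L →ₗ[ℂ] g).coprod (perp ε').subtype))
    (hκ : ∀ x, (∀ y, killingForm ℂ g (ε' x) (ε' y) = 0) → x = 0)
    {e f : Fin 4 → L} (G : Generates e f) (t : perp ε ≃ₗ[ℂ] perp ε')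
    (hE : ∀ i (x : perp ε), (t ⟨⁅ε (e i), x⁆, perp_stable ε _ x x.2⟩ : g) = ⁅ε' (e i), (t x : g)⁆)
    (hF : ∀ i (x : perp ε), (t ⟨⁅ε (f i), x⁆, perp_stable ε _ x x.2⟩ : g) = ⁅ε' (f i), (t x : g)⁆)
    (ht : ∀ x y : perp ε, killingForm ℂ g (t x) (t y) = killingForm ℂ g x y)
    (hW : ∀ x y : perp ε, ∃ u, ⁅(x : g), (y : g)⁆ = ε u)
    (hW' : ∀ x y : perp ε', ∃ u, ⁅(x : g), (y : g)⁆ = ε' u) :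
    ∃ φ : g ≃ₗ⁅ℂ⁆ g, ∀ x, ε' x = φ (ε x) := by
  let P := LinearEquiv.ofBijective _ hb
  let P' := LinearEquiv.ofBijective _ hb'
  have hP : ∀ x (w : perp ε), P (x, w) = ε x + w := fun x w => rfl
  have hP' : ∀ x (w : perp ε'), P' (x, w) = ε' x + w := fun x w => rfl
  let φ : g ≃ₗ[ℂ] g := (P.symm.trans ((LinearEquiv.refl ℂ L).prodCongr t)).trans P'
  have hφ : ∀ x (w : perp ε), φ (ε x + w) = ε' x + t w := fun x w => by
    rw [← hP]
    simp [φ, hP']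
  have φx : ∀ x, φ (ε x) = ε' x := fun x => by simpa using hφ x 0
  have φw : ∀ w : perp ε, φ w = t w := fun w => by simpa using hφ 0 w
  have gen : ∀ u : L, (∀ w : perp ε, (t ⟨⁅ε u, w⁆, perp_stable ε _ w w.2⟩ : g) = ⁅ε' u, (t w : g)⁆) →
      ∀ v, φ ⁅ε u, v⁆ = ⁅ε' u, φ v⁆ := by
    intro u hu v
    obtain ⟨⟨x, w⟩, rfl⟩ := P.surjective v
    rw [hP, hφ, lie_add, lie_add, map_add, ← LieHom.map_lie, φx, LieHom.map_lie, ← hu, ← φw]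
  let K : LieSubalgebra ℂ L :=
    { carrier := {x | ∀ v, φ ⁅ε x, v⁆ = ⁅ε' x, φ v⁆}
      add_mem' := fun ha hb v => by
        rw [map_add, add_lie, map_add, ha v, hb v, map_add, add_lie]
      zero_mem' := fun v => by simp
      smul_mem' := fun c a ha v => by rw [map_smul, smul_lie, map_smul, ha v, map_smul, smul_lie]
      lie_mem' := fun {a b} ha hb v => by
        rw [LieHom.map_lie, lie_lie, map_sub, ha, hb, hb, ha, LieHom.map_lie, lie_lie] }
  have hK := G K (fun i => gen _ (hE i)) (fun i => gen _ (hF i))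
  have eqv : ∀ x v, φ ⁅ε x, v⁆ = ⁅ε' x, φ v⁆ := fun x => by
    have : x ∈ K := by rw [hK]; trivial
    exact this
  -- `φ` conjugates `ad (ε x)` to `ad (ε' x)`, so the two trace forms on `L` agree
  have hκκ : ∀ x y, killingForm ℂ g (ε' x) (ε' y) = killingForm ℂ g (ε x) (ε y) := by
    intro x y
    rw [killingForm_apply_apply, killingForm_apply_apply,
      ← LinearMap.trace_conj' (LieAlgebra.ad ℂ g (ε x) ∘ₗ LieAlgebra.ad ℂ g (ε y)) φ]
    congr 1
    ext z
    change ⁅ε' x, ⁅ε' y, z⁆⁆ = φ ⁅ε x, ⁅ε y, φ.symm z⁆⁆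
    rw [eqv, eqv, LinearEquiv.apply_symm_apply]
  have ww : ∀ w z : perp ε, φ ⁅(w : g), (z : g)⁆ = ⁅φ w, φ z⁆ := by
    intro w z
    obtain ⟨u, hu⟩ := hW w z
    obtain ⟨u', hu'⟩ := hW' (t w) (t z)
    rw [φw, φw, hu, hu', φx]
    congr 1
    rw [← sub_eq_zero]
    refine hκ _ fun y => ?_
    have h1 : killingForm ℂ g (ε u) (ε y) =
        -killingForm ℂ g w ⁅ε y, (z : g)⁆ := by
      rw [← hu, killing_lie, ← lie_skew, map_neg]
    have h2 : killingForm ℂ g (ε' u') (ε' y) =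
        -killingForm ℂ g (t w) ⁅ε' y, (t z : g)⁆ := by
      rw [← hu', killing_lie, ← lie_skew, map_neg]
    have h3 := ht w ⟨⁅ε y, (z : g)⁆, perp_stable ε _ z z.2⟩
    rw [← φw ⟨⁅ε y, (z : g)⁆, perp_stable ε _ z z.2⟩, eqv, φw] at h3
    rw [map_sub, map_sub, LinearMap.sub_apply, hκκ, h1, h2, h3, sub_self]
  have hl : ∀ a b, φ ⁅a, b⁆ = ⁅φ a, φ b⁆ := by
    intro a b
    obtain ⟨⟨x, w⟩, rfl⟩ := P.surjective a
    rw [hP, add_lie, map_add, eqv, map_add φ, add_lie, φx]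
    congr 1
    obtain ⟨⟨y, z⟩, rfl⟩ := P.surjective b
    rw [hP, lie_add, map_add, map_add φ, lie_add, ww, ← lie_skew, map_neg, eqv, φx, lie_skew]
  exact ⟨{ φ with map_lie' := fun {a b} => hl a b }, fun x => (φx x).symm⟩

/-- The conjugacy statement, for simple Lie algebras `L` and `g` of which only the dimension bounds
and Chevalley generators of type `F₄` for `L` are used. -/
lemma conjugate [LieAlgebra.IsSimple ℂ L] [LieAlgebra.IsSimple ℂ g] (hL : 52 ≤ finrank ℂ L)
    (hg : finrank ℂ g ≤ 78) {h e f : Fin 4 → L} (C : IsChev F₄ h e f) (G : Generates e f)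
    (hn : ∀ i, h i ≠ 0) (ε ε' : L →ₗ⁅ℂ⁆ g) (hε : Function.Injective ε)
    (hε' : Function.Injective ε') : ∃ φ : g ≃ₗ⁅ℂ⁆ g, ∀ x, ε' x = φ (ε x) := by
  have hbij : ∀ ε : L →ₗ⁅ℂ⁆ g, Function.Injective ε →
      Function.Bijective ((ε : L →ₗ[ℂ] g).coprod (perp ε).subtype) := fun ε hε =>
    perp_bijective ε (killing_map_nondeg ε C hε (hn 0))
  have key : ∀ ε : L →ₗ⁅ℂ⁆ g, Function.Injective ε → Function.Surjective ε ∨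
      Std (fun i => ε (h i)) (fun i => ε (e i)) (fun i => ε (f i)) (perp ε) := by
    intro ε hε
    by_cases hw : ∀ l, HasWt (fun i => ε (h i)) (perp ε) l → l = 0
    · exact Or.inl (surj_of_trivial ε hε C G hn (hbij ε hε) hw)
    · push Not at hw
      obtain ⟨l, H, hl⟩ := hw
      have hd := (LinearEquiv.ofBijective _ (hbij ε hε)).finrank_eq
      rw [finrank_prod] at hd
      exact Or.inr (std_of_le (C.map ε) (fun i h0 => hn i (hε (by rw [h0, map_zero])))
        ⟨fun i => perp_stable ε (e i), fun i => perp_stable ε (f i)⟩ (by omega) H hl)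
  -- if one of the embeddings is onto, then so is the other, and `φ = ε' ∘ ε⁻¹`
  have surj : Function.Surjective ε → Function.Surjective ε' →
      ∃ φ : g ≃ₗ⁅ℂ⁆ g, ∀ x, ε' x = φ (ε x) := fun s s' =>
    ⟨(LieEquiv.ofBijective ε ⟨hε, s⟩).symm.trans (LieEquiv.ofBijective ε' ⟨hε', s'⟩), fun x => by
      have : (LieEquiv.ofBijective ε ⟨hε, s⟩).symm (ε x) = x :=
        (LieEquiv.ofBijective ε ⟨hε, s⟩).symm_apply_apply x
      rw [LieEquiv.trans_apply, this]
      rfl⟩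
  have transfer : ∀ ε ε' : L →ₗ⁅ℂ⁆ g, Function.Injective ε → Function.Injective ε' →
      Function.Surjective ε → Function.Surjective ε' := fun ε ε' hε hε' s =>
    (LinearMap.injective_iff_surjective_of_finrank_eq_finrank (f := (ε' : L →ₗ[ℂ] g))
      (LinearEquiv.ofBijective (ε : L →ₗ[ℂ] g) ⟨hε, s⟩).finrank_eq).mp hε'
  rcases key ε hε with s | T
  · exact surj s (transfer ε ε' hε hε' s)
  rcases key ε' hε' with s | T'
  · exact surj (transfer ε' ε hε' hε s) s
  have hn1 : ∀ ε : L →ₗ⁅ℂ⁆ g, Function.Injective ε → ∀ i, ε (h i) ≠ 0 :=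
    fun ε hε i h0 => hn i (hε (by rw [h0, map_zero]))
  have hB : ∀ ε : L →ₗ⁅ℂ⁆ g, Function.Injective ε →
      ∀ x ∈ perp ε, (∀ y ∈ perp ε, killingForm ℂ g x y = 0) → x = 0 :=
    fun ε hε => perp_nondeg ε (hbij ε hε)
  obtain ⟨t, hE, hF, ht⟩ := T.isometry T' (C.map ε) (C.map ε') (hn1 ε hε) (hn1 ε' hε')
    (hB ε hε) (hB ε' hε')
  have hW : ∀ ε : L →ₗ⁅ℂ⁆ g, Function.Injective ε →
      Std (fun i => ε (h i)) (fun i => ε (e i)) (fun i => ε (f i)) (perp ε) →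
      ∀ x y : perp ε, ∃ u, ⁅(x : g), (y : g)⁆ = ε u := by
    intro ε hε T x y
    obtain ⟨⟨u, w⟩, hu⟩ := (hbij ε hε).2 ⁅(x : g), (y : g)⁆
    have hu1 : ε u + w = ⁅(x : g), (y : g)⁆ := hu
    -- as `⁅x, y⁆` is orthogonal to the complement, its component `w` there vanishes
    refine ⟨u, ?_⟩
    have hw : (w : g) = 0 := by
      refine hB ε hε w w.2 fun z hz => ?_
      have h1 := T.omega (C.map ε) (hn1 ε hε) (hB ε hε) x.2 y.2 hz
      rw [← hu1, map_add, LinearMap.add_apply, hz u, zero_add] at h1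
      exact h1
    rw [← hu1, hw, add_zero]
  exact glue ε ε' (hbij ε hε) (hbij ε' hε') (killing_map_nondeg ε' C hε' (hn 0)) G t hE hF ht
    (hW ε hε T) (hW ε' hε' T')

end Main

end F4E6

open F4E6 in
/-- Any two injective Lie algebra homomorphisms from LieAlgebra.f₄ ℂ to LieAlgebra.e₆ ℂ are
conjugate by a Lie algebra automorphism of the codomain. -/
theorem stmt_17 (ε ε' : LieAlgebra.f₄ ℂ →ₗ⁅ℂ⁆ LieAlgebra.e₆ ℂ)
    (hε : Function.Injective ε) (hε' : Function.Injective ε') :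
    ∃ φ : LieAlgebra.e₆ ℂ ≃ₗ⁅ℂ⁆ LieAlgebra.e₆ ℂ, ∀ x : LieAlgebra.f₄ ℂ, ε' x = φ (ε x) := by
  rcases subsingleton_or_nontrivial (LieAlgebra.f₄ ℂ) with h | h
  · exact ⟨LieEquiv.refl, fun x => by rw [Subsingleton.elim x 0, map_zero, map_zero, map_zero]⟩
  have : Nontrivial (LieAlgebra.e₆ ℂ) := hε.nontrivial
  have : FiniteDimensional ℂ (LieAlgebra.f₄ ℂ) :=
    FiniteDimensional.of_injective (ε : LieAlgebra.f₄ ℂ →ₗ[ℂ] LieAlgebra.e₆ ℂ) hε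
  have C := serre_isChev CartanMatrix.F₄
  have G := serre_generates CartanMatrix.F₄
  have hn := h_ne_zero C G F4_finType
  have : LieAlgebra.IsSimple ℂ (LieAlgebra.f₄ ℂ) := isSimple C G F4_finType hn
  have C' := serre_isChev CartanMatrix.E₆
  have G' := serre_generates CartanMatrix.E₆
  have : LieAlgebra.IsSimple ℂ (LieAlgebra.e₆ ℂ) :=
    isSimple C' G' E6_finType (h_ne_zero C' G' E6_finType)
  exact conjugate (F4_finrank C hn) e6_finrank C G hn ε ε' hε hε'
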